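/- Fix ε > 0 and a real number α ∉ {0, 1, 2, 3}. For integers m, h₁, h₂ set t(m, h₁, h₂) := ((m + h₁ + h₂)^α − (m + h₂)^α) − ((m + h₁)^α − m^α). Let M, H₁, H₂ be integers ≥ 10 with H₁ M^ε < H₂ ≤ M^{1−ε} and H₁ H₂ ≤ M^{3/2 − ε}, let Δ > 0, and set T := M^{α−2} H₁ H₂. Let 𝓕(M, H₁, H₂, Δ) be the number of sextuples (m, m̃, h₁, h̃₁, h₂, h̃₂) of integers with M ≤ m, m̃ < 2M, H₁ ≤ h₁, h̃₁ < 2H₁, H₂ ≤ h₂, h̃₂ < 2H₂, satisfying |t(m, h₁, h₂) − t(m̃, h̃₁, h̃₂)| ≤ Δ T. Then 𝓕(M, H₁, H₂, Δ) ≪ M^{2ε} ( M H₁ H₂ + Δ (M H₁ H₂)² + (M H₁⁷ H₂⁹)^{1/4} + M^{−2} H₁⁴ H₂⁴ + (Δ M⁴ H₁^{15} H₂^{17})^{1/8} + (Δ M⁴ H₁³ H₂)^{1/2} + (H₁^{13} H₂^{15})^{1/6} + (Δ M² H₁⁸ H₂^{10})^{1/4} + (M^{−1} H₁⁵ H₂⁶)^{1/2}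 ), where the implied constant depends on ε and α. -/

import Mathlib

/-!
Write `R = H₁H₂`, `T = M^{α-2}R` and `γ = 1/(α-2)`, and call `q = ((h₁, h̃₁), (h₂, h̃₂))` a
quadruple.

**Linearisation.** Expanding about the midpoint `n = m + (h₁ + h₂)/2` gives
`t = α(α-1) h₁h₂ n^{α-2} (W(S) + O(R²/M⁴))` with `S = (h₁² + h₂²)/n²`, `W(0) = 1` and `W'(0) ≠ 0`;
this is where `α ∉ {0, 1, 2, 3}` is needed (`cz_T_expansion`). Taking `γ`-th powers and solving
for `m`, the inequality `|t - t̃| ≤ (K/M²) T` says that, for a fixed quadruple, the lattice point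
`(m̃, m)` is within `O(K/M)` of a curve `m = φ(m̃)` of slope close to
`ω = (h̃₁h̃₂/(h₁h₂))^γ` and curvature `≍ |κ|/M³`, where
`κ = (h̃₁² + h̃₂²) - (h₁² + h₂²)/ω²` (`cz_curve`).

**Parameters.** `K = M/R + (MH₂/H₁)^{1/4} + (H₁H₂³)^{1/6} + R²/M²`, so that `R²K` is the sum of
four terms of the bound (`cz_terms`), and `ν = min(1, K³/H₂²)`. A pigeonhole argument
(`cz_bins`) lowers the tolerance from `ΔT` to `(K/M²)T` at the cost of a factor `≪ 1 + ΔM²/K`, and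
imposes `|S - S̃| ≤ ν(H₂/M)²` at the cost of a factor `≪ 1/ν`. The latter restriction forces
`|κ| ≪ νH₂²`, and it remains to see that at most `O(M^η R² νK)` sextuples satisfy both
restrictions (`cz_pairs`).

**One quadruple.** Divide `[M, 2M]` into `O(K)` intervals of length `≍ M/K`. On each of them the
lattice points near the curve are collinear, since the determinant of any three of them is an
integer of absolute value less than `1`. If there are at least two, they lie on a segment of slope
`a/b` in lowest terms and number at most `2G`, with `Gb ≤ M/K` and
`|a/b - ω| ≪ |κ|/M² + K/(M·Gb)`. Since the slope of the curve is strictly monotone, at most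
`O(1 + MK²/(s|κ|))` intervals share the same `a/b` with `Gb ≥ s` (`cz_geom`, `cz_quad`).

**All quadruples.** Intervals with at most one point contribute `O(K)` for each quadruple with
`|κ| ≪ νH₂²`. For the others `∑ G` is split into dyadic classes according to `b`, `Gb` and `|κ|`.
The size of a class is controlled by spacing estimates of Fouvry–Iwaniec type for powers of
fractions: `cz_FI_one` counts the quadruples with small `κ`, because `h₁, h̃₁` are negligible
against `h₂, h̃₂` in the definition of `κ` and the condition becomes
`(h̃₁/h₁)^{1/(α-1)} ≈ h₂/h̃₂`; `cz_FI_two` counts the pairs `(q, a/b)` with `a/b ≈ ω`. The real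
inequality `cz_class_ineq` combines these counts, and `cz_sum` adds up the classes.

For large `M` the parameters are admissible because `K ≤ 4M^{1-δ}` with `δ = min(ε, 1/3)`; for
bounded `M` the trivial bound `(MR)²` is enough.
-/

open Filter

/-- The third difference `t(m, h₁, h₂) = ((m+h₁+h₂)^α − (m+h₂)^α) − ((m+h₁)^α − m^α)`. -/
noncomputable def tCZ (α : ℝ) (m h₁ h₂ : ℕ) : ℝ :=
  (((m + h₁ + h₂ : ℕ) : ℝ) ^ α - ((m + h₂ : ℕ) : ℝ) ^ α)
    - (((m + h₁ : ℕ) : ℝ) ^ α - (m : ℝ) ^ α)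

/-- The number of sextuples `(m, m̃, h₁, h̃₁, h₂, h̃₂)` with `M ≤ m, m̃ < 2M`,
`H₁ ≤ h₁, h̃₁ < 2H₁`, `H₂ ≤ h₂, h̃₂ < 2H₂` and
`|t(m, h₁, h₂) − t(m̃, h̃₁, h̃₂)| ≤ Δ·M^{α−2}H₁H₂`. -/
noncomputable def sextCount (α : ℝ) (M H₁ H₂ : ℕ) (Δ : ℝ) : ℕ :=
  (((Finset.Ico M (2 * M) ×ˢ Finset.Ico M (2 * M))
      ×ˢ (Finset.Ico H₁ (2 * H₁) ×ˢ Finset.Ico H₁ (2 * H₁))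
      ×ˢ (Finset.Ico H₂ (2 * H₂) ×ˢ Finset.Ico H₂ (2 * H₂))).filter
    (fun q : (ℕ × ℕ) × (ℕ × ℕ) × (ℕ × ℕ) =>
      |tCZ α q.1.1 q.2.1.1 q.2.2.1 - tCZ α q.1.2 q.2.1.2 q.2.2.2|
        ≤ Δ * ((M : ℝ) ^ (α - 2) * H₁ * H₂))).card

/-! ### Spacing of powers of fractions -/

theorem cz_card_le_of_spaced {ι : Type*} (s : Finset ι) (f : ι → ℝ) {d a b : ℝ} (hd : 0 < d)
    (hab : a ≤ b) (hf : ∀ x ∈ s, a ≤ f x ∧ f x ≤ b)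
    (hsp : ∀ x ∈ s, ∀ y ∈ s, x ≠ y → d ≤ |f x - f y|) :
    (s.card : ℝ) ≤ (b - a) / d + 1 := by
  have h1 : s.card ≤ (Finset.range (⌊(b - a) / d⌋₊ + 1)).card := by
    apply Finset.card_le_card_of_injOn (fun x => ⌊(f x - a) / d⌋₊)
    · intro x hx
      have hx' := hf x hx
      simp only [Finset.coe_range, Set.mem_Iio, Nat.lt_succ_iff]
      apply Nat.floor_le_floor
      gcongr
      exact hx'.2
    · intro x hx y hy hxy
      by_contra hne
      have h := hsp x hx y hy hne
      simp only at hxy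
      have e1 : 0 ≤ (f x - a) / d := div_nonneg (by linarith [(hf x hx).1]) hd.le
      have e2 : 0 ≤ (f y - a) / d := div_nonneg (by linarith [(hf y hy).1]) hd.le
      have a1 := Nat.floor_le e1
      have a2 := Nat.lt_floor_add_one ((f x - a) / d)
      have b1 := Nat.floor_le e2
      have b2 := Nat.lt_floor_add_one ((f y - a) / d)
      rw [hxy] at a1 a2
      have : |(f x - a) / d - (f y - a) / d| < 1 := by
        rw [abs_lt]; constructor <;> linarith
      have h3 : (f x - a) / d - (f y - a) / d = (f x - f y) / d := by ring
      rw [h3, abs_div, abs_of_pos hd, div_lt_one hd] at this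
      linarith
  rw [Finset.card_range] at h1
  have h2 : (s.card : ℝ) ≤ (⌊(b - a) / d⌋₊ : ℝ) + 1 := by exact_mod_cast h1
  have h3 := Nat.floor_le (div_nonneg (by linarith : 0 ≤ b - a) hd.le)
  linarith

theorem cz_rpow_lip (θ : ℝ) {lo hi : ℝ} (hlo : 0 < lo) :
    ∃ C : ℝ, 0 < C ∧ ∀ u v : ℝ, lo ≤ u → u ≤ hi → lo ≤ v → v ≤ hi →
      |u ^ θ - v ^ θ| ≤ C * |u - v| := by
  have hcont : ContinuousOn (fun x : ℝ => |θ * x ^ (θ - 1)|) (Set.Icc lo hi) := by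
    apply ContinuousOn.abs
    apply ContinuousOn.mul continuousOn_const
    intro x hx
    exact (Real.continuousAt_rpow_const x _ (Or.inl (by linarith [hx.1]))).continuousWithinAt
  obtain ⟨C, hC⟩ := (isCompact_Icc.image_of_continuousOn hcont).bddAbove
  refine ⟨max C 1, by positivity, ?_⟩
  intro u v hu1 hu2 hv1 hv2
  have := (convex_Icc lo hi).norm_image_sub_le_of_norm_hasDerivWithin_le
    (f := fun x : ℝ => x ^ θ) (f' := fun x : ℝ => θ * x ^ (θ - 1)) (C := max C 1)
    (fun x hx => (Real.hasDerivAt_rpow_const (Or.inl (by linarith [hx.1]))).hasDerivWithinAt)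
    (fun x hx => le_trans (hC ⟨x, hx, rfl⟩) (le_max_left _ _)) ⟨hv1, hv2⟩ ⟨hu1, hu2⟩
  simpa [Real.norm_eq_abs] using this

/-- With `cz_rpow_lip`: nonconstant powers are bi-Lipschitz on compact subintervals of `(0, ∞)`, so a
spacing of fractions passes to a spacing of their powers. -/
theorem cz_rpow_lip_lower {θ : ℝ} (hθ : θ ≠ 0) {lo hi : ℝ} (hlo : 0 < lo) (hlh : lo ≤ hi) :
    ∃ c : ℝ, 0 < c ∧ ∀ u v : ℝ, lo ≤ u → u ≤ hi → lo ≤ v → v ≤ hi →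
      c * |u - v| ≤ |u ^ θ - v ^ θ| := by
  have h1 : 0 < min (lo ^ θ) (hi ^ θ) := lt_min (by positivity) (Real.rpow_pos_of_pos (by linarith) _)
  obtain ⟨C, hC, h⟩ := cz_rpow_lip θ⁻¹ (lo := min (lo ^ θ) (hi ^ θ)) (hi := max (lo ^ θ) (hi ^ θ)) h1
  have key : ∀ u : ℝ, lo ≤ u → u ≤ hi → min (lo ^ θ) (hi ^ θ) ≤ u ^ θ ∧
      u ^ θ ≤ max (lo ^ θ) (hi ^ θ) := by
    intro u h1 h2
    have hu : 0 < u := by linarith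
    rcases lt_or_gt_of_ne hθ with h | h
    · exact ⟨min_le_of_right_le (Real.rpow_le_rpow_of_nonpos hu h2 h.le),
        le_max_of_le_left (Real.rpow_le_rpow_of_nonpos hlo h1 h.le)⟩
    · exact ⟨min_le_of_left_le (Real.rpow_le_rpow hlo.le h1 h.le),
        le_max_of_le_right (Real.rpow_le_rpow hu.le h2 h.le)⟩
  refine ⟨C⁻¹, by positivity, ?_⟩
  intro u v hu1 hu2 hv1 hv2
  have := h (u ^ θ) (v ^ θ) (key u hu1 hu2).1 (key u hu1 hu2).2 (key v hv1 hv2).1 (key v hv1 hv2).2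
  rw [← Real.rpow_mul (by linarith), ← Real.rpow_mul (by linarith), mul_inv_cancel₀ hθ,
    Real.rpow_one, Real.rpow_one] at this
  rw [inv_mul_le_iff₀ hC]; exact this

theorem cz_frac_spaced {p q : ℕ × ℕ} {Z : ℝ} (hp : 1 ≤ p.2) (hq : 1 ≤ q.2)
    (hpZ : (p.2 : ℝ) ≤ Z) (hqZ : (q.2 : ℝ) ≤ Z)
    (cp : Nat.Coprime p.1 p.2) (cq : Nat.Coprime q.1 q.2) (hne : p ≠ q) :
    1 / Z ^ 2 ≤ |(p.1 : ℝ) / p.2 - (q.1 : ℝ) / q.2| := by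
  have hp' : (0 : ℝ) < p.2 := by exact_mod_cast hp
  have hq' : (0 : ℝ) < q.2 := by exact_mod_cast hq
  have hZ : 0 < Z := by linarith
  rw [div_sub_div _ _ hp'.ne' hq'.ne', abs_div, abs_of_pos (mul_pos hp' hq')]
  have h1 : (1 : ℝ) ≤ |(p.1 : ℝ) * q.2 - p.2 * q.1| := by
    have : (p.1 : ℤ) * q.2 - p.2 * q.1 ≠ 0 := by
      intro h
      have h2 : p.1 * q.2 = q.1 * p.2 := by zify; linarith
      have h3 : p.2 = q.2 := by
        apply Nat.dvd_antisymm
        · apply cp.symm.dvd_of_dvd_mul_left; rw [h2]; exact Dvd.intro_left _ rfl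
        · apply cq.symm.dvd_of_dvd_mul_left; rw [← h2]; exact Dvd.intro_left _ rfl
      rw [h3] at h2
      exact hne (Prod.ext (Nat.eq_of_mul_eq_mul_right (by omega) h2) h3)
    have := Int.one_le_abs this
    exact_mod_cast this
  apply div_le_div₀ (by positivity) h1 (by positivity)
  nlinarith

/-- Counting a finite set by the fibres of a map. -/
theorem cz_card_le_mul_fiber {α β : Type*} [DecidableEq β] (S : Finset α) (f : α → β) (T : Finset β)
    (hf : ∀ x ∈ S, f x ∈ T) (n : ℝ)
    (hn : ∀ b ∈ T, ((S.filter (fun x => f x = b)).card : ℝ) ≤ n) :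
    (S.card : ℝ) ≤ T.card * n := by
  have := Finset.card_eq_sum_card_fiberwise (f := f) (s := S) (t := T) hf
  rw [this]; push_cast
  calc _ ≤ ∑ b ∈ T, n := Finset.sum_le_sum hn
    _ = _ := by simp

/-- The spacing estimate for coprime pairs. Fixing one of the two fractions, the other, or its power,
lies in an interval of length `2τ` and is spaced. The two ways of fixing give
`Y²(1 + τZ²)` and `Z²(1 + τY²)`, and the smaller is at most of the order of `ZY + τZ²Y²`. -/
theorem cz_FI_core {θ : ℝ} (hθ : θ ≠ 0) : ∃ C : ℝ, 0 < C ∧ ∀ Z Y τ : ℝ, 1 ≤ Z → 1 ≤ Y → 0 ≤ τ →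
    ∀ S : Finset ((ℕ × ℕ) × (ℕ × ℕ)),
    (∀ s ∈ S, (1 ≤ s.1.1 ∧ (s.1.1 : ℝ) ≤ Z) ∧ (1 ≤ s.1.2 ∧ (s.1.2 : ℝ) ≤ Z) ∧
      (1 ≤ s.2.1 ∧ (s.2.1 : ℝ) ≤ Y) ∧ (1 ≤ s.2.2 ∧ (s.2.2 : ℝ) ≤ Y) ∧
      s.1.1 ≤ 4 * s.1.2 ∧ s.1.2 ≤ 4 * s.1.1 ∧ Nat.Coprime s.1.1 s.1.2 ∧ Nat.Coprime s.2.1 s.2.2 ∧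
      |((s.1.1 : ℝ) / s.1.2) ^ θ - (s.2.1 : ℝ) / s.2.2| ≤ τ) →
    (S.card : ℝ) ≤ C * (Z * Y + τ * (Z ^ 2 * Y ^ 2)) := by
  obtain ⟨c, hc, hlip⟩ := cz_rpow_lip_lower hθ (lo := 1 / 4) (hi := 4) (by norm_num) (by norm_num)
  refine ⟨1 + 2 / c + 2, by positivity, ?_⟩
  intro Z Y τ hZ hY hτ S hS
  have cardbox : ∀ (W : ℝ), 1 ≤ W → ((Finset.Icc 1 ⌊W⌋₊ ×ˢ Finset.Icc 1 ⌊W⌋₊).card : ℝ) ≤ W ^ 2 := by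
    intro W hW
    rw [Finset.card_product, Nat.card_Icc]
    simp only [Nat.add_sub_cancel, Nat.cast_mul]
    have := Nat.floor_le (by linarith : 0 ≤ W)
    have h0 : (0 : ℝ) ≤ ⌊W⌋₊ := by positivity
    nlinarith
  -- For a fixed second pair, the powers of the first fractions are spaced by `≫ 1/Z²` in an
  -- interval of length `2τ`.
  have hA : (S.card : ℝ) ≤ Y ^ 2 * (2 / c * (τ * Z ^ 2) + 1) := by
    have h1 := cz_card_le_mul_fiber S (fun s => s.2) (Finset.Icc 1 ⌊Y⌋₊ ×ˢ Finset.Icc 1 ⌊Y⌋₊)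
      (by
        intro s hs
        have := hS s hs
        simp only [Finset.mem_product, Finset.mem_Icc]
        refine ⟨⟨this.2.2.1.1, Nat.le_floor this.2.2.1.2⟩, this.2.2.2.1.1, Nat.le_floor this.2.2.2.1.2⟩)
      (2 / c * (τ * Z ^ 2) + 1) (by
        intro b _
        have := cz_card_le_of_spaced (S.filter (fun x => x.2 = b))
          (fun s => ((s.1.1 : ℝ) / s.1.2) ^ θ) (d := c / Z ^ 2) (a := (b.1 : ℝ) / b.2 - τ)
          (b := (b.1 : ℝ) / b.2 + τ) (by positivity) (by linarith)
          (by
            intro x hx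
            rw [Finset.mem_filter] at hx
            have h := (hS x hx.1).2.2.2.2.2.2.2.2
            rw [hx.2, abs_le] at h
            constructor <;> linarith)
          (by
            intro x hx y hy hxy
            rw [Finset.mem_filter] at hx hy
            obtain ⟨x1, x2, -, -, x3, x4, x5, -⟩ := hS x hx.1
            obtain ⟨y1, y2, -, -, y3, y4, y5, -⟩ := hS y hy.1
            have hne : x.1 ≠ y.1 := fun h => hxy (Prod.ext h (by rw [hx.2, hy.2]))
            have hsp := cz_frac_spaced x2.1 y2.1 x2.2 y2.2 x5 y5 hne
            have hx2 : (0 : ℝ) < x.1.2 := by exact_mod_cast x2.1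
            have hy2 : (0 : ℝ) < y.1.2 := by exact_mod_cast y2.1
            have hx3 : (x.1.1 : ℝ) ≤ 4 * x.1.2 := by exact_mod_cast x3
            have hx4 : (x.1.2 : ℝ) ≤ 4 * x.1.1 := by exact_mod_cast x4
            have hy3 : (y.1.1 : ℝ) ≤ 4 * y.1.2 := by exact_mod_cast y3
            have hy4 : (y.1.2 : ℝ) ≤ 4 * y.1.1 := by exact_mod_cast y4
            have := hlip ((x.1.1 : ℝ) / x.1.2) ((y.1.1 : ℝ) / y.1.2)
              (by rw [le_div_iff₀ hx2]; linarith) (by rw [div_le_iff₀ hx2]; linarith)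
              (by rw [le_div_iff₀ hy2]; linarith) (by rw [div_le_iff₀ hy2]; linarith)
            refine le_trans ?_ this
            rw [div_eq_mul_one_div]; gcongr)
        refine this.trans (le_of_eq ?_)
        field_simp
        ring)
    refine h1.trans ?_
    gcongr
    exact cardbox Y hY
  -- The roles of the two fractions exchanged.
  have hB : (S.card : ℝ) ≤ Z ^ 2 * (2 * (τ * Y ^ 2) + 1) := by
    have h1 := cz_card_le_mul_fiber S (fun s => s.1) (Finset.Icc 1 ⌊Z⌋₊ ×ˢ Finset.Icc 1 ⌊Z⌋₊)
      (by
        intro s hs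
        have := hS s hs
        simp only [Finset.mem_product, Finset.mem_Icc]
        refine ⟨⟨this.1.1, Nat.le_floor this.1.2⟩, this.2.1.1, Nat.le_floor this.2.1.2⟩)
      (2 * (τ * Y ^ 2) + 1) (by
        intro b _
        have := cz_card_le_of_spaced (S.filter (fun x => x.1 = b))
          (fun s => ((s.2.1 : ℝ) / s.2.2)) (d := 1 / Y ^ 2) (a := ((b.1 : ℝ) / b.2) ^ θ - τ)
          (b := ((b.1 : ℝ) / b.2) ^ θ + τ) (by positivity) (by linarith)
          (by
            intro x hx
            rw [Finset.mem_filter] at hx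
            have h := (hS x hx.1).2.2.2.2.2.2.2.2
            rw [hx.2, abs_le] at h
            constructor <;> linarith)
          (by
            intro x hx y hy hxy
            rw [Finset.mem_filter] at hx hy
            obtain ⟨-, -, x1, x2, -, -, -, x5, -⟩ := hS x hx.1
            obtain ⟨-, -, y1, y2, -, -, -, y5, -⟩ := hS y hy.1
            have hne : x.2 ≠ y.2 := fun h => hxy (Prod.ext (by rw [hx.2, hy.2]) h)
            exact cz_frac_spaced x2.1 y2.1 x2.2 y2.2 x5 y5 hne)
        refine this.trans (le_of_eq ?_)
        field_simp
        ring)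
    refine h1.trans ?_
    gcongr
    exact cardbox Z hZ
  have hcp : 0 < 2 / c := by positivity
  have e1 : 0 ≤ τ * (Z ^ 2 * Y ^ 2) := by positivity
  have e2 : 0 ≤ Z * Y := by positivity
  have e3 : 0 ≤ 2 / c * (Z * Y) := by positivity
  have e4 : 0 ≤ 2 / c * (τ * (Z ^ 2 * Y ^ 2)) := by positivity
  rcases le_total Z Y with h | h
  · have : Z ^ 2 ≤ Z * Y := by nlinarith
    nlinarith
  · have : Y ^ 2 ≤ Z * Y := by nlinarith
    nlinarith

theorem cz_sum_inv_le {X : ℝ} (hX : 1 ≤ X) :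
    ∑ k ∈ Finset.Icc 1 ⌊X⌋₊, (1 / (k : ℝ)) ≤ 1 + Real.log X := by
  have := harmonic_floor_le_one_add_log X hX
  rw [harmonic_eq_sum_Icc] at this
  push_cast at this
  simpa using this

/-- The spacing estimate of Fouvry–Iwaniec type. Removing the common factors `k` and `g` of the two
pairs leaves both fractions unchanged and shrinks the ranges to `X/k` and `Y/g`; summing the
coprime estimate over `k` and `g` produces the logarithms. -/
theorem cz_FI {θ : ℝ} (hθ : θ ≠ 0) : ∃ C : ℝ, 0 < C ∧ ∀ X Y τ : ℝ, 1 ≤ X → 1 ≤ Y → 0 ≤ τ →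
    ∀ S : Finset ((ℕ × ℕ) × (ℕ × ℕ)),
    (∀ s ∈ S, (1 ≤ s.1.1 ∧ (s.1.1 : ℝ) ≤ X) ∧ (1 ≤ s.1.2 ∧ (s.1.2 : ℝ) ≤ X) ∧
      (1 ≤ s.2.1 ∧ (s.2.1 : ℝ) ≤ Y) ∧ (1 ≤ s.2.2 ∧ (s.2.2 : ℝ) ≤ Y) ∧
      s.1.1 ≤ 4 * s.1.2 ∧ s.1.2 ≤ 4 * s.1.1 ∧
      |((s.1.1 : ℝ) / s.1.2) ^ θ - (s.2.1 : ℝ) / s.2.2| ≤ τ) →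
    (S.card : ℝ) ≤ C * ((1 + Real.log X) * (1 + Real.log Y)) * (X * Y + τ * (X ^ 2 * Y ^ 2)) := by
  obtain ⟨C, hC, hcore⟩ := cz_FI_core hθ
  refine ⟨C, hC, ?_⟩
  intro X Y τ hX hY hτ S hS
  have hcard := Finset.card_eq_sum_card_fiberwise (s := S)
    (f := fun s => (Nat.gcd s.1.1 s.1.2, Nat.gcd s.2.1 s.2.2))
    (t := Finset.Icc 1 ⌊X⌋₊ ×ˢ Finset.Icc 1 ⌊Y⌋₊)
    (by
      intro s hs
      obtain ⟨a1, a2, a3, a4, -⟩ := hS s hs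
      simp only [Finset.coe_product, Set.mem_prod, Finset.coe_Icc, Set.mem_Icc]
      refine ⟨⟨Nat.gcd_pos_of_pos_left _ a1.1, (Nat.gcd_le_left _ a1.1).trans (Nat.le_floor a1.2)⟩,
        Nat.gcd_pos_of_pos_left _ a3.1, (Nat.gcd_le_left _ a3.1).trans (Nat.le_floor a3.2)⟩)
  have hfib : ∀ b ∈ Finset.Icc 1 ⌊X⌋₊ ×ˢ Finset.Icc 1 ⌊Y⌋₊,
      (((S.filter (fun s => (Nat.gcd s.1.1 s.1.2, Nat.gcd s.2.1 s.2.2) = b)).card : ℕ) : ℝ) ≤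
        C * (X * Y + τ * (X ^ 2 * Y ^ 2)) * ((1 / (b.1 : ℝ)) * (1 / (b.2 : ℝ))) := by
    rintro ⟨k, g⟩ hb
    simp only [Finset.mem_product, Finset.mem_Icc] at hb
    obtain ⟨⟨hk1, hkX⟩, hg1, hgY⟩ := hb
    have hk0 : (0 : ℝ) < k := by exact_mod_cast hk1
    have hg0 : (0 : ℝ) < g := by exact_mod_cast hg1
    have hk1' : (1 : ℝ) ≤ k := by exact_mod_cast hk1
    have hg1' : (1 : ℝ) ≤ g := by exact_mod_cast hg1
    have hkX' : (k : ℝ) ≤ X := (Nat.le_floor_iff (by linarith)).1 hkX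
    have hgY' : (g : ℝ) ≤ Y := (Nat.le_floor_iff (by linarith)).1 hgY
    set φ : (ℕ × ℕ) × (ℕ × ℕ) → (ℕ × ℕ) × (ℕ × ℕ) :=
      fun s => ((s.1.1 / k, s.1.2 / k), (s.2.1 / g, s.2.2 / g)) with hφ
    set F := S.filter (fun s => (Nat.gcd s.1.1 s.1.2, Nat.gcd s.2.1 s.2.2) = (k, g)) with hF
    have hdiv : ∀ s ∈ F, k ∣ s.1.1 ∧ k ∣ s.1.2 ∧ g ∣ s.2.1 ∧ g ∣ s.2.2 := by
      intro s hs
      rw [hF, Finset.mem_filter, Prod.mk.injEq] at hs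
      obtain ⟨-, h1, h2⟩ := hs
      exact ⟨h1 ▸ Nat.gcd_dvd_left _ _, h1 ▸ Nat.gcd_dvd_right _ _, h2 ▸ Nat.gcd_dvd_left _ _,
        h2 ▸ Nat.gcd_dvd_right _ _⟩
    have hinj : Set.InjOn φ F := by
      rintro ⟨⟨x1, x2⟩, ⟨x3, x4⟩⟩ hx ⟨⟨y1, y2⟩, ⟨y3, y4⟩⟩ hy hxy
      have dx := hdiv _ hx
      have dy := hdiv _ hy
      simp only [hφ, Prod.mk.injEq] at hxy dx dy ⊢
      obtain ⟨⟨e1, e2⟩, e3, e4⟩ := hxy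
      refine ⟨⟨?_, ?_⟩, ?_, ?_⟩
      · rw [← Nat.div_mul_cancel dx.1, e1, Nat.div_mul_cancel dy.1]
      · rw [← Nat.div_mul_cancel dx.2.1, e2, Nat.div_mul_cancel dy.2.1]
      · rw [← Nat.div_mul_cancel dx.2.2.1, e3, Nat.div_mul_cancel dy.2.2.1]
      · rw [← Nat.div_mul_cancel dx.2.2.2, e4, Nat.div_mul_cancel dy.2.2.2]
    have hXk : 1 ≤ X / k := by rw [le_div_iff₀ hk0]; linarith
    have hYg : 1 ≤ Y / g := by rw [le_div_iff₀ hg0]; linarith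
    have := hcore (X / k) (Y / g) τ hXk hYg hτ (F.image φ) (by
      intro s' hs'
      obtain ⟨s, hs, rfl⟩ := Finset.mem_image.1 hs'
      obtain ⟨d1, d2, d3, d4⟩ := hdiv s hs
      have hsF := hs
      rw [hF, Finset.mem_filter, Prod.mk.injEq] at hs
      obtain ⟨hsS, hk, hg⟩ := hs
      obtain ⟨a1, a2, a3, a4, a5, a6, a7⟩ := hS s hsS
      have key : ∀ (n m : ℕ) (W : ℝ), 1 ≤ m → m ∣ n → 1 ≤ n → (n : ℝ) ≤ W →
          1 ≤ n / m ∧ ((n / m : ℕ) : ℝ) ≤ W / m := by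
        intro n m W hm hd hn hW
        refine ⟨(Nat.one_le_div_iff (by omega)).2 (Nat.le_of_dvd (by omega) hd), ?_⟩
        rw [Nat.cast_div hd (by positivity)]
        gcongr
      simp only [hφ]
      refine ⟨key _ _ _ hk1 d1 a1.1 a1.2, key _ _ _ hk1 d2 a2.1 a2.2, key _ _ _ hg1 d3 a3.1 a3.2,
        key _ _ _ hg1 d4 a4.1 a4.2, ?_, ?_, ?_, ?_, ?_⟩
      · obtain ⟨u, hu⟩ := d1
        obtain ⟨v, hv⟩ := d2
        rw [hu, hv, Nat.mul_div_cancel_left _ hk1, Nat.mul_div_cancel_left _ hk1]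
        rw [hu, hv] at a5
        exact Nat.le_of_mul_le_mul_left (by linarith) hk1
      · obtain ⟨u, hu⟩ := d1
        obtain ⟨v, hv⟩ := d2
        rw [hu, hv, Nat.mul_div_cancel_left _ hk1, Nat.mul_div_cancel_left _ hk1]
        rw [hu, hv] at a6
        exact Nat.le_of_mul_le_mul_left (by linarith) hk1
      · have := Nat.coprime_div_gcd_div_gcd (m := s.1.1) (n := s.1.2) (by rw [hk]; exact hk1)
        rwa [hk] at this
      · have := Nat.coprime_div_gcd_div_gcd (m := s.2.1) (n := s.2.2) (by rw [hg]; exact hg1)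
        rwa [hg] at this
      · rw [Nat.cast_div d1 hk0.ne', Nat.cast_div d2 hk0.ne', Nat.cast_div d3 hg0.ne',
          Nat.cast_div d4 hg0.ne', div_div_div_cancel_right₀ hk0.ne', div_div_div_cancel_right₀ hg0.ne']
        exact a7)
    rw [Finset.card_image_of_injOn hinj] at this
    refine this.trans ?_
    rw [mul_assoc]
    gcongr
    have e1 : 1 / (k : ℝ) ≤ 1 := by rw [div_le_one hk0]; exact hk1'
    have e2 : 1 / (g : ℝ) ≤ 1 := by rw [div_le_one hg0]; exact hg1'
    have e1' : 0 < 1 / (k : ℝ) := by positivity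
    have e2' : 0 < 1 / (g : ℝ) := by positivity
    have e3 : (1 / (k : ℝ)) * (1 / (g : ℝ)) ≤ 1 := by nlinarith
    have e4 : 0 ≤ τ * (X ^ 2 * Y ^ 2) := by positivity
    have e5 : (X / k) ^ 2 * (Y / g) ^ 2 = X ^ 2 * Y ^ 2 * ((1 / (k : ℝ)) * (1 / (g : ℝ))) ^ 2 := by
      ring
    have e6 : X / k * (Y / g) = X * Y * ((1 / (k : ℝ)) * (1 / (g : ℝ))) := by ring
    rw [e5, e6]
    set u := (1 / (k : ℝ)) * (1 / (g : ℝ)) with hu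
    have hu0 : 0 < u := by positivity
    have : u ^ 2 ≤ u := by nlinarith
    nlinarith
  rw [hcard]
  push_cast
  refine (Finset.sum_le_sum hfib).trans ?_
  rw [← Finset.mul_sum, Finset.sum_product]
  simp only [← Finset.mul_sum, ← Finset.sum_mul]
  have s1 := cz_sum_inv_le hX
  have s2 := cz_sum_inv_le hY
  have p1 : 0 ≤ ∑ k ∈ Finset.Icc 1 ⌊X⌋₊, (1 / (k : ℝ)) := Finset.sum_nonneg (fun _ _ => by positivity)
  have p2 : 0 ≤ ∑ k ∈ Finset.Icc 1 ⌊Y⌋₊, (1 / (k : ℝ)) := Finset.sum_nonneg (fun _ _ => by positivity)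
  have h := mul_le_mul s1 s2 p2 (by linarith)
  calc C * (X * Y + τ * (X ^ 2 * Y ^ 2)) * ((∑ k ∈ Finset.Icc 1 ⌊X⌋₊, (1 / (k : ℝ))) *
        ∑ k ∈ Finset.Icc 1 ⌊Y⌋₊, (1 / (k : ℝ)))
      ≤ C * (X * Y + τ * (X ^ 2 * Y ^ 2)) * ((1 + Real.log X) * (1 + Real.log Y)) := by
        gcongr
    _ = _ := by ring

/-! ### The divisor bound -/

/-- Both sides are compared prime by prime: `v + 1 ≤ p^{vη}` as soon as `p ≥ 2^{1/η}`, and each of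
the finitely many smaller primes costs a bounded factor. -/
theorem cz_divisor_bound {η : ℝ} (hη : 0 < η) :
    ∃ C : ℝ, 0 < C ∧ ∀ n : ℕ, n ≠ 0 → (n.divisors.card : ℝ) ≤ C * (n : ℝ) ^ η := by
  have hl2 : 0 < Real.log 2 := Real.log_pos (by norm_num)
  set A : ℝ := max 1 (1 / (η * Real.log 2)) with hA
  have hA1 : 1 ≤ A := le_max_left _ _
  set P : ℕ := ⌈(2 : ℝ) ^ (1 / η)⌉₊ with hP
  refine ⟨A ^ P, by positivity, ?_⟩
  intro n hn
  rw [Nat.card_divisors hn]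
  have hn' : (n : ℝ) ^ η = ∏ p ∈ n.primeFactors, ((p : ℝ) ^ (n.factorization p)) ^ η := by
    conv_lhs => rw [← Nat.prod_factorization_pow_eq_self hn]
    rw [Finsupp.prod, Nat.support_factorization]
    push_cast
    rw [← Real.finsetProd_rpow]
    intro i _
    positivity
  have hterm : ∀ p ∈ n.primeFactors, ((n.factorization p + 1 : ℕ) : ℝ) ≤
      (if p < P then A else 1) * ((p : ℝ) ^ (n.factorization p)) ^ η := by
    intro p hp
    have hp2 : 2 ≤ p := (Nat.prime_of_mem_primeFactors hp).two_le
    have hp2' : (2 : ℝ) ≤ p := by exact_mod_cast hp2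
    set v := n.factorization p
    split_ifs with h
    · have h1 : ((2 : ℝ) ^ v) ^ η ≤ ((p : ℝ) ^ v) ^ η := by gcongr
      have h2 : 1 + η * v * Real.log 2 ≤ ((2 : ℝ) ^ v) ^ η := by
        have e : ((2 : ℝ) ^ v) ^ η = Real.exp (η * v * Real.log 2) := by
          rw [← Real.rpow_natCast, ← Real.rpow_mul (by norm_num), Real.rpow_def_of_pos (by norm_num)]
          ring_nf
        rw [e]
        linarith [Real.add_one_le_exp (η * v * Real.log 2)]
      have h3 : (v : ℝ) ≤ A * (η * v * Real.log 2) := by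
        have : (1 / (η * Real.log 2)) * (η * v * Real.log 2) = v := by field_simp
        rw [← this]
        conv_rhs => rw [this]
        gcongr
        exact le_max_right _ _
      push_cast
      have : A * (1 + η * v * Real.log 2) ≤ A * ((p : ℝ) ^ v) ^ η := by
        gcongr; linarith
      nlinarith
    · have hPp : (2 : ℝ) ^ (1 / η) ≤ p := by
        refine (Nat.le_ceil _).trans ?_
        exact_mod_cast (not_lt.1 h)
      have h1 : (2 : ℝ) ≤ (p : ℝ) ^ η := by
        calc (2 : ℝ) = ((2 : ℝ) ^ (1 / η)) ^ η := by
              rw [← Real.rpow_mul (by norm_num), one_div, inv_mul_cancel₀ hη.ne', Real.rpow_one]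
          _ ≤ _ := by gcongr
      have h2 : ((p : ℝ) ^ v) ^ η = ((p : ℝ) ^ η) ^ v := by
        rw [← Real.rpow_natCast, ← Real.rpow_mul (by positivity), ← Real.rpow_natCast,
          ← Real.rpow_mul (by positivity), mul_comm]
      rw [h2, one_mul]
      have h3 : v + 1 ≤ 2 ^ v := Nat.lt_two_pow_self
      calc ((v + 1 : ℕ) : ℝ) ≤ (2 : ℝ) ^ v := by exact_mod_cast h3
        _ ≤ _ := by gcongr
  push_cast at hterm ⊢
  calc _ ≤ ∏ p ∈ n.primeFactors, (if p < P then A else 1) * ((p : ℝ) ^ (n.factorization p)) ^ η :=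
        Finset.prod_le_prod (fun _ _ => by positivity) hterm
    _ = (∏ p ∈ n.primeFactors, (if p < P then A else 1)) * (n : ℝ) ^ η := by
        rw [Finset.prod_mul_distrib, hn']
    _ ≤ _ := by
        gcongr
        rw [Finset.prod_ite, Finset.prod_const, Finset.prod_const_one, mul_one]
        apply pow_le_pow_right₀ hA1
        calc _ ≤ (Finset.range P).card := Finset.card_le_card (by
                intro x hx; simp only [Finset.mem_filter] at hx; simpa using hx.2)
          _ = P := Finset.card_range P

/-! ### Linearisation of the third difference -/

/-- The even part of the binomial series of `(1 + x)^α`, as an analytic function of `x²`. -/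
theorem cz_even_fun (α : ℝ) : ∃ e : ℝ → ℝ, AnalyticAt ℝ e 0 ∧ deriv e 0 = α * (α - 1) / 2 ∧
    deriv (deriv e) 0 = α * (α - 1) * (α - 2) * (α - 3) / 12 ∧
    ∀ x : ℝ, |x| < 1 → (1 + x) ^ α + (1 - x) ^ α = 2 * e (x ^ 2) := by
  set a : ℕ → ℝ := fun n => Ring.choose α n with ha
  have hsum : ∀ x : ℝ, |x| < 1 → HasSum (fun n => a n * x ^ n) ((1 + x) ^ α) := by
    intro x hx
    have h := (Real.one_add_rpow_hasFPowerSeriesOnBall_zero (a := α)).hasSum (y := x)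
      (by simpa [Metric.mem_eball, edist_zero_right, enorm_eq_nnnorm, ← NNReal.coe_lt_coe] using hx)
    simpa [binomialSeries, FormalMultilinearSeries.ofScalars_apply_eq, ha, smul_eq_mul, mul_comm]
      using h
  set e : ℝ → ℝ := FormalMultilinearSeries.ofScalarsSum (fun k => a (2 * k)) with he
  have hsum2 : ∀ x : ℝ, |x| < 1 → HasSum (fun k => a (2 * k) * (x ^ 2) ^ k)
      (((1 + x) ^ α + (1 - x) ^ α) / 2) := by
    intro x hx
    have h1 := hsum x hx
    have h2 := hsum (-x) (by rwa [abs_neg])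
    have h3 := ((h1.add h2).div_const 2)
    have hinj : Function.Injective (fun k : ℕ => 2 * k) := fun a b h => by simpa using h
    have := (hinj.hasSum_iff (f := fun n => (a n * x ^ n + a n * (-x) ^ n) / 2)
      (a := ((1 + x) ^ α + (1 + -x) ^ α) / 2) (by
        intro n hn
        have hodd : Odd n := by
          rw [← Nat.not_even_iff_odd]
          rintro ⟨k, hk⟩
          exact hn ⟨k, by simp only; omega⟩
        rw [hodd.neg_pow]; ring)).2 h3
    refine (this.congr_fun ?_ |> fun h => by simpa [← sub_eq_add_neg] using h)
    intro k
    simp only [Function.comp, pow_mul]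
    rw [neg_sq]; ring
  have hrad : (1 / 4 : NNReal) ≤
      (FormalMultilinearSeries.ofScalars ℝ (fun k => a (2 * k))).radius := by
    apply FormalMultilinearSeries.le_radius_of_summable_norm
    have := (hsum2 (1 / 2) (by rw [abs_of_pos] <;> norm_num)).summable.norm
    refine this.congr ?_
    intro k
    rw [FormalMultilinearSeries.ofScalars_norm, norm_mul, norm_pow]
    norm_num
  have hball : HasFPowerSeriesOnBall e (FormalMultilinearSeries.ofScalars ℝ (fun k => a (2 * k))) 0
      _ := FormalMultilinearSeries.hasFPowerSeriesOnBall _ (lt_of_lt_of_le (by norm_num) hrad)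
  have hd : ∀ n, iteratedDeriv n e 0 = n.factorial * a (2 * n) := by
    intro n
    rw [iteratedDeriv_eq_iteratedFDeriv, ← hball.factorial_smul 1 n]
    simp
  have hch : ∀ n, (n.factorial : ℝ) * a n = (descPochhammer ℝ n).eval α := by
    intro n
    have := Ring.descPochhammer_eq_factorial_smul_choose α n
    rw [nsmul_eq_mul] at this
    rw [ha, ← this, ← descPochhammer_map (Int.castRingHom ℝ), Polynomial.eval_map,
      ← Polynomial.eval₂_smulOneHom_eq_smeval]
    congr 1
    ext; simp
  refine ⟨e, hball.analyticAt, ?_, ?_, ?_⟩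
  · have h := hd 1
    have h2 := hch 2
    rw [iteratedDeriv_one] at h
    rw [h]
    simp [descPochhammer_succ_right, Nat.factorial] at h2 ⊢
    linarith
  · have h := hd 2
    have h2 := hch 4
    rw [iteratedDeriv_succ, iteratedDeriv_one] at h
    rw [h]
    simp [descPochhammer_succ_right, Nat.factorial] at h2 ⊢
    linarith
  · intro x hx
    have := (hsum2 x hx).tsum_eq
    rw [he, FormalMultilinearSeries.ofScalarsSum_eq_tsum]
    simp only [smul_eq_mul]
    rw [this]; ring

/-- A function analytic at `0` is Lipschitz near `0`. -/
theorem cz_analytic_lip {f : ℝ → ℝ} (hf : AnalyticAt ℝ f 0) :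
    ∃ ρ L : ℝ, 0 < ρ ∧ 0 < L ∧ ∀ x y : ℝ, |x| ≤ ρ → |y| ≤ ρ → |f x - f y| ≤ L * |x - y| := by
  obtain ⟨K, hK⟩ := hf.hasStrictDerivAt.hasStrictFDerivAt.exists_lipschitzOnWith
  obtain ⟨s, hs, hL⟩ := hK
  obtain ⟨ρ, hρ, hb⟩ := Metric.nhds_basis_closedBall.mem_iff.1 hs
  refine ⟨ρ, K + 1, hρ, by positivity, ?_⟩
  intro x y hx hy
  have := hL.dist_le_mul x (hb (by simpa using hx)) y (hb (by simpa using hy))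
  rw [Real.dist_eq, Real.dist_eq] at this
  nlinarith [abs_nonneg (x - y)]

/-- A function analytic at `0` with nonzero derivative there expands distances, up to a constant,
near `0`. -/
theorem cz_analytic_lip_lower {f : ℝ → ℝ} (hf : AnalyticAt ℝ f 0) (hf' : deriv f 0 ≠ 0) :
    ∃ ρ c : ℝ, 0 < ρ ∧ 0 < c ∧ ∀ x y : ℝ, |x| ≤ ρ → |y| ≤ ρ → c * |x - y| ≤ |f x - f y| := by
  have h := hf.hasStrictDerivAt.isLittleO.def (c := |deriv f 0| / 2) (by positivity)
  rw [nhds_prod_eq, (Metric.nhds_basis_closedBall.prod_self).eventually_iff] at h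
  obtain ⟨ρ, hρ, hb⟩ := h
  refine ⟨ρ, |deriv f 0| / 2, hρ, by positivity, ?_⟩
  intro x y hx hy
  have := hb (x := (x, y)) ⟨by simpa using hx, by simpa using hy⟩
  simp only [Real.norm_eq_abs, ContinuousLinearMap.toSpanSingleton_apply, smul_eq_mul] at this
  have h2 : |deriv f 0| * |x - y| = |(x - y) * deriv f 0| := by rw [abs_mul, mul_comm]
  have h3 := abs_sub_abs_le_abs_sub ((x - y) * deriv f 0) (f x - f y)
  rw [abs_sub_comm ((x - y) * deriv f 0)] at h3
  nlinarith

theorem cz_analytic_ball {f : ℝ → ℝ} (hf : AnalyticAt ℝ f 0) :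
    ∃ ρ : ℝ, 0 < ρ ∧ ∀ x : ℝ, |x| ≤ ρ → AnalyticAt ℝ f x := by
  obtain ⟨ρ, hρ, hb⟩ := Metric.nhds_basis_closedBall.mem_iff.1 hf.eventually_analyticAt
  exact ⟨ρ, hρ, fun x hx => hb (by simpa using hx)⟩

theorem cz_ev_ball {P : ℝ → Prop} (h : ∀ᶠ x in nhds (0 : ℝ), P x) :
    ∃ ρ : ℝ, 0 < ρ ∧ ∀ x : ℝ, |x| ≤ ρ → P x := by
  obtain ⟨ρ, hρ, hb⟩ := Metric.nhds_basis_closedBall.mem_iff.1 h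
  exact ⟨ρ, hρ, fun x hx => hb (by simpa using hx)⟩

/-- The symmetric difference has no second-order term; the error is cubic in `h`, uniformly in the
centre `a`. -/
theorem cz_sym_diff {f : ℝ → ℝ} (hf : AnalyticAt ℝ f 0) :
    ∃ ρ C : ℝ, 0 < ρ ∧ 0 < C ∧ ∀ a h : ℝ, |a| ≤ ρ → |h| ≤ ρ →
      |f (a + h) - f (a - h) - 2 * h * deriv f a| ≤ C * |h| ^ 3 := by
  obtain ⟨ρ1, hρ1, han⟩ := cz_analytic_ball hf
  obtain ⟨ρ2, L, hρ2, hL, hlip⟩ := cz_analytic_lip hf.deriv.deriv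
  set ρ := min ρ1 ρ2 / 2 with hρ
  have hρ0 : 0 < ρ := by positivity
  have r1 : 2 * ρ ≤ ρ1 := by rw [hρ]; linarith [min_le_left ρ1 ρ2]
  have r2 : 2 * ρ ≤ ρ2 := by rw [hρ]; linarith [min_le_right ρ1 ρ2]
  refine ⟨ρ, 4 * L, hρ0, by positivity, ?_⟩
  -- Both sides are even in `h`.
  suffices H : ∀ a h : ℝ, |a| ≤ ρ → 0 ≤ h → h ≤ ρ →
      |f (a + h) - f (a - h) - 2 * h * deriv f a| ≤ 4 * L * h ^ 3 by
    intro a h ha hh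
    rcases le_total 0 h with h0 | h0
    · rw [abs_of_nonneg h0] at hh ⊢; exact H a h ha h0 hh
    · rw [abs_of_nonpos h0] at hh ⊢
      have := H a (-h) ha (by linarith) hh
      rw [← abs_neg]
      convert this using 2; ring_nf
  intro a h ha h0 hh
  have hab := abs_le.1 ha
  -- The derivative in `u` of `f (a + u) - f (a - u) - 2 u f'(a)` is `O(h²)` for `0 ≤ u ≤ h`.
  have h1 : ∀ u : ℝ, 0 ≤ u → u ≤ ρ →
      |deriv f (a + u) + deriv f (a - u) - 2 * deriv f a| ≤ 4 * L * h ^ 2 ∨ h < u := by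
    intro u hu0 hu
    rcases lt_or_ge h u with hlt | hge
    · exact Or.inr hlt
    left
    -- The derivative `f''(a + v) - f''(a - v)` of this is `O(v)`, as `f''` is Lipschitz near `0`.
    have hD : ∀ v ∈ Set.Icc (0 : ℝ) u, HasDerivWithinAt
        (fun v => deriv f (a + v) + deriv f (a - v)) (deriv (deriv f) (a + v) - deriv (deriv f) (a - v))
        (Set.Icc 0 u) v := by
      intro v hv
      have e1 : |a + v| ≤ ρ1 := by rw [abs_le]; constructor <;> linarith [hv.1, hv.2]
      have e2 : |a - v| ≤ ρ1 := by rw [abs_le]; constructor <;> linarith [hv.1, hv.2]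
      have d1 := ((han _ e1).deriv.differentiableAt.hasDerivAt).comp_const_add a v
      have d2 := ((han _ e2).deriv.differentiableAt.hasDerivAt).comp_const_sub a v
      exact (d1.add d2).hasDerivWithinAt
    have := (convex_Icc (0 : ℝ) u).norm_image_sub_le_of_norm_hasDerivWithin_le hD (C := L * (2 * h))
      (by
        intro v hv
        have e1 : |a + v| ≤ ρ2 := by rw [abs_le]; constructor <;> linarith [hv.1, hv.2]
        have e2 : |a - v| ≤ ρ2 := by rw [abs_le]; constructor <;> linarith [hv.1, hv.2]
        refine (hlip _ _ e1 e2).trans ?_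
        gcongr
        rw [show a + v - (a - v) = 2 * v by ring, abs_of_nonneg (by linarith [hv.1])]
        linarith [hv.2])
      (Set.left_mem_Icc.2 hu0) (Set.right_mem_Icc.2 hu0)
    simp only [add_zero, sub_zero, Real.norm_eq_abs] at this
    rw [show deriv f (a + u) + deriv f (a - u) - 2 * deriv f a =
      deriv f (a + u) + deriv f (a - u) - (deriv f a + deriv f a) by ring]
    refine this.trans ?_
    rw [abs_of_nonneg hu0]
    have : 0 ≤ L * h := by positivity
    nlinarith
  have hD : ∀ v ∈ Set.Icc (0 : ℝ) h, HasDerivWithinAt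
      (fun v => f (a + v) - f (a - v) - 2 * v * deriv f a)
      (deriv f (a + v) + deriv f (a - v) - 2 * deriv f a) (Set.Icc 0 h) v := by
    intro v hv
    have e1 : |a + v| ≤ ρ1 := by rw [abs_le]; constructor <;> linarith [hv.1, hv.2]
    have e2 : |a - v| ≤ ρ1 := by rw [abs_le]; constructor <;> linarith [hv.1, hv.2]
    have d1 := ((han _ e1).differentiableAt.hasDerivAt).comp_const_add a v
    have d2 := ((han _ e2).differentiableAt.hasDerivAt).comp_const_sub a v
    have d3 := ((hasDerivAt_id v).const_mul 2).mul_const (deriv f a)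
    have := ((d1.sub d2).sub d3).hasDerivWithinAt (s := Set.Icc 0 h)
    simp only [mul_one, sub_neg_eq_add] at this
    exact this
  have := (convex_Icc (0 : ℝ) h).norm_image_sub_le_of_norm_hasDerivWithin_le hD (C := 4 * L * h ^ 2)
    (by
      intro v hv
      rcases h1 v hv.1 (hv.2.trans hh) with h | h
      · exact h
      · linarith [hv.2])
    (Set.left_mem_Icc.2 h0) (Set.right_mem_Icc.2 h0)
  simp only [add_zero, sub_zero, Real.norm_eq_abs, sub_self, mul_zero, zero_mul] at this
  rw [abs_of_nonneg h0] at this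
  refine this.trans (le_of_eq (by ring))

/-- The map `Q ↦ Q / E(Q)²` is locally invertible at `0`. Hence `u = v E(p/v²)` is solved by
`v = u ι(p/u²)`. -/
theorem cz_inverse_weight {E : ℝ → ℝ} (hE : AnalyticAt ℝ E 0) (hE0 : E 0 = 1)
    (hE' : deriv E 0 ≠ 0) :
    ∃ ι : ℝ → ℝ, AnalyticAt ℝ ι 0 ∧ ι 0 = 1 ∧ deriv ι 0 ≠ 0 ∧
      ∀ᶠ Q in nhds (0 : ℝ), E Q * ι (Q / E Q ^ 2) = 1 := by
  have hEne : ∀ᶠ Q in nhds (0 : ℝ), E Q ≠ 0 :=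
    hE.continuousAt.eventually_ne (by rw [hE0]; norm_num)
  set F : ℝ → ℝ := fun Q => Q / E Q ^ 2 with hF
  have hFan : AnalyticAt ℝ F 0 := analyticAt_id.div (hE.pow 2) (by simp [hE0])
  have hF0 : F 0 = 0 := by simp [hF]
  have hFd : HasDerivAt F 1 0 := by
    have := (hasDerivAt_id (0 : ℝ)).div ((hE.differentiableAt.hasDerivAt).pow 2)
      (by simp [hE0])
    simp [hE0] at this
    exact this
  have hFd' : deriv F 0 ≠ 0 := by rw [hFd.deriv]; norm_num
  set θ := hFan.hasStrictDerivAt.localInverse _ _ _ hFd' with hθ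
  have hθan : AnalyticAt ℝ θ 0 := by
    have := hFan.analyticAt_localInverse hFd'
    rwa [hF0] at this
  have hθl : ∀ᶠ Q in nhds (0 : ℝ), θ (F Q) = Q :=
    HasStrictDerivAt.eventually_left_inverse hFan.hasStrictDerivAt hFd'
  have hθ0 : θ 0 = 0 := by
    have := hθl.self_of_nhds
    rwa [hF0] at this
  have hEθ : AnalyticAt ℝ (fun Y => E (θ Y)) 0 :=
    AnalyticAt.fun_comp (by rw [hθ0]; exact hE) hθan
  have hι : AnalyticAt ℝ (fun Y => (E (θ Y))⁻¹) 0 := hEθ.inv (by rw [hθ0, hE0]; norm_num)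
  have hid : ∀ᶠ Q in nhds (0 : ℝ), E Q * (E (θ (F Q)))⁻¹ = 1 := by
    filter_upwards [hθl, hEne] with Q h1 h2
    rw [h1, mul_inv_cancel₀ h2]
  refine ⟨fun Y => (E (θ Y))⁻¹, hι, by simp [hθ0, hE0], ?_, hid⟩
  intro hd
  set ι : ℝ → ℝ := fun Y => (E (θ Y))⁻¹ with hιd
  have h1 : HasDerivAt (fun Q => E Q * ι (F Q)) (deriv E 0 * ι (F 0) + E 0 * (deriv ι (F 0) * 1)) 0 := by
    apply hE.differentiableAt.hasDerivAt.mul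
    apply HasDerivAt.comp (h₂ := ι) (h := F) 0 _ hFd
    rw [hF0]
    exact hι.differentiableAt.hasDerivAt
  have h2 : HasDerivAt (fun Q => E Q * ι (F Q)) 0 0 :=
    (hasDerivAt_const (0 : ℝ) (1 : ℝ)).congr_of_eventuallyEq hid
  have h3 := h1.unique h2
  rw [hF0, hd] at h3
  simp [hιd, hθ0, hE0] at h3
  exact hE' h3

theorem cz_rpow_range {K x : ℝ} (β : ℝ) (hK : 1 ≤ K) (h1 : K⁻¹ ≤ x) (h2 : x ≤ K) :
    (K ^ |β|)⁻¹ ≤ x ^ β ∧ x ^ β ≤ K ^ |β| := by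
  have hK0 : 0 < K := by linarith
  have hx : 0 < x := lt_of_lt_of_le (by positivity) h1
  have hl : |Real.log x| ≤ Real.log K := by
    rw [abs_le]
    constructor
    · rw [← Real.log_inv]; exact Real.log_le_log (by positivity) h1
    · exact Real.log_le_log hx h2
  have h3 : |Real.log x * β| ≤ Real.log K * |β| := by rw [abs_mul]; gcongr
  rw [abs_le] at h3
  rw [← Real.rpow_neg hK0.le, Real.rpow_def_of_pos hx, Real.rpow_def_of_pos hK0,
    Real.rpow_def_of_pos hK0]
  constructor <;> apply Real.exp_le_exp.2 <;> linarith

/-- The third difference `t(m, h, k)`, as a function of real variables. -/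
noncomputable def czT (α m h k : ℝ) : ℝ :=
  ((m + h + k) ^ α - (m + k) ^ α) - ((m + h) ^ α - m ^ α)

/-- The expansion about the midpoint `n = m + (h + k)/2`. The four terms of `t` are `n^α (1 ± x)^α`
for `x = (h + k)/(2n)` and `x = (k - h)/(2n)`. The squares of these `x` are `S/4 ± X/2` with
`S = (h² + k²)/n²` and `X = hk/n²`, so that `t` is a symmetric difference of the function `e` of
`cz_even_fun`, and `W(S) = e'(S/4)/e'(0)`. -/
theorem cz_T_expansion {α : ℝ} (h0 : α ≠ 0) (h1 : α ≠ 1) (h2 : α ≠ 2) (h3 : α ≠ 3) :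
    ∃ W : ℝ → ℝ, AnalyticAt ℝ W 0 ∧ W 0 = 1 ∧ deriv W 0 ≠ 0 ∧
    ∃ ρ C : ℝ, 0 < ρ ∧ 0 < C ∧ ∀ m h k : ℝ, 0 < m → 0 < h → 0 < k →
      (h ^ 2 + k ^ 2) / (m + (h + k) / 2) ^ 2 ≤ ρ →
      |czT α m h k / (α * (α - 1)) -
        h * k * (m + (h + k) / 2) ^ (α - 2) * W ((h ^ 2 + k ^ 2) / (m + (h + k) / 2) ^ 2)| ≤
        C * (h * k * (m + (h + k) / 2) ^ (α - 2)) * (h * k / (m + (h + k) / 2) ^ 2) ^ 2 := by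
  obtain ⟨e, he, he1, he2, hid⟩ := cz_even_fun α
  obtain ⟨ρ, C, hρ, hC, hsym⟩ := cz_sym_diff he
  have hα2 : α - 2 ≠ 0 := sub_ne_zero.2 h2
  have hα3 : α - 3 ≠ 0 := sub_ne_zero.2 h3
  have hαα : α * (α - 1) ≠ 0 := mul_ne_zero h0 (sub_ne_zero.2 h1)
  have he10 : deriv e 0 ≠ 0 := by
    rw [he1]; exact div_ne_zero hαα (by norm_num)
  refine ⟨fun S => deriv e (S / 4) / deriv e 0, ?_, by simp [he10], ?_, ρ,
    2 * C / |α * (α - 1)|, by positivity, by positivity, ?_⟩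
  · apply AnalyticAt.div_const
    apply AnalyticAt.fun_comp (g := deriv e) (f := fun S : ℝ => S / 4)
    · simpa using he.deriv
    · exact analyticAt_id.div_const
  · have hd : HasDerivAt (fun S => deriv e (S / 4) / deriv e 0)
        (deriv (deriv e) 0 * (1 / 4) / deriv e 0) 0 := by
      apply HasDerivAt.div_const
      apply HasDerivAt.comp (h₂ := deriv e) (h := fun S : ℝ => S / 4)
      · simpa using he.deriv.differentiableAt.hasDerivAt
      · exact (hasDerivAt_id _).div_const 4
    rw [hd.deriv, he2]
    apply div_ne_zero _ he10
    apply mul_ne_zero _ (by norm_num)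
    apply div_ne_zero _ (by norm_num)
    exact mul_ne_zero (mul_ne_zero hαα hα2) hα3
  · intro m h k hm hh hk hS
    set n := m + (h + k) / 2 with hn
    have hn0 : 0 < n := by positivity
    set S := (h ^ 2 + k ^ 2) / n ^ 2 with hSd
    set X := h * k / n ^ 2 with hX
    have hX0 : 0 < X := by positivity
    have hXS : 2 * X ≤ S := by
      rw [hX, hSd, ← mul_div_assoc]
      gcongr; nlinarith [sq_nonneg (h - k)]
    have hS0 : 0 < S := by positivity
    have hx1 : |(h + k) / 2 / n| < 1 := by
      rw [abs_of_pos (by positivity), div_lt_one hn0]; linarith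
    have hx2 : |(k - h) / 2 / n| < 1 := by
      rw [abs_div, abs_of_pos hn0, div_lt_one hn0, abs_lt]; constructor <;> linarith
    have i1 := hid _ hx1
    have i2 := hid _ hx2
    have e1 : ((h + k) / 2 / n) ^ 2 = S / 4 + X / 2 := by rw [hSd, hX]; field_simp; ring
    have e2 : ((k - h) / 2 / n) ^ 2 = S / 4 - X / 2 := by rw [hSd, hX]; field_simp; ring
    rw [e1] at i1
    rw [e2] at i2
    have p : ∀ y : ℝ, 0 ≤ 1 + y → (n * (1 + y)) ^ α = n ^ α * (1 + y) ^ α :=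
      fun y hy => Real.mul_rpow hn0.le hy
    have lt1 := abs_lt.1 hx1
    have lt2 := abs_lt.1 hx2
    have hT : czT α m h k = n ^ α * (2 * (e (S / 4 + X / 2) - e (S / 4 - X / 2))) := by
      have f1 : m + h + k = n * (1 + (h + k) / 2 / n) := by
        rw [mul_add, mul_div_cancel₀ _ hn0.ne']; rw [hn]; ring
      have f2 : m = n * (1 + -((h + k) / 2 / n)) := by
        rw [mul_add, mul_neg, mul_div_cancel₀ _ hn0.ne']; rw [hn]; ring
      have f3 : m + k = n * (1 + (k - h) / 2 / n) := by
        rw [mul_add, mul_div_cancel₀ _ hn0.ne']; rw [hn]; ring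
      have f4 : m + h = n * (1 + -((k - h) / 2 / n)) := by
        rw [mul_add, mul_neg, mul_div_cancel₀ _ hn0.ne']; rw [hn]; ring
      have g1 := p _ (by linarith : 0 ≤ 1 + (h + k) / 2 / n)
      have g2 := p _ (by linarith : 0 ≤ 1 + -((h + k) / 2 / n))
      have g3 := p _ (by linarith : 0 ≤ 1 + (k - h) / 2 / n)
      have g4 := p _ (by linarith : 0 ≤ 1 + -((k - h) / 2 / n))
      rw [← f1] at g1
      rw [← f2] at g2
      rw [← f3] at g3
      rw [← f4] at g4
      rw [czT, g1, g2, g3, g4]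
      simp only [← sub_eq_add_neg]
      linear_combination n ^ α * (i1 - i2)
    have hs := hsym (S / 4) (X / 2) (by rw [abs_of_pos] <;> linarith) (by rw [abs_of_pos] <;> linarith)
    rw [abs_of_pos (by linarith : 0 < X / 2)] at hs
    have hpow : n ^ α = n ^ (α - 2) * n ^ 2 := by
      rw [← Real.rpow_natCast, ← Real.rpow_add hn0]; congr 1; push_cast; ring
    have hnX : n ^ 2 * X = h * k := by rw [hX]; field_simp
    have hαe : α * (α - 1) = 2 * deriv e 0 := by rw [he1]; ring
    have hn2 : 0 < n ^ (α - 2) := by positivity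
    rw [hT]
    have key : n ^ α * (2 * (e (S / 4 + X / 2) - e (S / 4 - X / 2))) / (α * (α - 1)) -
        h * k * n ^ (α - 2) * (deriv e (S / 4) / deriv e 0) =
        (2 * (n ^ (α - 2) * n ^ 2) / (α * (α - 1))) *
          (e (S / 4 + X / 2) - e (S / 4 - X / 2) - 2 * (X / 2) * deriv e (S / 4)) := by
      rw [hpow, hαe, ← hnX]
      field_simp
    rw [key, abs_mul, abs_div, abs_of_pos (by positivity : 0 < 2 * (n ^ (α - 2) * n ^ 2))]
    calc _ ≤ 2 * (n ^ (α - 2) * n ^ 2) / |α * (α - 1)| * (C * (X / 2) ^ 3) := by gcongr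
      _ = 2 * C / |α * (α - 1)| * ((n ^ 2 * X) * n ^ (α - 2)) * X ^ 2 * (1 / 8) := by ring
      _ ≤ 2 * C / |α * (α - 1)| * ((n ^ 2 * X) * n ^ (α - 2)) * X ^ 2 * 1 := by gcongr; norm_num
      _ = _ := by rw [hnX, mul_one]

theorem cz_analytic_rpow {W : ℝ → ℝ} (hW : AnalyticAt ℝ W 0) (hW0 : W 0 = 1) (g : ℝ) :
    AnalyticAt ℝ (fun S => W S ^ g) 0 ∧ deriv (fun S => W S ^ g) 0 = deriv W 0 * g := by
  constructor
  · have h1 : AnalyticAt ℝ (fun S => Real.exp (Real.log (W S) * g)) 0 := by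
      apply AnalyticAt.rexp
      apply AnalyticAt.mul _ analyticAt_const
      exact hW.log (by rw [hW0]; norm_num)
    apply h1.congr
    filter_upwards [hW.continuousAt.tendsto.eventually_const_lt (by rw [hW0]; norm_num : (0:ℝ) < W 0)]
      with S hS
    rw [Real.rpow_def_of_pos hS]
  · have := hW.differentiableAt.hasDerivAt.rpow_const (p := g) (Or.inl (by rw [hW0]; norm_num))
    rw [this.deriv, hW0]; simp

set_option maxHeartbeats 1000000 in
/-- The inequality `|t - t̃| ≤ D T` after passing to powers with exponent `1/(α-2)`. The function `E`
is the same power of the weight `W` of `cz_T_expansion`. -/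
theorem cz_linearise {α : ℝ} (h0 : α ≠ 0) (h1 : α ≠ 1) (h2 : α ≠ 2) (h3 : α ≠ 3) :
    ∃ E : ℝ → ℝ, AnalyticAt ℝ E 0 ∧ E 0 = 1 ∧ deriv E 0 ≠ 0 ∧
    ∃ ρ C : ℝ, 0 < ρ ∧ 0 < C ∧ ∀ M H₁ H₂ D m h k m' h' k' : ℝ, 0 < M → 0 < H₁ → H₁ ≤ H₂ →
      H₂ ≤ ρ * M → (H₁ * H₂) ^ 2 / M ^ 4 ≤ D →
      M ≤ m → m ≤ 2 * M → M ≤ m' → m' ≤ 2 * M →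
      H₁ ≤ h → h ≤ 2 * H₁ → H₁ ≤ h' → h' ≤ 2 * H₁ →
      H₂ ≤ k → k ≤ 2 * H₂ → H₂ ≤ k' → k' ≤ 2 * H₂ →
      |czT α m h k - czT α m' h' k'| ≤ D * (M ^ (α - 2) * H₁ * H₂) →
      |(h * k) ^ (1 / (α - 2)) * ((m + (h + k) / 2) * E ((h ^ 2 + k ^ 2) / (m + (h + k) / 2) ^ 2)) -
        (h' * k') ^ (1 / (α - 2)) * ((m' + (h' + k') / 2) *
          E ((h' ^ 2 + k' ^ 2) / (m' + (h' + k') / 2) ^ 2))| ≤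
        C * D * M * (H₁ * H₂) ^ (1 / (α - 2)) := by
  obtain ⟨W, hW, hW0, hW1, ρ, C, hρ, hC, hexp⟩ := cz_T_expansion h0 h1 h2 h3
  have hα2 : α - 2 ≠ 0 := sub_ne_zero.2 h2
  have hαα : α * (α - 1) ≠ 0 := mul_ne_zero h0 (sub_ne_zero.2 h1)
  set γ := 1 / (α - 2) with hγ
  obtain ⟨hE, hEd⟩ := cz_analytic_rpow hW hW0 γ
  have hγ0 : γ ≠ 0 := one_div_ne_zero hα2
  have hWr : ∀ᶠ S in nhds (0 : ℝ), 1 / 2 < W S ∧ W S < 2 := by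
    have c := hW.continuousAt
    exact (c.tendsto.eventually_const_lt (by rw [hW0]; norm_num)).and
      (c.tendsto.eventually_lt_const (by rw [hW0]; norm_num))
  obtain ⟨ρ', hρ', hWr⟩ := cz_ev_ball hWr
  set A : ℝ := 4 ^ |α - 2| with hA
  have hA1 : 1 ≤ A := Real.one_le_rpow (by norm_num) (abs_nonneg _)
  obtain ⟨L, hL, hlip⟩ := cz_rpow_lip γ (lo := A⁻¹ * (1 / 2)) (hi := 4 * A * 2) (by positivity)
  set ρ₀ := min (min 1 (ρ / 8)) (ρ' / 8) with hρ₀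
  have hρ₀0 : 0 < ρ₀ := by positivity
  have r1 : ρ₀ ≤ 1 := (min_le_left _ _).trans (min_le_left _ _)
  have r2 : 8 * ρ₀ ≤ ρ := by have := (min_le_left (min 1 (ρ / 8)) (ρ' / 8)).trans (min_le_right _ _); linarith
  have r3 : 8 * ρ₀ ≤ ρ' := by have := min_le_right (min 1 (ρ / 8)) (ρ' / 8); linarith
  refine ⟨fun S => W S ^ γ, hE, by simp [hW0], by rw [hEd]; exact mul_ne_zero hW1 hγ0, ρ₀,
    L * (1 / |α * (α - 1)| + 2 * (C * (4 * A) * 16)), hρ₀0, by positivity, ?_⟩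
  intro M H₁ H₂ D m h k m' h' k' hM hH1 hH12 hH2 hD hm1 hm2 hm1' hm2' hh1 hh2 hh1' hh2'
    hk1 hk2 hk1' hk2' ht
  have hH20 : 0 < H₂ := by linarith
  set T := M ^ (α - 2) * (H₁ * H₂) with hT
  have hT0 : 0 < T := by positivity
  -- For one triple, `t/(α(α-1)T)` is `w + O(D)` with `w` bounded above and below, and the power of
  -- `w` with exponent `1/(α-2)` is proportional to the linearised quantity.
  have single : ∀ m h k : ℝ, M ≤ m → m ≤ 2 * M → H₁ ≤ h → h ≤ 2 * H₁ → H₂ ≤ k → k ≤ 2 * H₂ →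
      ∃ w : ℝ, A⁻¹ * (1 / 2) ≤ w ∧ w ≤ 4 * A * 2 ∧
        |czT α m h k / (α * (α - 1)) - T * w| ≤ C * (4 * A) * 16 * D * T ∧
        (h * k) ^ γ * ((m + (h + k) / 2) * W ((h ^ 2 + k ^ 2) / (m + (h + k) / 2) ^ 2) ^ γ) =
          w ^ γ * (M * (H₁ * H₂) ^ γ) := by
    intro m h k hm1 hm2 hh1 hh2 hk1 hk2
    have hm0 : 0 < m := by linarith
    have hh0 : 0 < h := by linarith
    have hk0 : 0 < k := by linarith
    have hH2M : H₂ ≤ M := hH2.trans (by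
      calc ρ₀ * M ≤ 1 * M := by gcongr
        _ = M := one_mul M)
    set n := m + (h + k) / 2 with hn
    have hnM : M ≤ n := by linarith
    have hn4 : n ≤ 4 * M := by linarith
    have hn0 : 0 < n := by linarith
    set S := (h ^ 2 + k ^ 2) / n ^ 2 with hS
    have hS0 : 0 < S := by positivity
    have hS8 : S ≤ 8 * ρ₀ := by
      rw [hS, div_le_iff₀ (by positivity)]
      have a1 : h ^ 2 ≤ (2 * H₂) ^ 2 := by gcongr; linarith
      have a2 : k ^ 2 ≤ (2 * H₂) ^ 2 := by gcongr
      have a3 : H₂ ^ 2 ≤ (ρ₀ * M) ^ 2 := by gcongr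
      have a4 : (ρ₀ * M) ^ 2 ≤ ρ₀ * M ^ 2 := by
        rw [mul_pow]; gcongr; exact pow_le_of_le_one hρ₀0.le r1 two_ne_zero
      have a5 : ρ₀ * M ^ 2 ≤ ρ₀ * n ^ 2 := by gcongr
      linarith
    obtain ⟨w1, w2⟩ := hWr S (by rw [abs_of_pos hS0]; linarith)
    have hex := hexp m h k hm0 hh0 hk0 (by linarith)
    rw [← hn, ← hS] at hex
    have hq1 : 1 ≤ n / M := by rw [le_div_iff₀ hM]; linarith
    have hq4 : n / M ≤ 4 := by rw [div_le_iff₀ hM]; linarith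
    obtain ⟨q1, q2⟩ := cz_rpow_range (K := 4) (x := n / M) (α - 2) (by norm_num) (by linarith) hq4
    rw [← hA] at q1 q2
    have hc1 : 1 ≤ h * k / (H₁ * H₂) := by
      rw [le_div_iff₀ (by positivity), one_mul]; gcongr
    have hc4 : h * k / (H₁ * H₂) ≤ 4 := by
      rw [div_le_iff₀ (by positivity)]
      calc h * k ≤ (2 * H₁) * (2 * H₂) := by gcongr
        _ = _ := by ring
    have hqp : 0 < (n / M) ^ (α - 2) := by positivity
    have hTq : T * (h * k / (H₁ * H₂) * (n / M) ^ (α - 2)) = h * k * n ^ (α - 2) := by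
      rw [hT, Real.div_rpow hn0.le hM.le]
      have : M ^ (α - 2) ≠ 0 := by positivity
      field_simp
    have hcq : h * k / (H₁ * H₂) * (n / M) ^ (α - 2) ≤ 4 * A := by gcongr
    have hcq1 : A⁻¹ ≤ h * k / (H₁ * H₂) * (n / M) ^ (α - 2) := by
      calc A⁻¹ ≤ 1 * (n / M) ^ (α - 2) := by linarith
        _ ≤ _ := by gcongr
    refine ⟨h * k / (H₁ * H₂) * (n / M) ^ (α - 2) * W S, ?_, ?_, ?_, ?_⟩
    · gcongr
    · gcongr
    · rw [← mul_assoc T, hTq]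
      refine hex.trans ?_
      rw [← hTq]
      have hX : (h * k / n ^ 2) ^ 2 ≤ 16 * D := by
        calc (h * k / n ^ 2) ^ 2 ≤ ((2 * H₁) * (2 * H₂) / M ^ 2) ^ 2 := by gcongr
          _ = 16 * ((H₁ * H₂) ^ 2 / M ^ 4) := by ring
          _ ≤ _ := by gcongr
      calc _ ≤ C * (T * (4 * A)) * (16 * D) := by gcongr
        _ = _ := by ring
    · have hf : (h * k / (H₁ * H₂) * (n / M) ^ (α - 2) * W S) ^ γ =
          (h * k) ^ γ / (H₁ * H₂) ^ γ * (n / M) * W S ^ γ := by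
        rw [Real.mul_rpow (by positivity) (by linarith), Real.mul_rpow (by positivity) (by positivity),
          ← Real.rpow_mul (by positivity), hγ, mul_one_div_cancel hα2, Real.rpow_one,
          Real.div_rpow (by positivity) (by positivity)]
      rw [hf]
      have : (H₁ * H₂) ^ γ ≠ 0 := by positivity
      field_simp
  obtain ⟨w, wl, wu, wt, we⟩ := single m h k hm1 hm2 hh1 hh2 hk1 hk2
  obtain ⟨w', wl', wu', wt', we'⟩ := single m' h' k' hm1' hm2' hh1' hh2' hk1' hk2'
  simp only
  rw [we, we', ← sub_mul, abs_mul, abs_of_pos (by positivity : 0 < M * (H₁ * H₂) ^ γ)]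
  have hww : |w - w'| ≤ (1 / |α * (α - 1)| + 2 * (C * (4 * A) * 16)) * D := by
    have e : T * (w - w') = (czT α m h k - czT α m' h' k') / (α * (α - 1)) -
      (czT α m h k / (α * (α - 1)) - T * w) + (czT α m' h' k' / (α * (α - 1)) - T * w') := by ring
    have hb : |T * (w - w')| ≤ D * T / |α * (α - 1)| + C * (4 * A) * 16 * D * T
        + C * (4 * A) * 16 * D * T := by
      rw [e]
      refine (abs_add_le _ _).trans ?_
      refine add_le_add ((abs_sub _ _).trans (add_le_add ?_ wt)) wt'
      rw [abs_div]
      gcongr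
      refine ht.trans (le_of_eq ?_)
      rw [hT]; ring
    rw [abs_mul, abs_of_pos hT0] at hb
    apply le_of_mul_le_mul_left _ hT0
    refine hb.trans (le_of_eq ?_)
    ring
  have := hlip w w' wl wu wl' wu'
  calc _ ≤ (L * ((1 / |α * (α - 1)| + 2 * (C * (4 * A) * 16)) * D)) * (M * (H₁ * H₂) ^ γ) := by
        gcongr
        exact this.trans (by gcongr)
    _ = _ := by ring

/-! ### The curve attached to a quadruple -/

/-- The first two derivatives of `u ↦ u ψ(s/u²)`, through `χ = ψ - 2Sψ'` and `ϖ = -2Sχ'`. The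
first-order term of `ϖ` at `0` governs the curvature of the curves below. -/
theorem cz_weight {ψ : ℝ → ℝ} (hψ : AnalyticAt ℝ ψ 0) :
    ∃ χ ϖ : ℝ → ℝ, AnalyticAt ℝ χ 0 ∧ AnalyticAt ℝ ϖ 0 ∧ χ 0 = ψ 0 ∧ ϖ 0 = 0 ∧
      deriv ϖ 0 = 2 * deriv ψ 0 ∧ ∃ ρ : ℝ, 0 < ρ ∧ ∀ s u : ℝ, u ≠ 0 → |s / u ^ 2| ≤ ρ →
        HasDerivAt (fun u => u * ψ (s / u ^ 2)) (χ (s / u ^ 2)) u ∧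
        HasDerivAt (fun u => χ (s / u ^ 2)) (u⁻¹ * ϖ (s / u ^ 2)) u := by
  obtain ⟨ρ1, hρ1, h1⟩ := cz_analytic_ball hψ
  have hχ' : ∃ χ : ℝ → ℝ, ∀ S, χ S = ψ S - 2 * S * deriv ψ S := ⟨_, fun _ => rfl⟩
  obtain ⟨χ, hχ⟩ := hχ'
  have hχe : χ = fun S => ψ S - 2 * S * deriv ψ S := funext hχ
  have hχa : ∀ S, AnalyticAt ℝ ψ S → AnalyticAt ℝ χ S := fun S h => by
    rw [hχe]
    exact h.sub ((analyticAt_const.mul analyticAt_id).mul h.deriv)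
  have hϖ' : ∃ ϖ : ℝ → ℝ, ∀ S, ϖ S = -2 * S * deriv χ S := ⟨_, fun _ => rfl⟩
  obtain ⟨ϖ, hϖ⟩ := hϖ'
  have hϖe : ϖ = fun S => -2 * S * deriv χ S := funext hϖ
  have hϖa : AnalyticAt ℝ ϖ 0 := by
    rw [hϖe]
    exact (analyticAt_const.mul analyticAt_id).mul (hχa 0 hψ).deriv
  refine ⟨χ, ϖ, hχa 0 hψ, hϖa, by simp [hχ], by simp [hϖ], ?_, ρ1, hρ1, ?_⟩
  · have d1 : HasDerivAt χ (-deriv ψ 0) 0 := by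
      rw [hχe]
      have := hψ.differentiableAt.hasDerivAt.fun_sub
        (((hasDerivAt_id' (0 : ℝ)).const_mul 2).fun_mul hψ.deriv.differentiableAt.hasDerivAt)
      refine this.congr_deriv ?_
      ring
    have d2 : HasDerivAt ϖ (-2 * deriv χ 0) 0 := by
      rw [hϖe]
      have := ((hasDerivAt_id' (0 : ℝ)).const_mul (-2)).fun_mul
        (hχa 0 hψ).deriv.differentiableAt.hasDerivAt
      refine this.congr_deriv ?_
      ring
    rw [d2.deriv, d1.deriv]; ring
  · intro s u hu hs
    have ha := h1 _ hs
    have d0 : HasDerivAt (fun u : ℝ => s / u ^ 2) (-2 * s / u ^ 3) u := by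
      have := (hasDerivAt_const u s).fun_div (hasDerivAt_pow 2 u) (pow_ne_zero 2 hu)
      refine this.congr_deriv ?_
      field_simp
      push_cast
      ring
    constructor
    · have := (hasDerivAt_id' u).fun_mul (HasDerivAt.comp (h₂ := ψ) u ha.differentiableAt.hasDerivAt d0)
      refine this.congr_deriv ?_
      simp only [hχ, Function.comp]
      field_simp
      ring
    · have := HasDerivAt.comp (h₂ := χ) u (hχa _ ha).differentiableAt.hasDerivAt d0
      refine this.congr_deriv ?_
      simp only [hϖ]
      field_simp

theorem cz_cont_half_two {f : ℝ → ℝ} (hf : AnalyticAt ℝ f 0) (h0 : f 0 = 1) :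
    ∃ ρ : ℝ, 0 < ρ ∧ ∀ x : ℝ, |x| ≤ ρ → 1 / 2 < f x ∧ f x < 2 := by
  apply cz_ev_ball
  have c := hf.continuousAt
  exact (c.tendsto.eventually_const_lt (by rw [h0]; norm_num)).and
    (c.tendsto.eventually_lt_const (by rw [h0]; norm_num))

set_option maxHeartbeats 1000000 in
/-- Solving `v E(p/v²) ≈ u E(q/u²)` for `v`. With `y = u E(q/u²)` and the inverse weight `ι`, the
solution is `u + J(u)`, where `J(u) = y ι(p/y²) - y ι(q/y²)`. Its first derivative is
`O(|p - q|)` and its second derivative is of exact order `|p - q|`. -/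
theorem cz_J {E : ℝ → ℝ} (hE : AnalyticAt ℝ E 0) (hE0 : E 0 = 1) (hE' : deriv E 0 ≠ 0)
    {A : ℝ} (hA : 1 ≤ A) :
    ∃ δ c C : ℝ, 0 < δ ∧ 0 < c ∧ 0 < C ∧ (∀ S : ℝ, |S| ≤ A ^ 2 * δ → 1 / 2 < E S ∧ E S < 2) ∧
      (∀ S S' : ℝ, |S| ≤ A ^ 2 * δ → |S'| ≤ A ^ 2 * δ → |E S - E S'| ≤ C * |S - S'|) ∧
      ∀ p q : ℝ, |p| ≤ δ → |q| ≤ δ →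
      ∃ J J' J'' : ℝ → ℝ,
        (∀ u : ℝ, A⁻¹ ≤ u → u ≤ A → HasDerivAt J (J' u) u ∧ HasDerivAt J' (J'' u) u ∧
          |J' u| ≤ C * |p - q| ∧ c * |p - q| ≤ |J'' u| ∧ |J'' u| ≤ C * |p - q|) ∧
        ∀ v u : ℝ, A⁻¹ ≤ v → v ≤ A → A⁻¹ ≤ u → u ≤ A →
          |v - u - J u| ≤ C * |v * E (p / v ^ 2) - u * E (q / u ^ 2)| := by
  obtain ⟨ι, hι, hι0, hι', hid⟩ := cz_inverse_weight hE hE0 hE'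
  obtain ⟨χE, ϖE, hχE, hϖE, hχE0, hϖE0, -, ρ1, hρ1, hdE⟩ := cz_weight hE
  obtain ⟨χ, ϖ, hχ, hϖ, hχ0, hϖ0, hϖ', ρ2, hρ2, hdι⟩ := cz_weight hι
  obtain ⟨ρ3, hρ3, hid⟩ := cz_ev_ball hid
  obtain ⟨ρ4, hρ4, hE2⟩ := cz_cont_half_two hE hE0
  obtain ⟨ρ5, hρ5, hχE2⟩ := cz_cont_half_two hχE (by rw [hχE0, hE0])
  obtain ⟨ρ6, hρ6, hχ2⟩ := cz_cont_half_two hχ (by rw [hχ0, hι0])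
  obtain ⟨ρ7, L1, hρ7, hL1, hlipχ⟩ := cz_analytic_lip hχ
  obtain ⟨ρ8, L2, hρ8, hL2, hlipϖ⟩ := cz_analytic_lip hϖ
  obtain ⟨ρ9, L3, hρ9, hL3, hlipϖE⟩ := cz_analytic_lip hϖE
  obtain ⟨ρ10, c, hρ10, hc, hlow⟩ := cz_analytic_lip_lower hϖ
    (by rw [hϖ']; exact mul_ne_zero two_ne_zero hι')
  obtain ⟨ρ11, L4, hρ11, hL4, hlipE⟩ := cz_analytic_lip hE
  have hA0 : 0 < A := by linarith
  obtain ⟨ρ, hρ, m1, m2, m3, m4, m5, m6, m7, m8, m9, m10, m11⟩ : ∃ ρ : ℝ, 0 < ρ ∧ ρ ≤ ρ1 ∧ ρ ≤ ρ2 ∧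
      ρ ≤ ρ3 ∧ ρ ≤ ρ4 ∧ ρ ≤ ρ5 ∧ ρ ≤ ρ6 ∧ ρ ≤ ρ7 ∧ ρ ≤ ρ8 ∧ ρ ≤ ρ9 ∧ ρ ≤ ρ10 ∧ ρ ≤ ρ11 := by
    have : ∀ᶠ ρ in nhdsWithin (0 : ℝ) (Set.Ioi 0), 0 < ρ ∧ ρ ≤ ρ1 ∧ ρ ≤ ρ2 ∧
      ρ ≤ ρ3 ∧ ρ ≤ ρ4 ∧ ρ ≤ ρ5 ∧ ρ ≤ ρ6 ∧ ρ ≤ ρ7 ∧ ρ ≤ ρ8 ∧ ρ ≤ ρ9 ∧ ρ ≤ ρ10 ∧ ρ ≤ ρ11 := by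
      have ev : ∀ r : ℝ, 0 < r → ∀ᶠ ρ in nhdsWithin (0 : ℝ) (Set.Ioi 0), ρ ≤ r := fun r hr =>

        Filter.mem_of_superset (Ioc_mem_nhdsGT hr) fun x hx => hx.2
      exact (eventually_mem_nhdsWithin.mono fun x hx => hx).and <|
        (ev _ hρ1).and <| (ev _ hρ2).and <| (ev _ hρ3).and <| (ev _ hρ4).and <|
        (ev _ hρ5).and <| (ev _ hρ6).and <| (ev _ hρ7).and <| (ev _ hρ8).and <|
        (ev _ hρ9).and <| (ev _ hρ10).and <| ev _ hρ11
    exact this.exists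
  -- smallness of `δ` makes the second term of `J''` negligible
  obtain ⟨δ, hδ, hδρ, hδc⟩ : ∃ δ : ℝ, 0 < δ ∧ 4 * A ^ 2 * δ ≤ ρ ∧
      4 * A ^ 2 * L1 * (A * (L3 * (A ^ 2 * δ))) ≤ c / (64 * A ^ 3) := by
    refine ⟨min (ρ / (4 * A ^ 2)) (c / (64 * A ^ 3) / (4 * A ^ 2 * L1 * (A * (L3 * A ^ 2)))),
      by positivity, ?_, ?_⟩
    · have := min_le_left (ρ / (4 * A ^ 2))
        (c / (64 * A ^ 3) / (4 * A ^ 2 * L1 * (A * (L3 * A ^ 2))))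
      rw [le_div_iff₀ (by positivity)] at this
      linarith
    · have := min_le_right (ρ / (4 * A ^ 2))
        (c / (64 * A ^ 3) / (4 * A ^ 2 * L1 * (A * (L3 * A ^ 2))))
      rw [le_div_iff₀ (by positivity)] at this
      linarith
  have hA2δ : A ^ 2 * δ ≤ ρ := by
    have : 0 < A ^ 2 * δ := by positivity
    linarith
  have hsm : ∀ q u : ℝ, |q| ≤ δ → A⁻¹ ≤ u → |q / u ^ 2| ≤ A ^ 2 * δ := by
    intro q u hq hu
    have hAi : 0 < A⁻¹ := by positivity
    have hu0 : 0 < u := by linarith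
    rw [abs_div, abs_of_pos (by positivity : 0 < u ^ 2), div_le_iff₀ (by positivity)]
    have h1 : 1 ≤ A * u := by
      have := mul_le_mul_of_nonneg_left hu hA0.le
      rwa [mul_inv_cancel₀ hA0.ne'] at this
    have h2 : 1 ≤ (A * u) ^ 2 := one_le_pow₀ h1
    calc |q| ≤ δ * 1 := by linarith
      _ ≤ δ * (A * u) ^ 2 := by gcongr
      _ = _ := by ring
  have hdv : ∀ p q y : ℝ, A⁻¹ / 2 ≤ y → |p / y ^ 2 - q / y ^ 2| ≤ 4 * A ^ 2 * |p - q| := by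
    intro p q y hy
    have hAi : 0 < A⁻¹ := by positivity
    have hy0 : 0 < y := by linarith
    rw [← sub_div, abs_div, abs_of_pos (by positivity : 0 < y ^ 2), div_le_iff₀ (by positivity)]
    have h1 : 1 ≤ 2 * A * y := by
      have := mul_le_mul_of_nonneg_left hy hA0.le
      rw [mul_div_assoc', mul_inv_cancel₀ hA0.ne'] at this
      linarith
    have h2 : 1 ≤ (2 * A * y) ^ 2 := one_le_pow₀ h1
    calc |p - q| ≤ |p - q| * 1 := by linarith
      _ ≤ |p - q| * (2 * A * y) ^ 2 := by gcongr
      _ = _ := by ring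
  have hsm' : ∀ q y : ℝ, |q| ≤ δ → A⁻¹ / 2 ≤ y → |q / y ^ 2| ≤ ρ := by
    intro q y hq hy
    have := hdv q 0 y hy
    simp only [zero_div, sub_zero] at this
    calc _ ≤ 4 * A ^ 2 * |q| := this
      _ ≤ 4 * A ^ 2 * δ := by gcongr
      _ ≤ ρ := hδρ
  have hEr : ∀ S : ℝ, |S| ≤ A ^ 2 * δ → 1 / 2 < E S ∧ E S < 2 := fun S hS =>
    hE2 S (by linarith)
  have hY : ∀ q u : ℝ, |q| ≤ δ → A⁻¹ ≤ u → u ≤ A →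
      A⁻¹ / 2 ≤ u * E (q / u ^ 2) ∧ u * E (q / u ^ 2) ≤ 2 * A := by
    intro q u hq hu hu'
    have hAi : 0 < A⁻¹ := by positivity
    have hu0 : 0 < u := by linarith
    obtain ⟨e1, e2⟩ := hEr _ (hsm q u hq hu)
    constructor
    · calc A⁻¹ / 2 = A⁻¹ * (1 / 2) := by ring
        _ ≤ u * E (q / u ^ 2) := by gcongr
    · calc u * E (q / u ^ 2) ≤ A * 2 := by gcongr
        _ = _ := by ring
  have hinv : ∀ q u : ℝ, |q| ≤ δ → A⁻¹ ≤ u →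
      u * E (q / u ^ 2) * ι (q / (u * E (q / u ^ 2)) ^ 2) = u := by
    intro q u hq hu
    have := hid (q / u ^ 2) (by linarith [hsm q u hq hu])
    rw [mul_pow, ← div_div, mul_assoc, this, mul_one]
  refine ⟨δ, c / (64 * A ^ 3), 8 * A ^ 2 * L1 + 32 * A ^ 3 * L2 + c + L4 + 2, hδ, by positivity,
    by positivity, hEr, ?_, ?_⟩
  · intro S S' hS hS'
    calc _ ≤ L4 * |S - S'| := hlipE S S' (by linarith) (by linarith)
      _ ≤ _ := by
        gcongr
        have : 0 < 8 * A ^ 2 * L1 + 32 * A ^ 3 * L2 := by positivity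
        linarith
  intro p q hp hq
  refine ⟨fun u => u * E (q / u ^ 2) * ι (p / (u * E (q / u ^ 2)) ^ 2)
      - u * E (q / u ^ 2) * ι (q / (u * E (q / u ^ 2)) ^ 2),
    fun u => (χ (p / (u * E (q / u ^ 2)) ^ 2) - χ (q / (u * E (q / u ^ 2)) ^ 2))
      * χE (q / u ^ 2),
    fun u => ((u * E (q / u ^ 2))⁻¹ * (ϖ (p / (u * E (q / u ^ 2)) ^ 2)
      - ϖ (q / (u * E (q / u ^ 2)) ^ 2)) * χE (q / u ^ 2)) * χE (q / u ^ 2)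
      + (χ (p / (u * E (q / u ^ 2)) ^ 2) - χ (q / (u * E (q / u ^ 2)) ^ 2))
        * (u⁻¹ * ϖE (q / u ^ 2)), ?_, ?_⟩
  · intro u hu hu'
    have hAi : 0 < A⁻¹ := by positivity
    have hu0 : 0 < u := by linarith
    obtain ⟨y1, y2⟩ := hY q u hq hu hu'
    have hQ := hsm q u hq hu
    obtain ⟨dY, dY'⟩ := hdE q u hu0.ne' (by linarith)
    have hχEb := hχE2 (q / u ^ 2) (by linarith)
    set y := u * E (q / u ^ 2) with hy
    have hy0 : 0 < y := by linarith
    obtain ⟨p1, p2⟩ := hdι p y hy0.ne' ((hsm' p y hp y1).trans m2)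
    obtain ⟨q1, q2⟩ := hdι q y hy0.ne' ((hsm' q y hq y1).trans m2)
    have b1 : |χ (p / y ^ 2) - χ (q / y ^ 2)| ≤ 4 * A ^ 2 * L1 * |p - q| := by
      calc _ ≤ L1 * |p / y ^ 2 - q / y ^ 2| :=
            hlipχ _ _ ((hsm' p y hp y1).trans m7) ((hsm' q y hq y1).trans m7)
        _ ≤ L1 * (4 * A ^ 2 * |p - q|) := by gcongr; exact hdv p q y y1
        _ = _ := by ring
    have b2 : |ϖ (p / y ^ 2) - ϖ (q / y ^ 2)| ≤ 4 * A ^ 2 * L2 * |p - q| := by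
      calc _ ≤ L2 * |p / y ^ 2 - q / y ^ 2| :=
            hlipϖ _ _ ((hsm' p y hp y1).trans m8) ((hsm' q y hq y1).trans m8)
        _ ≤ L2 * (4 * A ^ 2 * |p - q|) := by gcongr; exact hdv p q y y1
        _ = _ := by ring
    have b3 : c * |p - q| / (2 * A) ^ 2 ≤ |ϖ (p / y ^ 2) - ϖ (q / y ^ 2)| := by
      calc c * |p - q| / (2 * A) ^ 2 ≤ c * |p - q| / y ^ 2 := by gcongr
        _ = c * |p / y ^ 2 - q / y ^ 2| := by
          rw [← sub_div, abs_div, abs_of_pos (by positivity : 0 < y ^ 2), mul_div_assoc]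
        _ ≤ _ := hlow _ _ ((hsm' p y hp y1).trans m10) ((hsm' q y hq y1).trans m10)
    have b4 : |u⁻¹ * ϖE (q / u ^ 2)| ≤ A * (L3 * (A ^ 2 * δ)) := by
      rw [abs_mul, abs_of_pos (by positivity : 0 < u⁻¹)]
      have i1 : u⁻¹ ≤ A := inv_le_of_inv_le₀ hA0 hu
      have i2 := hlipϖE (q / u ^ 2) 0 (by linarith) (by simp; linarith)
      rw [hϖE0, sub_zero, sub_zero] at i2
      have i3 : |ϖE (q / u ^ 2)| ≤ L3 * (A ^ 2 * δ) := i2.trans (by gcongr)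
      gcongr
    have hsec : |(χ (p / y ^ 2) - χ (q / y ^ 2)) * (u⁻¹ * ϖE (q / u ^ 2))|
        ≤ c / (64 * A ^ 3) * |p - q| := by
      rw [abs_mul]
      calc _ ≤ (4 * A ^ 2 * L1 * |p - q|) * (A * (L3 * (A ^ 2 * δ))) := by gcongr
        _ = 4 * A ^ 2 * L1 * (A * (L3 * (A ^ 2 * δ))) * |p - q| := by ring
        _ ≤ _ := by gcongr
    set W := χE (q / u ^ 2)
    have hW0 : 0 < W := by linarith [hχEb.1]
    have hmain : |y⁻¹ * (ϖ (p / y ^ 2) - ϖ (q / y ^ 2)) * W * W|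
        = y⁻¹ * |ϖ (p / y ^ 2) - ϖ (q / y ^ 2)| * W * W := by
      rw [abs_mul, abs_mul, abs_mul, abs_of_pos hW0, abs_of_pos (by positivity : 0 < y⁻¹)]
    have hyi : (2 * A)⁻¹ ≤ y⁻¹ := by gcongr
    have hyi' : y⁻¹ ≤ 2 * A := by
      apply inv_le_of_inv_le₀ (by positivity)
      rw [mul_inv]; linarith
    have hmainlow : c / (32 * A ^ 3) * |p - q|
        ≤ |y⁻¹ * (ϖ (p / y ^ 2) - ϖ (q / y ^ 2)) * W * W| := by
      rw [hmain]
      calc c / (32 * A ^ 3) * |p - q|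
          = (2 * A)⁻¹ * (c * |p - q| / (2 * A) ^ 2) * (1 / 2) * (1 / 2) := by
            field_simp; ring
        _ ≤ _ := by
          gcongr
          · exact hχEb.1.le
          · exact hχEb.1.le
    have hmainup : |y⁻¹ * (ϖ (p / y ^ 2) - ϖ (q / y ^ 2)) * W * W|
        ≤ 32 * A ^ 3 * L2 * |p - q| := by
      rw [hmain]
      calc _ ≤ (2 * A) * (4 * A ^ 2 * L2 * |p - q|) * 2 * 2 := by
            gcongr
            · exact hχEb.2.le
            · exact hχEb.2.le
        _ = _ := by ring
    have hc64 : c / (64 * A ^ 3) ≤ c := div_le_self hc.le (by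
      have : 1 ≤ A ^ 3 := one_le_pow₀ hA
      linarith)
    have hc32 : c / (32 * A ^ 3) = c / (64 * A ^ 3) + c / (64 * A ^ 3) := by
      field_simp; norm_num
    have hpq := abs_nonneg (p - q)
    have n1 : 0 < 8 * A ^ 2 * L1 := by positivity
    have n2 : 0 < 32 * A ^ 3 * L2 := by positivity
    refine ⟨?_, ?_, ?_, ?_, ?_⟩
    · have e := (p1.sub q1).comp u dY
      exact e.congr_deriv rfl
    · have e := ((p2.sub q2).comp u dY).mul dY'
      refine e.congr_deriv ?_
      simp only [Function.comp, Pi.sub_apply]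
      rw [← hy]
      ring
    · show |(χ (p / y ^ 2) - χ (q / y ^ 2)) * W| ≤ _
      rw [abs_mul, abs_of_pos hW0]
      calc _ ≤ (4 * A ^ 2 * L1 * |p - q|) * 2 := by gcongr; exact hχEb.2.le
        _ = 8 * A ^ 2 * L1 * |p - q| := by ring
        _ ≤ _ := by gcongr; linarith
    · have t := abs_sub_abs_le_abs_sub (y⁻¹ * (ϖ (p / y ^ 2) - ϖ (q / y ^ 2)) * W * W)
        (-((χ (p / y ^ 2) - χ (q / y ^ 2)) * (u⁻¹ * ϖE (q / u ^ 2))))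
      rw [abs_neg, sub_neg_eq_add] at t
      rw [hc32, add_mul] at hmainlow
      linarith
    · refine (abs_add_le _ _).trans ((add_le_add hmainup hsec).trans ?_)
      rw [← add_mul]
      exact mul_le_mul_of_nonneg_right (by linarith) hpq
  · intro v u hv hv' hu hu'
    obtain ⟨v1, v2⟩ := hY p v hp hv hv'
    obtain ⟨u1, u2⟩ := hY q u hq hu hu'
    have ev := hinv p v hp hv
    have eu := hinv q u hq hu
    have hAi : 0 < A⁻¹ := by positivity
    set y := v * E (p / v ^ 2)
    set z := u * E (q / u ^ 2)
    have key := Convex.norm_image_sub_le_of_norm_hasDerivWithin_le (𝕜 := ℝ)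
      (f := fun y => y * ι (p / y ^ 2)) (f' := fun y => χ (p / y ^ 2)) (C := 2)
      (s := Set.Icc (A⁻¹ / 2) (2 * A)) (x := z) (y := y) (fun x hx => by
        have hx0 : x ≠ 0 := by linarith [hx.1]
        exact (hdι p x hx0 ((hsm' p x hp hx.1).trans m2)).1.hasDerivWithinAt) (fun x hx => by
        have := hχ2 _ ((hsm' p x hp hx.1).trans m6)
        rw [Real.norm_eq_abs, abs_of_pos (by linarith)]
        linarith) (convex_Icc _ _) ⟨u1, u2⟩ ⟨v1, v2⟩
    simp only [Real.norm_eq_abs] at key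
    have : v - u - (z * ι (p / z ^ 2) - z * ι (q / z ^ 2)) = y * ι (p / y ^ 2) - z * ι (p / z ^ 2) := by
      rw [eu, ev]; ring
    show |v - u - (z * ι (p / z ^ 2) - z * ι (q / z ^ 2))| ≤ _
    rw [this]
    refine key.trans ?_
    gcongr
    have : 0 < 8 * A ^ 2 * L1 + 32 * A ^ 3 * L2 := by positivity
    linarith

set_option maxHeartbeats 1000000 in
/-- The curve attached to a quadruple, obtained from `cz_J` with `v = (m + (h + k)/2)/(ωM)`,
`u = (m' + (h' + k')/2)/M`, `p = (h² + k²)/(ωM)²` and `q = (h'² + k'²)/M²`, for which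
`p - q = -κ/M²`. Thus `φ(x) = ω(y + M J(y/M)) - (h + k)/2` with `y = x + (h' + k')/2`. -/
theorem cz_curve {α : ℝ} (h0 : α ≠ 0) (h1 : α ≠ 1) (h2 : α ≠ 2) (h3 : α ≠ 3) :
    ∃ W C c ρ : ℝ, 1 ≤ W ∧ 0 < C ∧ 0 < c ∧ 0 < ρ ∧ ∀ M H₁ H₂ D h k h' k' ω κ : ℝ,
      0 < M → 0 < H₁ → H₁ ≤ H₂ → H₂ ≤ ρ * M → (H₁ * H₂) ^ 2 / M ^ 4 ≤ D →
      H₁ ≤ h → h ≤ 2 * H₁ → H₁ ≤ h' → h' ≤ 2 * H₁ →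
      H₂ ≤ k → k ≤ 2 * H₂ → H₂ ≤ k' → k' ≤ 2 * H₂ →
      ω = ((h' * k') / (h * k)) ^ (1 / (α - 2)) →
      κ = (h' ^ 2 + k' ^ 2) - (h ^ 2 + k ^ 2) / ω ^ 2 →
      W⁻¹ ≤ ω ∧ ω ≤ W ∧ ∃ φ φ' φ'' : ℝ → ℝ,
        (∀ x : ℝ, M ≤ x → x ≤ 2 * M → HasDerivAt φ (φ' x) x ∧ HasDerivAt φ' (φ'' x) x ∧
          |φ' x - ω| ≤ C * (|κ| / M ^ 2) ∧ c * (|κ| / M ^ 3) ≤ |φ'' x| ∧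
          |φ'' x| ≤ C * (|κ| / M ^ 3)) ∧
        ∀ m m' : ℝ, M ≤ m → m ≤ 2 * M → M ≤ m' → m' ≤ 2 * M →
          |czT α m h k - czT α m' h' k'| ≤ D * (M ^ (α - 2) * H₁ * H₂) →
          |m - φ m'| ≤ C * (D * M) ∧
          ∀ ν : ℝ, D ≤ ν → |(h ^ 2 + k ^ 2) / (m + (h + k) / 2) ^ 2
              - (h' ^ 2 + k' ^ 2) / (m' + (h' + k') / 2) ^ 2| ≤ ν * (H₂ / M) ^ 2 →
            |κ| ≤ C * (ν * H₂ ^ 2) := by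
  obtain ⟨E, hE, hE0, hE', ρ0, C0, hρ0, hC0, hlin⟩ := cz_linearise h0 h1 h2 h3
  set γ := 1 / (α - 2) with hγ
  obtain ⟨W, hW⟩ : ∃ W : ℝ, W = 4 ^ |γ| := ⟨_, rfl⟩
  have hW1 : 1 ≤ W := by rw [hW]; exact Real.one_le_rpow (by norm_num) (abs_nonneg _)
  have hA : 1 ≤ 4 * W := by linarith
  obtain ⟨δ, c, CJ, hδ, hc, hCJ, hEb, hElip, hJ⟩ := cz_J hE hE0 hE' hA
  have hW0 : 0 < W := by linarith
  refine ⟨W, 16 + 16 * (C0 * W + 4 * CJ) * (4 + 3 * W) + W * CJ * (C0 * W) + W * CJ, W⁻¹ * c,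
    min (min ρ0 (1/2)) (min 1 (δ / (8 * W ^ 2))), hW1, by positivity, by positivity, by positivity, ?_⟩
  intro M H₁ H₂ D h k h' k' ω κ hM hH1 hH12 hρ hD a1 a2 a3 a4 b1 b2 b3 b4 hω hκ
  set r := min (min ρ0 (1/2)) (min 1 (δ / (8 * W ^ 2))) with hr
  have hρa : H₂ ≤ ρ0 * M := hρ.trans
    (mul_le_mul_of_nonneg_right ((min_le_left _ _).trans (min_le_left _ _)) hM.le)
  have hρb : H₂ ≤ 1 / 2 * M := hρ.trans
    (mul_le_mul_of_nonneg_right ((min_le_left _ _).trans (min_le_right _ _)) hM.le)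
  have hρd : H₂ ≤ δ / (8 * W ^ 2) * M := hρ.trans
    (mul_le_mul_of_nonneg_right ((min_le_right _ _).trans (min_le_right _ _)) hM.le)
  have hH2 : 0 < H₂ := by linarith
  have hh : 0 < h := by linarith
  have hh' : 0 < h' := by linarith
  have hk : 0 < k := by linarith
  have hk' : 0 < k' := by linarith
  have hR : 0 < H₁ * H₂ := by positivity
  have hωr : W⁻¹ ≤ ω ∧ ω ≤ W := by
    rw [hω, hW]
    apply cz_rpow_range _ (by norm_num)
    · rw [le_div_iff₀ (by positivity)]
      have : h * k ≤ (2 * H₁) * (2 * H₂) := by gcongr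
      have : H₁ * H₂ ≤ h' * k' := by gcongr
      linarith
    · rw [div_le_iff₀ (by positivity)]
      have : h' * k' ≤ (2 * H₁) * (2 * H₂) := by gcongr
      have : H₁ * H₂ ≤ h * k := by gcongr
      linarith
  have hω0 : 0 < ω := lt_of_lt_of_le (by positivity) hωr.1
  have hs0 : 0 ≤ h ^ 2 + k ^ 2 := by positivity
  have hs0' : 0 ≤ h' ^ 2 + k' ^ 2 := by positivity
  have hs1 : h ^ 2 + k ^ 2 ≤ 8 * H₂ ^ 2 := by
    have : h ^ 2 ≤ (2 * H₂) ^ 2 := by gcongr; linarith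
    have : k ^ 2 ≤ (2 * H₂) ^ 2 := by gcongr
    linarith
  have hs1' : h' ^ 2 + k' ^ 2 ≤ 8 * H₂ ^ 2 := by
    have : h' ^ 2 ≤ (2 * H₂) ^ 2 := by gcongr; linarith
    have : k' ^ 2 ≤ (2 * H₂) ^ 2 := by gcongr
    linarith
  obtain ⟨s, hs⟩ : ∃ s, s = h ^ 2 + k ^ 2 := ⟨_, rfl⟩
  obtain ⟨s', hs'⟩ : ∃ s', s' = h' ^ 2 + k' ^ 2 := ⟨_, rfl⟩
  rw [← hs] at hs0 hs1 hκ
  rw [← hs'] at hs0' hs1' hκ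
  have hHM : H₂ ^ 2 ≤ δ / (8 * W ^ 2) * M ^ 2 := by
    calc H₂ ^ 2 = H₂ * H₂ := by ring
      _ ≤ (δ / (8 * W ^ 2) * M) * M := by gcongr; linarith
      _ = _ := by ring
  have hWinv : (ω ^ 2)⁻¹ ≤ W ^ 2 := by
    rw [← inv_pow]
    gcongr
    exact inv_le_of_inv_le₀ hW0 hωr.1
  have hp : |s / ω ^ 2 / M ^ 2| ≤ δ := by
    rw [abs_of_nonneg (by positivity), div_le_iff₀ (by positivity), div_eq_mul_inv]
    calc s * (ω ^ 2)⁻¹ ≤ 8 * (δ / (8 * W ^ 2) * M ^ 2) * W ^ 2 := by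
          gcongr; linarith
      _ = δ * M ^ 2 := by field_simp
  have hq : |s' / M ^ 2| ≤ δ := by
    rw [abs_of_nonneg (by positivity), div_le_iff₀ (by positivity)]
    have : 1 ≤ W ^ 2 := one_le_pow₀ hW1
    calc s' ≤ 8 * (δ / (8 * W ^ 2) * M ^ 2) * 1 := by linarith
      _ ≤ 8 * (δ / (8 * W ^ 2) * M ^ 2) * W ^ 2 := by gcongr
      _ = δ * M ^ 2 := by field_simp
  have hpq : |s / ω ^ 2 / M ^ 2 - s' / M ^ 2| = |κ| / M ^ 2 := by
    rw [← sub_div, abs_div, abs_of_pos (by positivity : 0 < M ^ 2), hκ, abs_sub_comm]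
  obtain ⟨J, J', J'', hJ1, hJ2⟩ := hJ _ _ hp hq
  rw [hpq] at hJ1
  have hA4 : (4 * W)⁻¹ ≤ 1 := inv_le_one_of_one_le₀ hA
  have hur : ∀ x : ℝ, M ≤ x → x ≤ 2 * M → 1 ≤ (x + (h' + k') / 2) / M ∧
      (x + (h' + k') / 2) / M ≤ 4 := by
    intro x hx hx'
    rw [le_div_iff₀ hM, div_le_iff₀ hM]
    constructor <;> linarith
  have hκ0 := abs_nonneg κ
  refine ⟨hωr.1, hωr.2, fun x => ω * ((x + (h' + k') / 2) + M * J ((x + (h' + k') / 2) / M))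
      - (h + k) / 2, fun x => ω * (1 + J' ((x + (h' + k') / 2) / M)),
    fun x => ω * (J'' ((x + (h' + k') / 2) / M) / M), ?_, ?_⟩
  · intro x hx hx'
    obtain ⟨u1, u2⟩ := hur x hx hx'
    obtain ⟨j1, j2, j3, j4, j5⟩ := hJ1 _ (hA4.trans u1) (by linarith)
    have du : HasDerivAt (fun x : ℝ => (x + (h' + k') / 2) / M) (1 / M) x :=
      ((hasDerivAt_id' x).add_const _).div_const M
    refine ⟨?_, ?_, ?_, ?_, ?_⟩
    · have := ((((hasDerivAt_id' x).add_const ((h' + k') / 2)).fun_add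
        ((HasDerivAt.comp x j1 du).const_mul M)).const_mul ω).sub_const ((h + k) / 2)
      refine this.congr_deriv ?_
      field_simp
    · have := ((HasDerivAt.comp x j2 du).const_add 1).const_mul ω
      refine this.congr_deriv ?_
      field_simp
    · have : ω * (1 + J' ((x + (h' + k') / 2) / M)) - ω = ω * J' ((x + (h' + k') / 2) / M) := by ring
      simp only
      rw [this, abs_mul, abs_of_pos hω0]
      calc _ ≤ W * (CJ * (|κ| / M ^ 2)) := by gcongr; exact hωr.2
        _ = W * CJ * (|κ| / M ^ 2) := by ring
        _ ≤ _ := mul_le_mul_of_nonneg_right (by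
            have : 0 < 16 * (C0 * W + 4 * CJ) * (4 + 3 * W) + W * CJ * (C0 * W) := by positivity
            linarith) (by positivity)
    · rw [abs_mul, abs_of_pos hω0, abs_div, abs_of_pos hM]
      calc W⁻¹ * c * (|κ| / M ^ 3) = W⁻¹ * (c * (|κ| / M ^ 2) / M) := by field_simp
        _ ≤ _ := by gcongr; exact hωr.1
    · rw [abs_mul, abs_of_pos hω0, abs_div, abs_of_pos hM]
      calc _ ≤ W * (CJ * (|κ| / M ^ 2) / M) := by gcongr; exact hωr.2
        _ = W * CJ * (|κ| / M ^ 3) := by field_simp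
        _ ≤ _ := mul_le_mul_of_nonneg_right (by
            have : 0 < 16 * (C0 * W + 4 * CJ) * (4 + 3 * W) + W * CJ * (C0 * W) := by positivity
            linarith) (by positivity)
  · intro m m' hm1 hm2 hm1' hm2' ht
    obtain ⟨u1, u2⟩ := hur m' hm1' hm2'
    have hD0 : 0 ≤ D := le_trans (by positivity) hD
    have key := hlin M H₁ H₂ D m h k m' h' k' hM hH1 hH12 hρa hD hm1 hm2 hm1' hm2' a1 a2 a3 a4
      b1 b2 b3 b4 ht
    rw [← hs, ← hs'] at key
    obtain ⟨n, hn⟩ : ∃ n, n = m + (h + k) / 2 := ⟨_, rfl⟩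
    obtain ⟨n', hn'⟩ : ∃ n', n' = m' + (h' + k') / 2 := ⟨_, rfl⟩
    rw [← hn, ← hn'] at key
    rw [← hn'] at u1 u2
    have hn0 : M ≤ n := by rw [hn]; linarith
    have hn1 : n ≤ 3 * M := by rw [hn]; linarith
    have hnpos : 0 < n := by linarith
    have hn0' : M ≤ n' := by rw [hn']; linarith
    have hn1' : n' ≤ 3 * M := by rw [hn']; linarith
    have hnpos' : 0 < n' := by linarith
    obtain ⟨v, hv⟩ : ∃ v, v = n / ω / M := ⟨_, rfl⟩
    obtain ⟨u, hu⟩ : ∃ u, u = n' / M := ⟨_, rfl⟩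
    rw [← hu] at u1 u2
    have hWi : W⁻¹ ≤ ω⁻¹ := inv_anti₀ hω0 hωr.2
    have hWi' : ω⁻¹ ≤ W := inv_le_of_inv_le₀ hW0 hωr.1
    have hv1 : W⁻¹ ≤ v := by
      rw [hv, div_div, mul_comm ω M, ← div_div, div_eq_mul_inv (n / M)]
      have : 1 ≤ n / M := by rw [le_div_iff₀ hM]; linarith
      calc W⁻¹ = 1 * W⁻¹ := by ring
        _ ≤ _ := by gcongr
    have hv2 : v ≤ 3 * W := by
      rw [hv, div_div, mul_comm ω M, ← div_div, div_eq_mul_inv (n / M)]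
      have : n / M ≤ 3 := by rw [div_le_iff₀ hM]; linarith
      gcongr
    have hv0 : 0 < v := lt_of_lt_of_le (by positivity) hv1
    have hu0 : 0 < u := by linarith
    have eS : s / n ^ 2 = s / ω ^ 2 / M ^ 2 / v ^ 2 := by rw [hv]; field_simp
    have eS' : s' / n' ^ 2 = s' / M ^ 2 / u ^ 2 := by rw [hu]; field_simp
    have hfin : |v * E (s / n ^ 2) - u * E (s' / n' ^ 2)| ≤ C0 * W * D := by
      have hx : (h' * k') ^ γ = ω * (h * k) ^ γ := by
        rw [hω, Real.div_rpow (by positivity) (by positivity), div_mul_cancel₀]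
        exact (Real.rpow_pos_of_pos (by positivity) _).ne'
      have hxpos : 0 < (h' * k') ^ γ := Real.rpow_pos_of_pos (by positivity) _
      have hR' : (H₁ * H₂) ^ γ ≤ W * (h' * k') ^ γ := by
        have := (cz_rpow_range (K := 4) (x := (H₁ * H₂) / (h' * k')) γ (by norm_num) (by
          rw [le_div_iff₀ (by positivity)]
          have : h' * k' ≤ (2 * H₁) * (2 * H₂) := by gcongr
          linarith) (by
          rw [div_le_iff₀ (by positivity)]
          have : H₁ * H₂ ≤ h' * k' := by gcongr
          linarith)).2
        rwa [← hW, Real.div_rpow (by positivity) (by positivity), div_le_iff₀ hxpos] at this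
      have e1 : (h * k) ^ γ * (n * E (s / n ^ 2)) - (h' * k') ^ γ * (n' * E (s' / n' ^ 2))
          = M * (h' * k') ^ γ * (v * E (s / n ^ 2) - u * E (s' / n' ^ 2)) := by
        have : (h * k) ^ γ = (h' * k') ^ γ / ω := by rw [hx]; field_simp
        rw [this, hv, hu]; field_simp
      rw [e1, abs_mul, abs_of_pos (by positivity)] at key
      have key2 : M * (h' * k') ^ γ * |v * E (s / n ^ 2) - u * E (s' / n' ^ 2)|
          ≤ M * (h' * k') ^ γ * (C0 * W * D) := by
        calc _ ≤ C0 * D * M * (H₁ * H₂) ^ γ := key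
          _ ≤ C0 * D * M * (W * (h' * k') ^ γ) := by gcongr
          _ = _ := by ring
      exact le_of_mul_le_mul_left key2 (by positivity)
    have hAv : (4 * W)⁻¹ ≤ v := by
      refine le_trans ?_ hv1
      gcongr; linarith
    have hAu : (4 * W)⁻¹ ≤ u := hA4.trans u1
    have hsq : ∀ p x : ℝ, |p| ≤ δ → (4 * W)⁻¹ ≤ x → |p / x ^ 2| ≤ (4 * W) ^ 2 * δ := by
      intro p x hp hx
      have hx0 : 0 < x := lt_of_lt_of_le (by positivity) hx
      rw [abs_div, abs_of_pos (by positivity : 0 < x ^ 2), div_eq_mul_inv, mul_comm]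
      have : (x ^ 2)⁻¹ ≤ (4 * W) ^ 2 := by
        rw [← inv_pow]
        gcongr
        exact inv_le_of_inv_le₀ (by positivity) hx
      gcongr
    have hSb : |s / n ^ 2| ≤ (4 * W) ^ 2 * δ := by rw [eS]; exact hsq _ _ hp hAv
    have hSb' : |s' / n' ^ 2| ≤ (4 * W) ^ 2 * δ := by rw [eS']; exact hsq _ _ hq hAu
    constructor
    · have := hJ2 v u hAv (by linarith) hAu (by linarith)
      rw [← eS, ← eS'] at this
      have e : m - (ω * ((m' + (h' + k') / 2) + M * J ((m' + (h' + k') / 2) / M)) - (h + k) / 2)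
          = ω * M * (v - u - J u) := by
        rw [← hn', ← hu, hv, hu]
        have : m = n - (h + k) / 2 := by rw [hn]; ring
        rw [this]; field_simp; ring
      simp only
      rw [e, abs_mul, abs_of_pos (by positivity)]
      calc _ ≤ W * M * (CJ * (C0 * W * D)) := by
            gcongr
            · exact hωr.2
            · exact this.trans (by gcongr)
        _ = W * CJ * (C0 * W) * (D * M) := by ring
        _ ≤ _ := mul_le_mul_of_nonneg_right (by
            have : 0 < 16 * (C0 * W + 4 * CJ) * (4 + 3 * W) + W * CJ := by positivity
            linarith) (by positivity)
    · intro ν hDν hSS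
      rw [← hs, ← hs', ← hn, ← hn'] at hSS
      have hν0 : 0 ≤ ν := hD0.trans hDν
      have hHM1 : (H₂ / M) ^ 2 ≤ 1 := by
        apply pow_le_one₀ (by positivity)
        rw [div_le_one hM]; linarith
      have hES := hEb _ hSb
      have huv : |v - u| ≤ 2 * (C0 * W + 4 * CJ) * ν := by
        have e : (v - u) * E (s / n ^ 2) = (v * E (s / n ^ 2) - u * E (s' / n' ^ 2))
            - u * (E (s / n ^ 2) - E (s' / n' ^ 2)) := by ring
        have t1 : |u * (E (s / n ^ 2) - E (s' / n' ^ 2))| ≤ 4 * (CJ * (ν * 1)) := by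
          rw [abs_mul, abs_of_pos hu0]
          gcongr
          refine (hElip _ _ hSb hSb').trans ?_
          gcongr
          exact hSS.trans (by gcongr)
        have t2 : |(v - u) * E (s / n ^ 2)| ≤ C0 * W * ν + 4 * (CJ * (ν * 1)) := by
          rw [e]
          refine (abs_sub _ _).trans (add_le_add (hfin.trans (by gcongr)) t1)
        have hE00 : 0 < E (s / n ^ 2) := by linarith [hES.1]
        rw [abs_mul, abs_of_pos hE00] at t2
        have t3 : |v - u| * (1 / 2) ≤ |v - u| * E (s / n ^ 2) := by
          gcongr; exact hES.1.le
        linarith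
      have hsn : |s / n ^ 2| ≤ 8 * (H₂ / M) ^ 2 := by
        rw [abs_of_nonneg (by positivity), div_le_iff₀ (by positivity)]
        calc s ≤ 8 * H₂ ^ 2 := hs1
          _ = 8 * (H₂ / M) ^ 2 * M ^ 2 := by field_simp
          _ ≤ _ := by gcongr
      have e : κ = (u * M) ^ 2 * (s' / n' ^ 2 - s / n ^ 2)
          + (s / n ^ 2) * (M ^ 2 * ((u - v) * (u + v))) := by
        rw [hκ, hu, hv]; field_simp; ring
      rw [e]
      refine (abs_add_le _ _).trans ?_
      rw [abs_mul, abs_mul, abs_of_pos (by positivity : 0 < (u * M) ^ 2),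
        abs_sub_comm (s' / n' ^ 2), abs_mul, abs_mul, abs_of_pos (by positivity : 0 < M ^ 2),
        abs_sub_comm u v, abs_of_pos (by positivity : 0 < u + v)]
      have r1 : (u * M) ^ 2 * |s / n ^ 2 - s' / n' ^ 2| ≤ (4 * M) ^ 2 * (ν * (H₂ / M) ^ 2) := by
        gcongr
      have r2 : |s / n ^ 2| * (M ^ 2 * (|v - u| * (u + v)))
          ≤ (8 * (H₂ / M) ^ 2) * (M ^ 2 * ((2 * (C0 * W + 4 * CJ) * ν) * (4 + 3 * W))) := by
        gcongr
      refine (add_le_add r1 r2).trans ?_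
      have e3 : (4 * M) ^ 2 * (ν * (H₂ / M) ^ 2) + (8 * (H₂ / M) ^ 2) *
          (M ^ 2 * ((2 * (C0 * W + 4 * CJ) * ν) * (4 + 3 * W)))
          = (16 + 16 * (C0 * W + 4 * CJ) * (4 + 3 * W)) * (ν * H₂ ^ 2) := by
        field_simp; ring
      rw [e3]
      refine mul_le_mul_of_nonneg_right ?_ (by positivity)
      have : 0 < W * CJ * (C0 * W) := by positivity
      have : 0 < W * CJ := by positivity
      linarith

/-! ### Restriction to short bins -/

/-- The arithmetic-geometric mean inequality on each pair of fibres of `u` and `v`. -/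
theorem cz_uv {ι κ : Type*} [DecidableEq κ] (X : Finset ι) (u v : ι → κ) :
    2 * ((X ×ˢ X).filter fun p => u p.1 = v p.2).card
      ≤ ((X ×ˢ X).filter fun p => u p.1 = u p.2).card
        + ((X ×ˢ X).filter fun p => v p.1 = v p.2).card := by
  classical
  set K := X.image u ∪ X.image v with hK
  have hu : ∀ x ∈ X, u x ∈ K := fun x hx =>
    Finset.mem_union_left _ (Finset.mem_image_of_mem _ hx)
  have hv : ∀ x ∈ X, v x ∈ K := fun x hx =>
    Finset.mem_union_right _ (Finset.mem_image_of_mem _ hx)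
  have key : ∀ a b : ι → κ, (∀ x ∈ X, a x ∈ K) →
      ((X ×ˢ X).filter fun p => a p.1 = b p.2).card
        = ∑ k ∈ K, (X.filter fun x => a x = k).card * (X.filter fun x => b x = k).card := by
    intro a b ha
    rw [Finset.card_eq_sum_card_fiberwise (f := fun p : ι × ι => a p.1) (t := K)]
    · refine Finset.sum_congr rfl fun k _ => ?_
      rw [← Finset.card_product]
      congr 1
      ext p
      simp only [Finset.mem_filter, Finset.mem_product]
      constructor
      · rintro ⟨⟨⟨h1, h2⟩, h3⟩, h4⟩
        exact ⟨⟨h1, h4⟩, h2, h3 ▸ h4⟩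
      · rintro ⟨⟨h1, h2⟩, h3, h4⟩
        exact ⟨⟨⟨h1, h3⟩, h2.trans h4.symm⟩, h2⟩
    · intro p hp
      simp only [Finset.coe_filter, Finset.mem_product, Set.mem_ofPred_eq] at hp
      exact ha _ hp.1.1
  rw [key u v hu, key u u hu, key v v hv, Finset.mul_sum, ← Finset.sum_add_distrib]
  refine Finset.sum_le_sum fun k _ => ?_
  nlinarith [two_mul_le_add_sq ((X.filter fun x => u x = k).card)
    ((X.filter fun x => v x = k).card)]

/-- Short bins instead of long ones. Bin `X` by `g` at scale `w` and by `S` at scale `σ`: for the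
pairs on the left the difference of the two bin indices takes at most as many values as the
product of the first two factors, and by `cz_uv` each value accounts for no more pairs than the
difference zero. -/
theorem cz_bins {ι : Type*} (X : Finset ι) (g S : ι → ℝ) {w W σ D : ℝ} (hw : 0 < w) (hW : 0 ≤ W)
    (hσ : 0 < σ) (hD : 0 ≤ D) (hS : ∀ x ∈ X, ∀ y ∈ X, |S x - S y| ≤ D) :
    (((X ×ˢ X).filter fun p => |g p.1 - g p.2| ≤ W).card : ℝ)
      ≤ (2 * (W / w) + 3) * (2 * (D / σ) + 3) *
        ((X ×ˢ X).filter fun p => |g p.1 - g p.2| ≤ w ∧ |S p.1 - S p.2| ≤ σ).card := by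
  classical
  set b : ι → ℤ × ℤ := fun x => (⌊g x / w⌋, ⌊S x / σ⌋) with hb
  have hfl : ∀ (s t r d : ℝ), 0 < r → |s - t| ≤ d → |⌊s / r⌋ - ⌊t / r⌋| ≤ ⌊d / r⌋ + 1 := by
    intro s t r d hr h
    have h1 : |s / r - t / r| ≤ d / r := by
      rw [← sub_div, abs_div, abs_of_pos hr]; gcongr
    rw [abs_le] at h1
    have a1 := Int.floor_le (s / r)
    have a2 := Int.lt_floor_add_one (s / r)
    have b1 := Int.floor_le (t / r)
    have b2 := Int.lt_floor_add_one (t / r)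
    have c2 := Int.lt_floor_add_one (d / r)
    have i1 : ⌊s / r⌋ - ⌊t / r⌋ < ⌊d / r⌋ + 2 := by
      have : ((⌊s / r⌋ - ⌊t / r⌋ : ℤ) : ℝ) < ((⌊d / r⌋ + 2 : ℤ) : ℝ) := by push_cast; linarith
      exact_mod_cast this
    have i2 : ⌊t / r⌋ - ⌊s / r⌋ < ⌊d / r⌋ + 2 := by
      have : ((⌊t / r⌋ - ⌊s / r⌋ : ℤ) : ℝ) < ((⌊d / r⌋ + 2 : ℤ) : ℝ) := by push_cast; linarith
      exact_mod_cast this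
    rw [abs_le]; omega
  have hfl0 : ∀ (s t r : ℝ), 0 < r → ⌊s / r⌋ = ⌊t / r⌋ → |s - t| ≤ r := by
    intro s t r hr h
    have := Int.abs_sub_lt_one_of_floor_eq_floor h
    rw [← sub_div, abs_div, abs_of_pos hr, div_lt_one hr] at this
    exact this.le
  set L := ⌊W / w⌋ + 1
  set L' := ⌊D / σ⌋ + 1
  have hL0 : 0 ≤ ⌊W / w⌋ := Int.floor_nonneg.2 (by positivity)
  have hL0' : 0 ≤ ⌊D / σ⌋ := Int.floor_nonneg.2 (by positivity)
  set Y := (X ×ˢ X).filter fun p => |g p.1 - g p.2| ≤ W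
  set Z := (X ×ˢ X).filter fun p => b p.1 = b p.2
  set T := Finset.Icc (-L) L ×ˢ Finset.Icc (-L') L'
  have h1 : (Y.card : ℝ) ≤ T.card * (Z.card : ℝ) := by
    refine cz_card_le_mul_fiber Y (fun p => b p.1 - b p.2) T ?_ _ ?_
    · intro p hp
      simp only [Y, Finset.mem_filter, Finset.mem_product] at hp
      have k1 := hfl _ _ _ _ hw hp.2
      have k2 := hfl _ _ _ _ hσ (hS _ hp.1.1 _ hp.1.2)
      rw [abs_le] at k1 k2
      simp only [T, Finset.mem_product, Finset.mem_Icc, hb, Prod.mk_sub_mk]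
      omega
    · intro t _
      have e := cz_uv X b (fun x => b x + t)
      have e1 : ((X ×ˢ X).filter fun p => b p.1 + t = b p.2 + t) = Z := by
        simp [Z]
      rw [e1] at e
      refine le_trans (Nat.cast_le.2 (Finset.card_le_card ?_)) (Nat.cast_le.2 <| show ((X ×ˢ X).filter fun p => b p.1 = b p.2 + t).card
        ≤ Z.card by
          have : ((X ×ˢ X).filter fun p => b p.1 = b p.2).card = Z.card := rfl
          omega)
      intro p hp
      simp only [Y, Finset.mem_filter] at hp ⊢
      exact ⟨hp.1.1, by rw [← hp.2]; abel⟩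
  have h2 : Z.card ≤ ((X ×ˢ X).filter fun p => |g p.1 - g p.2| ≤ w ∧ |S p.1 - S p.2| ≤ σ).card := by
    refine Finset.card_le_card fun p hp => ?_
    simp only [Z, hb, Finset.mem_filter, Prod.mk.injEq] at hp ⊢
    exact ⟨hp.1, hfl0 _ _ _ hw hp.2.1, hfl0 _ _ _ hσ hp.2.2⟩
  have h3 : (T.card : ℝ) ≤ (2 * (W / w) + 3) * (2 * (D / σ) + 3) := by
    rw [Finset.card_product, Int.card_Icc, Int.card_Icc]
    push_cast
    have f1 : (((L + 1 - -L).toNat : ℕ) : ℝ) ≤ 2 * (W / w) + 3 := by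
      have : (((L + 1 - -L).toNat : ℕ) : ℤ) = 2 * ⌊W / w⌋ + 3 := by
        rw [Int.toNat_of_nonneg (by omega)]; omega
      have t : (((L + 1 - -L).toNat : ℕ) : ℝ) = 2 * (⌊W / w⌋ : ℝ) + 3 := by exact_mod_cast this
      rw [t]; linarith [Int.floor_le (W / w)]
    have f2 : (((L' + 1 - -L').toNat : ℕ) : ℝ) ≤ 2 * (D / σ) + 3 := by
      have : (((L' + 1 - -L').toNat : ℕ) : ℤ) = 2 * ⌊D / σ⌋ + 3 := by
        rw [Int.toNat_of_nonneg (by omega)]; omega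
      have t : (((L' + 1 - -L').toNat : ℕ) : ℝ) = 2 * (⌊D / σ⌋ : ℝ) + 3 := by exact_mod_cast this
      rw [t]; linarith [Int.floor_le (D / σ)]
    gcongr
  calc (Y.card : ℝ) ≤ (T.card : ℝ) * Z.card := h1
    _ ≤ _ := by gcongr

/-! ### Lattice points near a curve -/

/-- The mean value theorem: a chord between two points near a curve is nearly a tangent direction. -/
theorem cz_slope {φ φ' : ℝ → ℝ} {a b e x x' y y' : ℝ}
    (hd : ∀ x, a ≤ x → x ≤ b → HasDerivAt φ (φ' x) x)
    (hax : a ≤ x) (hxx : x ≤ x') (hxb : x' ≤ b) (h1 : |y - φ x| ≤ e) (h2 : |y' - φ x'| ≤ e) :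
    ∃ ξ, x ≤ ξ ∧ ξ ≤ x' ∧ |(y' - y) - φ' ξ * (x' - x)| ≤ 2 * e := by
  rw [abs_le] at h1 h2
  rcases eq_or_lt_of_le hxx with h | h
  · subst h
    refine ⟨x, le_rfl, le_rfl, ?_⟩
    rw [abs_le]
    constructor <;> nlinarith
  · obtain ⟨ξ, hξ, e1⟩ := exists_hasDerivAt_eq_slope φ φ' h
      (fun z hz => (hd z (hax.trans hz.1) (hz.2.trans hxb)).continuousAt.continuousWithinAt)
      (fun z hz => hd z (hax.trans hz.1.le) (hz.2.le.trans hxb))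
    refine ⟨ξ, hξ.1.le, hξ.2.le, ?_⟩
    have : x' - x ≠ 0 := by linarith
    rw [e1, div_mul_cancel₀ _ this, abs_le]
    constructor <;> linarith

theorem cz_deriv_diff {φ' φ'' : ℝ → ℝ} {a b l L x y : ℝ}
    (hd : ∀ x, a ≤ x → x ≤ b → HasDerivAt φ' (φ'' x) x)
    (hb : ∀ x, a ≤ x → x ≤ b → l ≤ |φ'' x| ∧ |φ'' x| ≤ L)
    (hx : a ≤ x ∧ x ≤ b) (hy : a ≤ y ∧ y ≤ b) :
    l * |x - y| ≤ |φ' x - φ' y| ∧ |φ' x - φ' y| ≤ L * |x - y| := by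
  wlog hxy : y ≤ x generalizing x y
  · rw [abs_sub_comm x y, abs_sub_comm (φ' x)]
    exact this hy hx (le_of_not_ge hxy)
  obtain ⟨ξ, h1, h2, h3⟩ := cz_slope hd hy.1 hxy hx.2 (y := φ' y) (y' := φ' x) (e := 0)
    (by simp) (by simp)
  rw [mul_zero, abs_nonpos_iff, sub_eq_zero] at h3
  rw [h3, abs_mul]
  have := hb ξ (hy.1.trans h1) (h2.trans hx.2)
  exact ⟨by gcongr; exact this.1, by gcongr; exact this.2⟩

/-- Lattice points on a segment of coprime direction `(b, a)` and of length `g` steps. -/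
theorem cz_segment_count {Q : Finset (ℕ × ℕ)} {x₀ y₀ a b g : ℕ} (hb : 1 ≤ b)
    (hab : Nat.Coprime a b)
    (hx : ∀ p ∈ Q, x₀ ≤ p.2 ∧ p.2 ≤ x₀ + g * b)
    (hc : ∀ p ∈ Q, ((p.2 : ℤ) - x₀) * a = b * ((p.1 : ℤ) - y₀)) : Q.card ≤ g + 1 := by
  have hdvd : ∀ p ∈ Q, b ∣ p.2 - x₀ := by
    intro p hp
    have h1 : (b : ℤ) ∣ ((p.2 : ℤ) - x₀) * a := ⟨_, hc p hp⟩
    have h2 : IsCoprime (b : ℤ) (a : ℤ) := by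
      rw [Nat.isCoprime_iff_coprime]; exact hab.symm
    have h3 := h2.dvd_of_dvd_mul_right h1
    rw [← Nat.cast_sub (hx p hp).1] at h3
    exact_mod_cast h3
  have : Q.card ≤ (Finset.range (g + 1)).card := by
    refine Finset.card_le_card_of_injOn (fun p => (p.2 - x₀) / b) ?_ ?_
    · intro p hp
      have := hx p hp
      simp only [Finset.coe_range, Set.mem_Iio]
      rw [Nat.lt_succ_iff]
      apply Nat.div_le_of_le_mul
      rw [mul_comm]; omega
    · intro p hp q hq hpq
      simp only at hpq
      have e : p.2 - x₀ = q.2 - x₀ := by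
        rw [← Nat.div_mul_cancel (hdvd p hp), ← Nat.div_mul_cancel (hdvd q hq), hpq]
      have e2 : p.2 = q.2 := by
        have := (hx p hp).1
        have := (hx q hq).1
        omega
      have c1 := hc p hp
      have c2 := hc q hq
      rw [e2, c2] at c1
      have hb0 : (b : ℤ) ≠ 0 := by positivity
      have := mul_left_cancel₀ hb0 c1
      ext
      · omega
      · exact e2
  simpa using this

set_option maxHeartbeats 1000000 in
/-- Lattice points near a curve, on one short interval. The points of `Q` with extreme abscissae
differ by `g (b, a)` with `a` and `b` coprime. The determinant formed with any further point of `Q`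
is an integer of absolute value less than `1`, hence zero, so all points lie on one segment. -/
theorem cz_geom_one {M ℓ e Λ ω Γ : ℝ} {φ φ' φ'' : ℝ → ℝ} (Q : Finset (ℕ × ℕ))
    (he : 0 ≤ e) (he1 : 2 * e < 1) (hΛ : 0 ≤ Λ)
    (hd : ∀ x, M ≤ x → x ≤ 2 * M → HasDerivAt φ (φ' x) x)
    (hd' : ∀ x, M ≤ x → x ≤ 2 * M → HasDerivAt φ' (φ'' x) x)
    (hω : ∀ x, M ≤ x → x ≤ 2 * M → |φ' x - ω| ≤ Γ)
    (hφ : ∀ x, M ≤ x → x ≤ 2 * M → |φ'' x| ≤ Λ)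
    (hdet : Λ * ℓ ^ 3 + 4 * e * ℓ < 1) (hpos : Γ + 2 * e < ω)
    (hQ : ∀ p ∈ Q, M ≤ (p.2 : ℝ) ∧ (p.2 : ℝ) ≤ 2 * M ∧ |(p.1 : ℝ) - φ p.2| ≤ e)
    (hI : ∀ p ∈ Q, ∀ q ∈ Q, |(p.2 : ℝ) - q.2| ≤ ℓ) (hcard : 2 ≤ Q.card) :
    ∃ a b g : ℕ, ∃ ξ : ℝ, Q.card ≤ 2 * g ∧ 1 ≤ a ∧ 1 ≤ b ∧ 1 ≤ g ∧ Nat.Coprime a b ∧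
      ((g * b : ℕ) : ℝ) ≤ ℓ ∧ M ≤ ξ ∧ ξ ≤ 2 * M ∧
      (∃ p ∈ Q, ∃ q ∈ Q, (p.2 : ℝ) ≤ ξ ∧ ξ ≤ q.2) ∧
      |φ' ξ - (a : ℝ) / b| ≤ 2 * e / ((g * b : ℕ) : ℝ) ∧
      |(a : ℝ) / b - ω| ≤ Γ + 2 * e / ((g * b : ℕ) : ℝ) := by
  have hne : Q.Nonempty := Finset.card_pos.1 (by omega)
  obtain ⟨p, hp, hmin⟩ := Finset.exists_min_image Q (fun p => p.2) hne
  obtain ⟨q, hq, hmax⟩ := Finset.exists_max_image Q (fun p => p.2) hne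
  obtain ⟨p1, p2, p3⟩ := hQ p hp
  obtain ⟨q1, q2, q3⟩ := hQ q hq
  have hpq : p.2 < q.2 := by
    rcases lt_or_ge p.2 q.2 with h | h
    · exact h
    exfalso
    have : ∀ r ∈ Q, r = p := by
      intro r hr
      have e2 : r.2 = p.2 := le_antisymm ((hmax r hr).trans h) (hmin r hr)
      have r3 := (hQ r hr).2.2
      rw [e2] at r3
      rw [abs_le] at r3 p3
      ext
      · by_contra hne
        rcases lt_or_gt_of_ne hne with h | h
        · have : (r.1 : ℝ) + 1 ≤ p.1 := by exact_mod_cast h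
          linarith
        · have : (p.1 : ℝ) + 1 ≤ r.1 := by exact_mod_cast h
          linarith
      · exact e2
    have : Q.card ≤ ({p} : Finset (ℕ × ℕ)).card :=
      Finset.card_le_card fun r hr => Finset.mem_singleton.2 (this r hr)
    simp at this
    omega
  have hpqR : (p.2 : ℝ) + 1 ≤ q.2 := by exact_mod_cast hpq
  obtain ⟨ξ, hξ1, hξ2, hξ⟩ := cz_slope hd p1 (by linarith) q2 p3 q3
  have hξr : M ≤ ξ ∧ ξ ≤ 2 * M := ⟨p1.trans hξ1, hξ2.trans q2⟩
  have hξω := abs_le.1 (hω ξ hξr.1 hξr.2)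
  have hy : p.1 < q.1 := by
    have h1 := (abs_le.1 hξ).1
    have : (Γ + 2 * e - Γ) * 1 ≤ φ' ξ * ((q.2 : ℝ) - p.2) := by
      apply mul_le_mul <;> linarith
    have h2 : 2 * e < φ' ξ * ((q.2 : ℝ) - p.2) := by
      have : 2 * e < φ' ξ := by linarith
      calc 2 * e < φ' ξ * 1 := by linarith
        _ ≤ _ := by gcongr <;> linarith
    have : (p.1 : ℝ) < q.1 := by linarith
    exact_mod_cast this
  obtain ⟨dx, hdx⟩ : ∃ dx, dx = q.2 - p.2 := ⟨_, rfl⟩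
  obtain ⟨dy, hdy⟩ : ∃ dy, dy = q.1 - p.1 := ⟨_, rfl⟩
  have hdxR : (dx : ℝ) = q.2 - p.2 := by rw [hdx, Nat.cast_sub hpq.le]
  have hdyR : (dy : ℝ) = q.1 - p.1 := by rw [hdy, Nat.cast_sub hy.le]
  have hdxZ : (dx : ℤ) = q.2 - p.2 := by rw [hdx, Nat.cast_sub hpq.le]
  have hdyZ : (dy : ℤ) = q.1 - p.1 := by rw [hdy, Nat.cast_sub hy.le]
  have hdx0 : 0 < dx := by omega
  have hdy0 : 0 < dy := by omega
  have hgpos : 0 < Nat.gcd dy dx := Nat.gcd_pos_of_pos_left _ hdy0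
  obtain ⟨g, a, b, hg, hco, ha, hb⟩ := Nat.exists_coprime' (m := dy) (n := dx) hgpos
  have hb0 : 1 ≤ b := by
    rcases Nat.eq_zero_or_pos b with h | h
    · rw [h] at hb; omega
    · exact h
  have ha0 : 1 ≤ a := by
    rcases Nat.eq_zero_or_pos a with h | h
    · rw [h] at ha; omega
    · exact h
  have hdxg : (dx : ℝ) = ((g * b : ℕ) : ℝ) := by rw [hb, mul_comm]
  have hdx1 : (1 : ℝ) ≤ dx := by exact_mod_cast hdx0
  have hℓ := hI q hq p hp
  rw [abs_of_nonneg (by linarith), ← hdxR] at hℓ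
  have hℓ0 : 0 < ℓ := by linarith
  have hbR : (0 : ℝ) < b := by exact_mod_cast hb0
  have hgR : (0 : ℝ) < g := by exact_mod_cast hg
  have hsl : |φ' ξ - (a : ℝ) / b| ≤ 2 * e / ((g * b : ℕ) : ℝ) := by
    rw [← hdxg, le_div_iff₀ (by linarith)]
    have : (a : ℝ) / b = dy / dx := by
      rw [ha, hb]; push_cast; field_simp
    rw [this]
    calc |φ' ξ - dy / dx| * (dx : ℝ) = |φ' ξ - dy / dx| * |(dx : ℝ)| := by
          rw [abs_of_pos (by linarith : (0 : ℝ) < dx)]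
      _ = |dy - φ' ξ * dx| := by
          rw [← abs_mul, ← abs_neg]; congr 1
          have : (dx : ℝ) ≠ 0 := by linarith
          field_simp; ring
      _ ≤ _ := by rw [hdxR, hdyR]; exact hξ
  refine ⟨a, b, g, ξ, ?_, ha0, hb0, hg, hco, hdxg ▸ hℓ, hξr.1, hξr.2,
    ⟨p, hp, q, hq, hξ1, hξ2⟩, hsl, ?_⟩
  · have := cz_segment_count (Q := Q) (x₀ := p.2) (y₀ := p.1) (g := g) hb0 hco ?_ ?_
    · omega
    · intro r hr
      refine ⟨hmin r hr, ?_⟩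
      have := hmax r hr
      rw [mul_comm g b, ← hb]
      omega
    · intro r hr
      obtain ⟨r1, r2, r3⟩ := hQ r hr
      have hpr : (p.2 : ℝ) ≤ r.2 := by exact_mod_cast hmin r hr
      have hrq : (r.2 : ℝ) ≤ q.2 := by exact_mod_cast hmax r hr
      obtain ⟨ζ, hζ1, hζ2, hζ⟩ := cz_slope hd p1 hpr r2 p3 r3
      have hdd := (cz_deriv_diff hd' (l := 0) (L := Λ)
        (fun x h1 h2 => ⟨abs_nonneg _, hφ x h1 h2⟩) hξr
        ⟨p1.trans hζ1, (hζ2.trans hrq).trans q2⟩).2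
      have hξζ : |ξ - ζ| ≤ ℓ := by
        rw [abs_le]; constructor <;> linarith
      have hdd' : |φ' ξ - φ' ζ| ≤ Λ * ℓ := hdd.trans (by gcongr)
      have hdetR : |((r.2 : ℝ) - p.2) * dy - dx * ((r.1 : ℝ) - p.1)| < 1 := by
        have id : ((r.2 : ℝ) - p.2) * dy - dx * ((r.1 : ℝ) - p.1)
            = ((r.2 : ℝ) - p.2) * dx * (φ' ξ - φ' ζ)
              + ((r.2 : ℝ) - p.2) * ((q.1 - p.1 : ℝ) - φ' ξ * (q.2 - p.2))
              + (-dx) * (((r.1 : ℝ) - p.1) - φ' ζ * (r.2 - p.2)) := by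
          rw [hdxR, hdyR]; ring
        rw [id]
        have hu : |(r.2 : ℝ) - p.2| ≤ ℓ := by rw [abs_le]; constructor <;> linarith
        have hv : |(dx : ℝ)| ≤ ℓ := by rw [abs_of_nonneg (by linarith)]; exact hℓ
        calc _ ≤ _ := abs_add_three _ _ _
          _ ≤ ℓ * ℓ * (Λ * ℓ) + ℓ * (2 * e) + ℓ * (2 * e) := by
            rw [abs_mul, abs_mul, abs_mul, abs_mul, abs_neg]
            gcongr
          _ = Λ * ℓ ^ 3 + 4 * e * ℓ := by ring
          _ < 1 := hdet
      have hdetZ : ((r.2 : ℤ) - p.2) * dy - dx * ((r.1 : ℤ) - p.1) = 0 := by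
        rw [← Int.abs_lt_one_iff]
        exact_mod_cast hdetR
      rw [ha, hb] at hdetZ
      push_cast at hdetZ
      have hg0 : (g : ℤ) ≠ 0 := by positivity
      have : (g : ℤ) * (((r.2 : ℤ) - p.2) * a) = g * (b * ((r.1 : ℤ) - p.1)) := by linarith
      exact mul_left_cancel₀ hg0 this
  · have t := abs_sub_le (a / b : ℝ) (φ' ξ) ω
    rw [abs_sub_comm (a / b : ℝ) (φ' ξ)] at t
    have := hω ξ hξr.1 hξr.2
    linarith

set_option maxHeartbeats 1000000 in
/-- Lattice points near a curve, on consecutive intervals of length `ℓ`. The last part limits the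
number of intervals with the same slope `a/b`: between the outermost two, `φ'` varies by at most
`4e/s`, whereas the lower bound for `|φ''|` makes it vary by at least `l` times their distance. -/
theorem cz_geom {M ℓ e l Λ ω Γ : ℝ} {φ φ' φ'' : ℝ → ℝ} (P : Finset (ℕ × ℕ))
    (hℓ : 0 < ℓ) (he : 0 ≤ e) (he1 : 2 * e < 1) (hl : 0 ≤ l) (hΛ : 0 ≤ Λ)
    (hd : ∀ x, M ≤ x → x ≤ 2 * M → HasDerivAt φ (φ' x) x)
    (hd' : ∀ x, M ≤ x → x ≤ 2 * M → HasDerivAt φ' (φ'' x) x)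
    (hω : ∀ x, M ≤ x → x ≤ 2 * M → |φ' x - ω| ≤ Γ)
    (hφ : ∀ x, M ≤ x → x ≤ 2 * M → l ≤ |φ'' x| ∧ |φ'' x| ≤ Λ)
    (hdet : Λ * ℓ ^ 3 + 4 * e * ℓ < 1) (hpos : Γ + 2 * e < ω)
    (hP : ∀ p ∈ P, M ≤ (p.2 : ℝ) ∧ (p.2 : ℝ) ≤ 2 * M ∧ |(p.1 : ℝ) - φ p.2| ≤ e) :
    ∃ A B G : ℕ → ℕ,
      (∀ i, 2 ≤ (P.filter fun p => ⌊((p.2 : ℝ) - M) / ℓ⌋₊ = i).card →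
        (P.filter fun p => ⌊((p.2 : ℝ) - M) / ℓ⌋₊ = i).card ≤ 2 * G i ∧
        1 ≤ A i ∧ 1 ≤ B i ∧ 1 ≤ G i ∧ Nat.Coprime (A i) (B i) ∧ ((G i * B i : ℕ) : ℝ) ≤ ℓ ∧
        |(A i : ℝ) / B i - ω| ≤ Γ + 2 * e / ((G i * B i : ℕ) : ℝ)) ∧
      ∀ (a b : ℕ) (s : ℝ) (T : Finset ℕ), 0 < s →
        (∀ i ∈ T, 2 ≤ (P.filter fun p => ⌊((p.2 : ℝ) - M) / ℓ⌋₊ = i).card ∧ A i = a ∧ B i = b ∧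
          s ≤ ((G i * B i : ℕ) : ℝ)) →
        l * ℓ * s * ((T.card : ℝ) - 2) ≤ 4 * e := by
  have hin : ∀ i, ∀ p ∈ P.filter (fun p => ⌊((p.2 : ℝ) - M) / ℓ⌋₊ = i),
      i * ℓ ≤ (p.2 : ℝ) - M ∧ (p.2 : ℝ) - M < (i + 1) * ℓ := by
    intro i p hp
    rw [Finset.mem_filter] at hp
    have h0 : 0 ≤ ((p.2 : ℝ) - M) / ℓ := div_nonneg (by linarith [(hP p hp.1).1]) hℓ.le
    have h1 := Nat.floor_le h0
    have h2 := Nat.lt_floor_add_one (((p.2 : ℝ) - M) / ℓ)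
    rw [hp.2] at h1 h2
    rw [le_div_iff₀ hℓ] at h1
    rw [div_lt_iff₀ hℓ] at h2
    exact ⟨h1, h2⟩
  have main : ∀ i, ∃ a b g : ℕ, ∃ ξ : ℝ,
      2 ≤ (P.filter fun p => ⌊((p.2 : ℝ) - M) / ℓ⌋₊ = i).card →
      ((P.filter fun p => ⌊((p.2 : ℝ) - M) / ℓ⌋₊ = i).card ≤ 2 * g ∧ 1 ≤ a ∧ 1 ≤ b ∧ 1 ≤ g ∧
      Nat.Coprime a b ∧ ((g * b : ℕ) : ℝ) ≤ ℓ ∧ M ≤ ξ ∧ ξ ≤ 2 * M ∧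
      (∃ p ∈ P.filter (fun p => ⌊((p.2 : ℝ) - M) / ℓ⌋₊ = i),
        ∃ q ∈ P.filter (fun p => ⌊((p.2 : ℝ) - M) / ℓ⌋₊ = i), (p.2 : ℝ) ≤ ξ ∧ ξ ≤ q.2) ∧
      |φ' ξ - (a : ℝ) / b| ≤ 2 * e / ((g * b : ℕ) : ℝ) ∧
      |(a : ℝ) / b - ω| ≤ Γ + 2 * e / ((g * b : ℕ) : ℝ)) := by
    intro i
    by_cases hc : 2 ≤ (P.filter fun p => ⌊((p.2 : ℝ) - M) / ℓ⌋₊ = i).card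
    · obtain ⟨a, b, g, ξ, h⟩ := cz_geom_one _ he he1 hΛ hd hd' hω (fun x h1 h2 => (hφ x h1 h2).2)
        hdet hpos (fun p hp => hP p (Finset.mem_of_mem_filter p hp)) (fun p hp q hq => by
          have := hin i p hp
          have := hin i q hq
          rw [abs_le]; constructor <;> linarith) hc
      exact ⟨a, b, g, ξ, fun _ => h⟩
    · exact ⟨0, 0, 0, 0, fun h => absurd h hc⟩
  choose A B G ξ hm using main
  refine ⟨A, B, G, fun i hi => ?_, ?_⟩
  · obtain ⟨k1, k2, k3, k4, k5, k6, -, -, -, -, k7⟩ := hm i hi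
    exact ⟨k1, k2, k3, k4, k5, k6, k7⟩
  · intro a b s T hs hT
    rcases T.eq_empty_or_nonempty with h | h
    · subst h
      simp only [Finset.card_empty, Nat.cast_zero]
      have : 0 ≤ l * ℓ * s := by positivity
      linarith
    obtain ⟨i, hi, hmin⟩ := Finset.exists_min_image T id h
    obtain ⟨j, hj, hmax⟩ := Finset.exists_max_image T id h
    simp only [id] at hmin hmax
    have hcard : (T.card : ℝ) ≤ (j : ℝ) + 1 - i := by
      have h1 : T.card ≤ (Finset.Icc i j).card :=
        Finset.card_le_card fun x hx => Finset.mem_Icc.2 ⟨hmin x hx, hmax x hx⟩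
      rw [Nat.card_Icc] at h1
      have h2 : i ≤ j := hmin j hj
      have : ((j + 1 - i : ℕ) : ℝ) = (j : ℝ) + 1 - i := by
        rw [Nat.cast_sub (by omega)]; push_cast; ring
      rw [← this]; exact_mod_cast h1
    obtain ⟨ci, ai, bi, si⟩ := hT i hi
    obtain ⟨cj, aj, bj, sj⟩ := hT j hj
    obtain ⟨-, -, -, -, -, -, xi1, xi2, ⟨p, hp, p', hp', xi3, xi4⟩, xi5, -⟩ := hm i ci
    obtain ⟨-, -, -, -, -, -, xj1, xj2, ⟨q, hq, q', hq', xj3, xj4⟩, xj5, -⟩ := hm j cj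
    have b1 : 2 * e / ((G i * B i : ℕ) : ℝ) ≤ 2 * e / s := by gcongr
    have b2 : 2 * e / ((G j * B j : ℕ) : ℝ) ≤ 2 * e / s := by gcongr
    rw [ai, bi] at xi5
    rw [aj, bj] at xj5
    -- On the outermost intervals `i` and `j`, `φ'` comes close to the same fraction `a/b`.
    have hdd : |φ' (ξ j) - φ' (ξ i)| ≤ 4 * e / s := by
      have t := abs_sub_le (φ' (ξ j)) ((a : ℝ) / b) (φ' (ξ i))
      rw [abs_sub_comm ((a : ℝ) / b) (φ' (ξ i))] at t
      have : 4 * e / s = 2 * e / s + 2 * e / s := by ring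
      rw [bj] at b2
      rw [bi] at b1
      linarith
    have hlow := (cz_deriv_diff hd' (l := l) (L := Λ) hφ ⟨xj1, xj2⟩ ⟨xi1, xi2⟩).1
    have d1 := hin i p' hp'
    have d2 := hin j q hq
    have hspan : ℓ * ((T.card : ℝ) - 2) ≤ |ξ j - ξ i| := by
      refine le_trans ?_ (le_abs_self _)
      have : ℓ * ((T.card : ℝ) - 2) ≤ ℓ * ((j : ℝ) + 1 - i - 2) := by gcongr
      linarith [d1.2, d2.1]
    calc l * ℓ * s * ((T.card : ℝ) - 2) = s * (l * (ℓ * ((T.card : ℝ) - 2))) := by ring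
      _ ≤ s * (l * |ξ j - ξ i|) := by gcongr
      _ ≤ s * (4 * e / s) := by gcongr; exact hlow.trans hdd
      _ = 4 * e := by field_simp

/-! ### Counting quadruples -/

/-- The range of the quadruples `((h₁, h̃₁), (h₂, h̃₂))`. -/
def czQ (H₁ H₂ : ℕ) : Finset ((ℕ × ℕ) × (ℕ × ℕ)) :=
  (Finset.Ico H₁ (2 * H₁) ×ˢ Finset.Ico H₁ (2 * H₁)) ×ˢ
    (Finset.Ico H₂ (2 * H₂) ×ˢ Finset.Ico H₂ (2 * H₂))

/-- The leading ratio `ω = (h̃₁h̃₂ / h₁h₂)^{1/(α-2)}` of a quadruple. -/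
noncomputable def czω (α : ℝ) (q : (ℕ × ℕ) × (ℕ × ℕ)) : ℝ :=
  (((q.1.2 : ℝ) * q.2.2) / ((q.1.1 : ℝ) * q.2.1)) ^ (1 / (α - 2))

/-- The curvature parameter `κ = (h̃₁² + h̃₂²) - (h₁² + h₂²)/ω²` of a quadruple: the curve attached to
it has curvature of exact order `|κ|/M³`. -/
noncomputable def czκ (α : ℝ) (q : (ℕ × ℕ) × (ℕ × ℕ)) : ℝ :=
  ((q.1.2 : ℝ) ^ 2 + (q.2.2 : ℝ) ^ 2) - ((q.1.1 : ℝ) ^ 2 + (q.2.1 : ℝ) ^ 2) / czω α q ^ 2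

theorem cz_mem_Q {H₁ H₂ : ℕ} {q : (ℕ × ℕ) × (ℕ × ℕ)} (hq : q ∈ czQ H₁ H₂) :
    ((H₁ : ℝ) ≤ q.1.1 ∧ (q.1.1 : ℝ) ≤ 2 * H₁) ∧ ((H₁ : ℝ) ≤ q.1.2 ∧ (q.1.2 : ℝ) ≤ 2 * H₁) ∧
    ((H₂ : ℝ) ≤ q.2.1 ∧ (q.2.1 : ℝ) ≤ 2 * H₂) ∧ ((H₂ : ℝ) ≤ q.2.2 ∧ (q.2.2 : ℝ) ≤ 2 * H₂) := by
  simp only [czQ, Finset.mem_product, Finset.mem_Ico] at hq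
  obtain ⟨⟨⟨a1, a2⟩, a3, a4⟩, ⟨b1, b2⟩, b3, b4⟩ := hq
  refine ⟨⟨?_, ?_⟩, ⟨?_, ?_⟩, ⟨?_, ?_⟩, ?_, ?_⟩ <;> norm_cast <;> omega

/-- Coprime fractions with denominators at most `Y` are `1/Y²`-spaced. -/
theorem cz_count_frac (ω τ : ℝ) {Y : ℝ} (hY : 1 ≤ Y) (hτ : 0 ≤ τ) (S : Finset (ℕ × ℕ))
    (hS : ∀ p ∈ S, Nat.Coprime p.1 p.2 ∧ 1 ≤ p.2 ∧ (p.2 : ℝ) ≤ Y ∧ |(p.1 : ℝ) / p.2 - ω| ≤ τ) :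
    (S.card : ℝ) ≤ 2 * (1 + τ * Y ^ 2) := by
  have := cz_card_le_of_spaced S (fun p => (p.1 : ℝ) / p.2) (d := 1 / Y ^ 2) (a := ω - τ)
    (b := ω + τ) (by positivity) (by linarith) (fun p hp => by
      have := abs_le.1 (hS p hp).2.2.2
      constructor <;> linarith) (fun p hp q hq hpq => by
      obtain ⟨p1, p2, p3, -⟩ := hS p hp
      obtain ⟨q1, q2, q3, -⟩ := hS q hq
      exact cz_frac_spaced p2 q2 p3 q3 p1 q1 hpq)
  refine this.trans (le_of_eq_of_le (b := 2 * τ * Y ^ 2 + 1) ?_ ?_)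
  · field_simp; ring
  · nlinarith

set_option maxHeartbeats 1000000 in
/-- The number of quadruples with small curvature. For `a = h̃₁/h₁` and `b = h̃₂/h₂`, dropping `h₁²`
and `h̃₁²` from `κ` costs a relative error `(H₁/H₂)²`, and what remains is
`b^{2+2γ} ≈ a^{-2γ}` with `γ = 1/(α-2)`. As `γ/(1 + γ) = 1/(α-1)`, this is
`a^{1/(α-1)} ≈ 1/b`, and `cz_FI` applies. -/
theorem cz_FI_one {α : ℝ} (h1 : α ≠ 1) (h2 : α ≠ 2) :
    ∃ C > 0, ∀ (H₁ H₂ : ℕ) (μ : ℝ), 1 ≤ H₁ → 1 ≤ H₂ → 0 ≤ μ →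
      (((czQ H₁ H₂).filter fun q => |czκ α q| ≤ μ * (H₂ : ℝ) ^ 2).card : ℝ) ≤
        C * ((1 + Real.log (2 * H₁)) * (1 + Real.log (2 * H₂))) *
          (((H₁ : ℝ) * H₂) ^ 2 * (1 / ((H₁ : ℝ) * H₂) + μ + ((H₁ : ℝ) / H₂) ^ 2)) := by
  set γ := 1 / (α - 2) with hγ
  set θ := 1 / (α - 1) with hθ
  have hα1 : α - 1 ≠ 0 := sub_ne_zero.2 h1
  have hα2 : α - 2 ≠ 0 := sub_ne_zero.2 h2
  have hγ1 : 2 + 2 * γ ≠ 0 := by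
    have : 2 + 2 * γ = 2 * (α - 1) / (α - 2) := by rw [hγ]; field_simp; ring
    rw [this]; exact div_ne_zero (mul_ne_zero two_ne_zero hα1) hα2
  obtain ⟨CF, hCF, hFI⟩ := cz_FI (θ := θ) (one_div_ne_zero hα1)
  set V : ℝ := 4 ^ |2 * γ| * 4 ^ |2 + 2 * γ| with hV
  have hV1 : 1 ≤ (4 : ℝ) ^ |2 * γ| := Real.one_le_rpow (by norm_num) (abs_nonneg _)
  have hV2 : 1 ≤ (4 : ℝ) ^ |2 + 2 * γ| := Real.one_le_rpow (by norm_num) (abs_nonneg _)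
  have hV3 : (4 : ℝ) ^ |2 * γ| ≤ V := le_mul_of_one_le_right (by linarith) hV2
  have hV4 : (4 : ℝ) ^ |2 + 2 * γ| ≤ V := le_mul_of_one_le_left (by linarith) hV1
  have hVpos : 0 < V := by positivity
  obtain ⟨CL, hCL, hlip⟩ := cz_rpow_lip (lo := V⁻¹) (hi := V) (-(1 / (2 + 2 * γ))) (by positivity)
  set C1 := CL * (V * (4 + 4 * V)) with hC1
  refine ⟨CF * (4 + 16 * C1), by positivity, ?_⟩
  intro H₁ H₂ μ hH1 hH2 hμ
  have hH1R : (1 : ℝ) ≤ H₁ := by exact_mod_cast hH1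
  have hH2R : (1 : ℝ) ≤ H₂ := by exact_mod_cast hH2
  set S := (czQ H₁ H₂).filter fun q => |czκ α q| ≤ μ * (H₂ : ℝ) ^ 2 with hS
  set τ := C1 * (μ + ((H₁ : ℝ) / H₂) ^ 2) with hτ
  have hinj : Function.Injective
      (fun q : (ℕ × ℕ) × (ℕ × ℕ) => ((q.1.2, q.1.1), q.2)) := by
    rintro ⟨⟨a, b⟩, c⟩ ⟨⟨a', b'⟩, c'⟩ h
    simp only [Prod.mk.injEq] at h ⊢
    tauto
  have hcard : (S.card : ℝ) = (S.image fun q => ((q.1.2, q.1.1), q.2)).card := by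
    rw [Finset.card_image_of_injective _ hinj]
  rw [hcard]
  refine (hFI (2 * H₁) (2 * H₂) τ (by linarith) (by linarith) (by positivity) _ ?_).trans ?_
  · intro s hs
    obtain ⟨q, hq, rfl⟩ := Finset.mem_image.1 hs
    rw [hS, Finset.mem_filter] at hq
    obtain ⟨hqQ, hκ⟩ := hq
    have hN := hqQ
    simp only [czQ, Finset.mem_product, Finset.mem_Ico] at hN
    obtain ⟨⟨a1, a2⟩, ⟨a3, a4⟩, ⟨b1, b2⟩, b3, b4⟩ := cz_mem_Q hqQ
    dsimp only
    refine ⟨⟨by omega, a4⟩, ⟨by omega, a2⟩, ⟨by omega, b2⟩, ⟨by omega, b4⟩, by omega, by omega, ?_⟩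
    obtain ⟨h, hh⟩ : ∃ h : ℝ, h = q.1.1 := ⟨_, rfl⟩
    obtain ⟨h', hh'⟩ : ∃ h : ℝ, h = q.1.2 := ⟨_, rfl⟩
    obtain ⟨k, hk⟩ : ∃ h : ℝ, h = q.2.1 := ⟨_, rfl⟩
    obtain ⟨k', hk'⟩ : ∃ h : ℝ, h = q.2.2 := ⟨_, rfl⟩
    have hκe : czκ α q = (h' ^ 2 + k' ^ 2) - (h ^ 2 + k ^ 2) / (((h' * k') / (h * k)) ^ γ) ^ 2 := by
      rw [czκ, czω, hh, hh', hk, hk']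
    rw [hκe] at hκ
    rw [← hh] at a1 a2
    rw [← hh'] at a3 a4
    rw [← hk] at b1 b2
    rw [← hk'] at b3 b4
    rw [← hh, ← hh', ← hk, ← hk']
    clear hN hκe hqQ hs hcard hS
    have h0 : 0 < h := by linarith
    have h0' : 0 < h' := by linarith
    have k0 : 0 < k := by linarith
    have k0' : 0 < k' := by linarith
    obtain ⟨a, ha⟩ : ∃ a, a = h' / h := ⟨_, rfl⟩
    obtain ⟨b, hb⟩ : ∃ b, b = k' / k := ⟨_, rfl⟩
    have a0 : 0 < a := by rw [ha]; positivity
    have b0 : 0 < b := by rw [hb]; positivity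
    have ar : (4 : ℝ)⁻¹ ≤ a ∧ a ≤ 4 := by
      rw [ha, le_div_iff₀ h0, div_le_iff₀ h0]; constructor <;> linarith
    have br : (4 : ℝ)⁻¹ ≤ b ∧ b ≤ 4 := by
      rw [hb, le_div_iff₀ k0, div_le_iff₀ k0]; constructor <;> linarith
    have hω : ((h' * k') / (h * k)) ^ γ = a ^ γ * b ^ γ := by
      rw [← Real.mul_rpow a0.le b0.le, ha, hb]; congr 1; field_simp
    have sq : ∀ x : ℝ, 0 < x → (x ^ γ) ^ 2 = x ^ (2 * γ) := fun x hx => by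
      rw [← Real.rpow_natCast, ← Real.rpow_mul hx.le]; congr 1; push_cast; ring
    rw [hω, mul_pow, sq a a0, sq b b0] at hκ
    obtain ⟨ra1, ra2⟩ := cz_rpow_range (2 * γ) (by norm_num) ar.1 ar.2
    obtain ⟨rb1, rb2⟩ := cz_rpow_range (2 * γ) (by norm_num) br.1 br.2
    obtain ⟨rc1, rc2⟩ := cz_rpow_range (2 + 2 * γ) (by norm_num) br.1 br.2
    set P := a ^ (2 * γ)
    set Qb := b ^ (2 * γ)
    have P0 : 0 < P := Real.rpow_pos_of_pos a0 _
    have Q0 : 0 < Qb := Real.rpow_pos_of_pos b0 _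
    have Pi : P⁻¹ ≤ V := (inv_le_of_inv_le₀ (by positivity) ra1).trans hV3
    have QV : Qb ≤ V := rb2.trans hV3
    have hb2 : b ^ (2 + 2 * γ) = b ^ 2 * Qb := by
      rw [Real.rpow_add b0]; congr 1; exact Real.rpow_natCast b 2
    -- The first term is `κ` up to a bounded factor; the other two are `O(H₁²)`.
    have e1 : b ^ (2 + 2 * γ) - P⁻¹ = ((h' ^ 2 + k' ^ 2 - (h ^ 2 + k ^ 2) / (P * Qb)) * Qb
        - h' ^ 2 * Qb + h ^ 2 * P⁻¹) / k ^ 2 := by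
      rw [hb2, hb]; field_simp; ring
    have bd : |b ^ (2 + 2 * γ) - P⁻¹| ≤ V * (4 + 4 * V) * (μ + ((H₁ : ℝ) / H₂) ^ 2) := by
      rw [e1, abs_div, abs_of_pos (by positivity : 0 < k ^ 2), div_le_iff₀ (by positivity)]
      have t1 : |(h' ^ 2 + k' ^ 2 - (h ^ 2 + k ^ 2) / (P * Qb)) * Qb| ≤ μ * H₂ ^ 2 * V := by
        rw [abs_mul, abs_of_pos Q0]; gcongr
      have t2 : |h' ^ 2 * Qb| ≤ (2 * H₁) ^ 2 * V := by
        rw [abs_of_pos (by positivity)]; gcongr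
      have t3 : |h ^ 2 * P⁻¹| ≤ (2 * H₁) ^ 2 * V := by
        rw [abs_of_pos (by positivity)]; gcongr
      have t4 := abs_add_le ((h' ^ 2 + k' ^ 2 - (h ^ 2 + k ^ 2) / (P * Qb)) * Qb
        - h' ^ 2 * Qb) (h ^ 2 * P⁻¹)
      have t5 := abs_sub ((h' ^ 2 + k' ^ 2 - (h ^ 2 + k ^ 2) / (P * Qb)) * Qb) (h' ^ 2 * Qb)
      have V1 : 1 ≤ V := hV1.trans hV3
      calc _ ≤ μ * H₂ ^ 2 * V + (2 * H₁) ^ 2 * V + (2 * H₁) ^ 2 * V := by linarith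
        _ = V * (μ * H₂ ^ 2 + 8 * H₁ ^ 2) := by ring
        _ ≤ V * ((4 + 4 * V) * (μ * H₂ ^ 2 + H₁ ^ 2)) := by
          gcongr
          have z1 : 0 ≤ μ * (H₂ : ℝ) ^ 2 := by positivity
          have z2 : 0 ≤ (H₁ : ℝ) ^ 2 := by positivity
          calc μ * (H₂ : ℝ) ^ 2 + 8 * H₁ ^ 2 ≤ 8 * (μ * H₂ ^ 2 + H₁ ^ 2) := by linarith
            _ ≤ _ := by gcongr; linarith
        _ = V * (4 + 4 * V) * (μ + ((H₁ : ℝ) / H₂) ^ 2) * H₂ ^ 2 := by field_simp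
        _ ≤ _ := by gcongr
    have fin := hlip (b ^ (2 + 2 * γ)) P⁻¹ ((inv_anti₀ (by positivity) hV4).trans rc1)
      (rc2.trans hV4) (inv_anti₀ P0 (ra2.trans hV3)) Pi
    have f1 : (b ^ (2 + 2 * γ)) ^ (-(1 / (2 + 2 * γ))) = k / k' := by
      rw [← Real.rpow_mul b0.le, mul_neg, mul_one_div_cancel hγ1, Real.rpow_neg_one, hb, inv_div]
    have f2 : P⁻¹ ^ (-(1 / (2 + 2 * γ))) = a ^ θ := by
      have : P⁻¹ = a ^ (-(2 * γ)) := (Real.rpow_neg a0.le _).symm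
      rw [this, ← Real.rpow_mul a0.le]; congr 1
      have : 2 + 2 * γ = 2 * (α - 1) / (α - 2) := by rw [hγ]; field_simp; ring
      rw [this, hγ, hθ]; field_simp
    rw [f1, f2, abs_sub_comm, ha] at fin
    refine fin.trans ?_
    rw [hτ, hC1, mul_assoc CL]
    gcongr
  · have l1 : 0 ≤ Real.log (2 * H₁) := Real.log_nonneg (by linarith)
    have l2 : 0 ≤ Real.log (2 * H₂) := Real.log_nonneg (by linarith)
    have C10 : 0 ≤ C1 := by positivity
    have key : (2 * (H₁ : ℝ)) * (2 * H₂) + τ * ((2 * (H₁ : ℝ)) ^ 2 * (2 * H₂) ^ 2)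
        ≤ (4 + 16 * C1) * (((H₁ : ℝ) * H₂) ^ 2 *
          (1 / ((H₁ : ℝ) * H₂) + μ + ((H₁ : ℝ) / H₂) ^ 2)) := by
      have e : ((H₁ : ℝ) * H₂) ^ 2 * (1 / ((H₁ : ℝ) * H₂) + μ + ((H₁ : ℝ) / H₂) ^ 2)
          = (H₁ : ℝ) * H₂ + ((H₁ : ℝ) * H₂) ^ 2 * (μ + ((H₁ : ℝ) / H₂) ^ 2) := by
        field_simp; ring
      rw [e, hτ]
      have z1 : 0 ≤ (H₁ : ℝ) * H₂ := by positivity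
      have z2 : 0 ≤ ((H₁ : ℝ) * H₂) ^ 2 * (μ + ((H₁ : ℝ) / H₂) ^ 2) := by positivity
      have z3 := mul_nonneg C10 z1
      linarith
    refine (mul_le_mul_of_nonneg_left key (by positivity)).trans (le_of_eq ?_)
    ring

theorem cz_log_le {η : ℝ} (hη : 0 < η) {x : ℝ} (hx : 1 ≤ x) :
    1 + Real.log x ≤ (1 + 1 / η) * x ^ η := by
  have h1 := Real.log_le_rpow_div (zero_le_one.trans hx) hη
  have h2 := Real.one_le_rpow hx hη.le
  have : (1 + 1 / η) * x ^ η = x ^ η + x ^ η / η := by ring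
  linarith

set_option maxHeartbeats 1000000 in
/-- The number of pairs of a quadruple and a fraction close to its `ω`. As `ω` depends only on
the products `h̃₁h̃₂` and `h₁h₂`, `cz_FI` applies to these; each pair of products comes from few
quadruples, by the divisor bound. -/
theorem cz_FI_two {α : ℝ} (h2 : α ≠ 2) {η : ℝ} (hη : 0 < η) :
    ∃ C > 0, ∀ (H₁ H₂ : ℕ) (Y τ : ℝ) (S : Finset (((ℕ × ℕ) × (ℕ × ℕ)) × (ℕ × ℕ))),
      1 ≤ H₁ → 1 ≤ H₂ → 1 ≤ Y → 0 ≤ τ → τ ≤ 1 →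
      (∀ s ∈ S, s.1 ∈ czQ H₁ H₂ ∧ 1 ≤ s.2.1 ∧ 1 ≤ s.2.2 ∧ (s.2.2 : ℝ) ≤ Y ∧
        |(s.2.1 : ℝ) / s.2.2 - czω α s.1| ≤ τ) →
      (S.card : ℝ) ≤ C * (((H₁ : ℝ) * H₂ * Y) ^ (3 * η)) *
          ((H₁ : ℝ) * H₂ * Y + τ * ((H₁ : ℝ) * H₂ * Y) ^ 2) := by
  have hα2 : α - 2 ≠ 0 := sub_ne_zero.2 h2
  set γ := 1 / (α - 2) with hγ
  obtain ⟨CF, hCF, hFI⟩ := cz_FI (θ := γ) (one_div_ne_zero hα2)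
  obtain ⟨CD, hCD, hdiv⟩ := cz_divisor_bound hη
  set W : ℝ := 4 ^ |γ| + 1 with hW
  have hW1 : 1 ≤ W := by have : (0:ℝ) ≤ 4 ^ |γ| := by positivity
                         linarith
  refine ⟨CF * ((1 + 1 / η) * 4 ^ η) * ((1 + 1 / η) * W ^ η) * (4 * W) ^ 2 *
    (CD * 4 ^ η) ^ 2, by positivity, ?_⟩
  intro H₁ H₂ Y τ S hH1 hH2 hY hτ hτ1 hS
  have hH1R : (1 : ℝ) ≤ H₁ := by exact_mod_cast hH1
  have hH2R : (1 : ℝ) ≤ H₂ := by exact_mod_cast hH2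
  set R : ℝ := (H₁ : ℝ) * H₂ with hR
  have hR1 : 1 ≤ R := one_le_mul_of_one_le_of_one_le hH1R hH2R
  classical
  set f : ((ℕ × ℕ) × (ℕ × ℕ)) × (ℕ × ℕ) → (ℕ × ℕ) × (ℕ × ℕ) :=
    fun s => ((s.1.1.2 * s.1.2.2, s.1.1.1 * s.1.2.1), s.2) with hf
  -- A pair of products determines the quadruple up to the choice of a divisor of each product.
  have hfib := cz_card_le_mul_fiber S f (S.image f) (fun x hx => Finset.mem_image_of_mem f hx)
    ((CD * (4 * R) ^ η) ^ 2) (by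
      intro b hb
      obtain ⟨s₀, hs₀, rfl⟩ := Finset.mem_image.1 hb
      have hQ := (hS s₀ hs₀).1
      obtain ⟨⟨a1, a2⟩, ⟨a3, a4⟩, ⟨b1, b2⟩, b3, b4⟩ := cz_mem_Q hQ
      have hsub : ((S.filter fun x => f x = f s₀).card) ≤
          ((s₀.1.1.1 * s₀.1.2.1).divisors ×ˢ (s₀.1.1.2 * s₀.1.2.2).divisors).card := by
        have n1 : s₀.1.1.1 * s₀.1.2.1 ≠ 0 := by
          have : (0 : ℝ) < (s₀.1.1.1 * s₀.1.2.1 : ℕ) := by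
            push_cast; exact mul_pos (by linarith) (by linarith)
          exact_mod_cast this.ne'
        have n2 : s₀.1.1.2 * s₀.1.2.2 ≠ 0 := by
          have : (0 : ℝ) < (s₀.1.1.2 * s₀.1.2.2 : ℕ) := by
            push_cast; exact mul_pos (by linarith) (by linarith)
          exact_mod_cast this.ne'
        refine Finset.card_le_card_of_injOn (fun x => (x.1.1.1, x.1.1.2)) ?_ ?_
        · intro x hx
          have hx := (Finset.mem_filter.1 (Finset.mem_coe.1 hx)).2
          simp only [hf, Prod.mk.injEq] at hx
          simp only [Finset.coe_product, Set.mem_prod, Finset.mem_coe, Nat.mem_divisors]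
          exact ⟨⟨hx.1.2 ▸ dvd_mul_right _ _, n1⟩, hx.1.1 ▸ dvd_mul_right _ _, n2⟩
        · intro x hx y hy hxy
          have hx := (Finset.mem_filter.1 (Finset.mem_coe.1 hx)).2
          have hy := (Finset.mem_filter.1 (Finset.mem_coe.1 hy)).2
          simp only [hf, Prod.mk.injEq] at hx hy hxy
          obtain ⟨⟨x1, x2⟩, x3⟩ := hx
          obtain ⟨⟨y1, y2⟩, y3⟩ := hy
          obtain ⟨e1, e2⟩ := hxy
          have p1 : 0 < x.1.1.1 := Nat.pos_of_ne_zero fun h => n1 (by rw [← x2, h, zero_mul])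
          have p2 : 0 < x.1.1.2 := Nat.pos_of_ne_zero fun h => n2 (by rw [← x1, h, zero_mul])
          have q1 : x.1.2.1 = y.1.2.1 := Nat.eq_of_mul_eq_mul_left p1 (by
            rw [x2, ← y2, e1])
          have q2 : x.1.2.2 = y.1.2.2 := Nat.eq_of_mul_eq_mul_left p2 (by
            rw [x1, ← y1, e2])
          exact Prod.ext (Prod.ext (Prod.ext e1 e2) (Prod.ext q1 q2)) (x3.trans y3.symm)
      rw [Finset.card_product] at hsub
      have dv : ∀ u v : ℕ, (H₁ : ℝ) ≤ u → (u : ℝ) ≤ 2 * H₁ → (H₂ : ℝ) ≤ v → (v : ℝ) ≤ 2 * H₂ →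
          ((u * v).divisors.card : ℝ) ≤ CD * (4 * R) ^ η := by
        intro u v u1 u2 v1 v2
        have n1 : u * v ≠ 0 := by
          have : (0 : ℝ) < (u * v : ℕ) := by
            push_cast; exact mul_pos (by linarith) (by linarith)
          exact_mod_cast this.ne'
        refine (hdiv _ n1).trans ?_
        gcongr
        push_cast
        calc (u : ℝ) * v ≤ (2 * H₁) * (2 * H₂) := by gcongr
          _ = 4 * R := by rw [hR]; ring
      have hsubR : ((S.filter fun x => f x = f s₀).card : ℝ) ≤
          ((s₀.1.1.1 * s₀.1.2.1).divisors.card : ℝ) * (s₀.1.1.2 * s₀.1.2.2).divisors.card := by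
        exact_mod_cast hsub
      refine hsubR.trans ?_
      calc ((s₀.1.1.1 * s₀.1.2.1).divisors.card : ℝ) * (s₀.1.1.2 * s₀.1.2.2).divisors.card
          ≤ (CD * (4 * R) ^ η) * (CD * (4 * R) ^ η) := by
            gcongr
            · exact dv _ _ a1 a2 b1 b2
            · exact dv _ _ a3 a4 b3 b4
        _ = _ := by ring)
  have hW0 : 0 < W := by linarith
  have hWY : 1 ≤ W * Y := one_le_mul_of_one_le_of_one_le hW1 hY
  have hI := hFI (4 * R) (W * Y) τ (by linarith) hWY hτ (S.image f) (by
    intro s hs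
    obtain ⟨x, hx, rfl⟩ := Finset.mem_image.1 hs
    obtain ⟨hQ, c1, c2, c3, c4⟩ := hS x hx
    obtain ⟨⟨a1, a2⟩, ⟨a3, a4⟩, ⟨b1, b2⟩, b3, b4⟩ := cz_mem_Q hQ
    have hγe : czω α x.1 = (((x.1.1.2 * x.1.2.2 : ℕ) : ℝ) / ((x.1.1.1 * x.1.2.1 : ℕ) : ℝ)) ^ γ := by
      rw [czω, hγ]; push_cast; rfl
    obtain ⟨u, hu⟩ : ∃ u, u = x.1.1.2 * x.1.2.2 := ⟨_, rfl⟩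
    obtain ⟨v, hv⟩ : ∃ v, v = x.1.1.1 * x.1.2.1 := ⟨_, rfl⟩
    have hu' : (u : ℝ) = x.1.1.2 * x.1.2.2 := by rw [hu]; push_cast; ring
    have hv' : (v : ℝ) = x.1.1.1 * x.1.2.1 := by rw [hv]; push_cast; ring
    have hu1 : R ≤ u := by rw [hu', hR]; gcongr
    have hv1 : R ≤ v := by rw [hv', hR]; gcongr
    have hu2 : (u : ℝ) ≤ 4 * R := by
      rw [hu']
      calc (x.1.1.2 : ℝ) * x.1.2.2 ≤ (2 * H₁) * (2 * H₂) := by gcongr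
          _ = 4 * R := by rw [hR]; ring
    have hv2 : (v : ℝ) ≤ 4 * R := by
      rw [hv']
      calc (x.1.1.1 : ℝ) * x.1.2.1 ≤ (2 * H₁) * (2 * H₂) := by gcongr
          _ = 4 * R := by rw [hR]; ring
    have hu0 : (0 : ℝ) < u := by linarith
    have hv0 : (0 : ℝ) < v := by linarith
    rw [hγe, ← hu, ← hv] at c4
    simp only [hf]
    rw [← hu, ← hv]
    have hb0 : (0 : ℝ) < x.2.2 := by exact_mod_cast c2
    have rng := cz_rpow_range (K := 4) γ (by norm_num) (x := (u : ℝ) / v)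
      (by rw [le_div_iff₀ hv0]; linarith) (by rw [div_le_iff₀ hv0]; linarith)
    refine ⟨⟨by exact_mod_cast hu0, hu2⟩, ⟨by exact_mod_cast hv0, hv2⟩, ⟨c1, ?_⟩, ⟨c2, ?_⟩,
      ?_, ?_, ?_⟩
    · have := (abs_le.1 c4).2
      have h3 : (x.2.1 : ℝ) / x.2.2 ≤ W := by rw [hW]; linarith [rng.2]
      rw [div_le_iff₀ hb0] at h3
      exact h3.trans (by gcongr)
    · exact c3.trans (le_mul_of_one_le_left (by linarith) hW1)
    · exact_mod_cast (by linarith : (u : ℝ) ≤ 4 * v)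
    · exact_mod_cast (by linarith : (v : ℝ) ≤ 4 * u)
    · rw [abs_sub_comm]; exact c4)
  have l1 := cz_log_le hη (x := 4 * R) (by linarith)
  have l2 := cz_log_le hη hWY
  have l10 : 0 ≤ Real.log (4 * R) := Real.log_nonneg (by linarith)
  have l20 : 0 ≤ Real.log (W * Y) := Real.log_nonneg hWY
  have hR0 : 0 < R := by linarith
  have hY0 : 0 < Y := by linarith
  have key : 4 * R * (W * Y) + τ * ((4 * R) ^ 2 * (W * Y) ^ 2)
      ≤ (4 * W) ^ 2 * (R * Y + τ * (R * Y) ^ 2) := by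
    have z : 0 ≤ R * Y := by positivity
    have : 4 * W ≤ (4 * W) ^ 2 := by nlinarith
    nlinarith [mul_le_mul_of_nonneg_right this z]
  have Rη : (0:ℝ) < R ^ η := by positivity
  have Yη : (1:ℝ) ≤ Y ^ η := Real.one_le_rpow hY hη.le
  have pw : R ^ η * Y ^ η * (R ^ η) ^ 2 ≤ (R * Y) ^ (3 * η) := by
    have e : (R * Y) ^ (3 * η) = (R ^ η * Y ^ η) ^ 3 := by
      rw [← Real.mul_rpow hR0.le hY0.le, ← Real.rpow_natCast, ← Real.rpow_mul (by positivity)]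
      congr 1; push_cast; ring
    rw [e]
    calc R ^ η * Y ^ η * (R ^ η) ^ 2 ≤ R ^ η * Y ^ η * (R ^ η) ^ 2 * (Y ^ η) ^ 2 :=
          le_mul_of_one_le_right (by positivity) (one_le_pow₀ Yη)
      _ = _ := by ring
  refine hfib.trans ?_
  calc ((S.image f).card : ℝ) * (CD * (4 * R) ^ η) ^ 2
      ≤ (CF * (((1 + 1 / η) * (4 * R) ^ η) * ((1 + 1 / η) * (W * Y) ^ η)) *
        ((4 * W) ^ 2 * (R * Y + τ * (R * Y) ^ 2))) * (CD * (4 * R) ^ η) ^ 2 := by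
        gcongr
        refine hI.trans ?_
        gcongr
    _ = CF * ((1 + 1 / η) * 4 ^ η) * ((1 + 1 / η) * W ^ η) * (4 * W) ^ 2 *
        (CD * 4 ^ η) ^ 2 * (R ^ η * Y ^ η * (R ^ η) ^ 2) * (R * Y + τ * (R * Y) ^ 2) := by
        rw [Real.mul_rpow (by norm_num) hR0.le, Real.mul_rpow hW0.le hY0.le]; ring
    _ ≤ _ := by gcongr

/-! ### Summation over dyadic classes -/

set_option maxHeartbeats 2000000 in
/-- The inequality behind the treatment of one dyadic class. Here `N` is the size of the class
divided by `R² = (H₁H₂)²` and by a small power of `M`. The hypotheses `U1` and `U2` come from the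
counts of quadruples and of pairs (quadruple, slope), each with `O(K)` intervals. In `U3` the quantity `Y`
limits the number of intervals of a quadruple sharing a slope; when the curvature is too small for
this to be of use, the first alternative of `U3` holds. -/
theorem cz_class_ineq {C₀ M H₁ H₂ K ν μ b s N p x Y : ℝ} (hC : 1 ≤ C₀) (hM : 0 < M)
    (hH1 : 1 ≤ H₁) (hH : H₁ ≤ H₂) (hK : 0 < K) (hν : 0 < ν)
    (hcase : (ν = 1 ∧ H₂ ^ 2 ≤ K ^ 3) ∨ (ν ≤ 1 ∧ ν * H₂ ^ 2 = K ^ 3))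
    (hK2 : H₂ ≤ K ^ 2) (hνK : 1 ≤ ν * K) (hMR : M / (H₁ * H₂) ≤ ν * K)
    (hK6 : H₁ * H₂ ^ 3 ≤ K ^ 6) (hμ₀ : (H₁ / H₂) ^ 2 ≤ ν ^ 2) (hR : 1 / (H₁ * H₂) ≤ ν ^ 2)
    (hμ : 0 < μ) (hμν : μ ≤ C₀ * ν) (hb : 1 ≤ b) (hbs : b ≤ s) (hs : s * K ≤ M) (hN : 0 ≤ N)
    (hp : p = 1 / (H₁ * H₂) + μ + (H₁ / H₂) ^ 2)
    (hx : x = (μ * (H₂ / M) ^ 2 + K / (M * s)) * b ^ 2)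
    (hY : Y = M * K ^ 2 / (s * H₂ ^ 2 * μ))
    (U1 : N ≤ K * p) (U2 : N ≤ K * (b / (H₁ * H₂) + x))
    (U3 : (μ ≤ ν ^ 2 ∧ (C₀ + 2) * μ * H₂ ^ 2 ≤ 1) ∨
      (N ≤ (1 + Y) * (b / (H₁ * H₂) + x) ∧ N ≤ (1 + Y) * (p * (1 + x)))) :
    N * (s / b) ≤ 100 * (C₀ + 2) ^ 2 * (ν * K) := by
  obtain ⟨P, hP⟩ : ∃ P, P = C₀ + 2 := ⟨_, rfl⟩
  rw [← hP] at U3 ⊢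
  have hP3 : 3 ≤ P := by linarith
  have hH2 : 1 ≤ H₂ := hH1.trans hH
  have hb0 : 0 < b := by linarith
  have hs0 : 0 < s := by linarith
  have hν1 : ν ≤ 1 := by rcases hcase with h | h <;> linarith [h.1]
  have hνν : ν ^ 2 ≤ ν := pow_le_of_le_one hν.le hν1 two_ne_zero
  have h3ν : 3 * ν ^ 2 ≤ P * ν ^ 2 := by gcongr
  have hνK0 : 0 < ν * K := by positivity
  have hR0 : 0 < 1 / (H₁ * H₂) := by positivity
  have hμ₀0 : 0 ≤ (H₁ / H₂) ^ 2 := by positivity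
  have hp0 : 0 < p := by rw [hp]; positivity
  have hpν : p ≤ P * ν := by rw [hp, hP]; linarith
  have hμP : μ ≤ P * ν := by rw [hP]; linarith
  have hpP : p ≤ P := hpν.trans (mul_le_of_le_one_right (by linarith) hν1)
  have hx0 : 0 < x := by rw [hx]; positivity
  have hY0 : 0 < Y := by rw [hY]; positivity
  have hr0 : 0 < s / b := by positivity
  have hPP : P ≤ P ^ 2 := le_self_pow₀ (by linarith) two_ne_zero
  have hPP1 : 1 ≤ P ^ 2 := by linarith
  have fin : ∀ c : ℝ, c ≤ 100 * P ^ 2 → c * (ν * K) ≤ 100 * P ^ 2 * (ν * K) := fun c hc => by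
    gcongr
  rcases le_total x (b / (H₁ * H₂)) with hA | hB
  · -- the contribution of the diagonal term of the second count
    have : N * (s / b) ≤ 2 * (M / (H₁ * H₂)) := by
      calc N * (s / b) ≤ (K * (b / (H₁ * H₂) + b / (H₁ * H₂))) * (s / b) := by
            gcongr; exact U2.trans (by gcongr)
        _ = 2 * ((s * K) / (H₁ * H₂)) := by field_simp; ring
        _ ≤ _ := by gcongr
    refine this.trans (le_trans ?_ (fin 2 (by linarith)))
    linarith
  have U2' : N ≤ K * (2 * x) := U2.trans (by gcongr; linarith)
  have hδ : (H₂ / M) ^ 2 * s ^ 2 * K ^ 2 ≤ H₂ ^ 2 := by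
    calc (H₂ / M) ^ 2 * s ^ 2 * K ^ 2 = (H₂ / M) ^ 2 * (s * K) ^ 2 := by ring
      _ ≤ (H₂ / M) ^ 2 * M ^ 2 := by gcongr
      _ = H₂ ^ 2 := by field_simp
  have hN2 : N ^ 2 ≤ K ^ 2 * (2 * x * p) := by
    calc N ^ 2 = N * N := sq N
      _ ≤ (K * p) * (K * (2 * x)) := by gcongr
      _ = _ := by ring
  -- square-root interpolation between the first two counts
  have interp : x * p * (s / b) ^ 2 ≤ 2 * P * ν ^ 2 →
      N * (s / b) ≤ 100 * P ^ 2 * (ν * K) := by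
    intro h
    refine ((le_abs_self _).trans (abs_le_of_sq_le_sq (b := 4 * P * (ν * K)) ?_ (by positivity))).trans
      (fin (4 * P) (by linarith))
    calc (N * (s / b)) ^ 2 = N ^ 2 * (s / b) ^ 2 := by ring
      _ ≤ (K ^ 2 * (2 * x * p)) * (s / b) ^ 2 := by gcongr
      _ = K ^ 2 * 2 * (x * p * (s / b) ^ 2) := by ring
      _ ≤ K ^ 2 * 2 * (2 * P * ν ^ 2) := by gcongr
      _ = 4 * P * (ν * K) ^ 2 := by ring
      _ ≤ (4 * P) ^ 2 * (ν * K) ^ 2 := by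
        have : 4 * P ≤ (4 * P) ^ 2 := le_self_pow₀ (by linarith) two_ne_zero
        gcongr
      _ = _ := by ring
  -- The approximation of `ω` by `a/b` is limited either by the thickness of the neighbourhood of the
  -- curve or by its curvature.
  rcases le_total (μ * (H₂ / M) ^ 2) (K / (M * s)) with hI | hII
  · have hx2 : x ≤ 2 * (K / (M * s)) * b ^ 2 := by
      rw [hx]; gcongr; linarith
    have hx3 : x * (s / b) ≤ 2 * (K * b / M) := by
      calc x * (s / b) ≤ (2 * (K / (M * s)) * b ^ 2) * (s / b) := by gcongr
        _ = _ := by field_simp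
    have hKs : K * s / M ≤ 1 := by rw [div_le_one hM]; linarith
    have hKb : K * b / M ≤ 1 := le_trans (by gcongr) hKs
    rcases le_total p (P * ν ^ 2) with ha | hb'
    · apply interp
      calc x * p * (s / b) ^ 2 ≤ (2 * (K / (M * s)) * b ^ 2) * (P * ν ^ 2) * (s / b) ^ 2 := by
            gcongr
        _ = 2 * P * ν ^ 2 * (K * s / M) := by field_simp
        _ ≤ 2 * P * ν ^ 2 * 1 := by gcongr
        _ = _ := by ring
    · have hμb : p ≤ 3 * μ := by
        rw [hp] at hb' ⊢; linarith
      rcases U3 with ⟨h, -⟩ | ⟨U3, U4⟩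
      · -- the lowest class satisfies the interpolation hypothesis
        apply interp
        have hpl : p ≤ P * ν ^ 2 := by
          rw [hp]; linarith
        calc x * p * (s / b) ^ 2 ≤ (2 * (K / (M * s)) * b ^ 2) * (P * ν ^ 2) * (s / b) ^ 2 := by
              gcongr
          _ = 2 * P * ν ^ 2 * (K * s / M) := by field_simp
          _ ≤ 2 * P * ν ^ 2 * 1 := by gcongr
          _ = _ := by ring
      rcases hcase with ⟨h1, -⟩ | ⟨-, hν'⟩
      · apply interp
        calc x * p * (s / b) ^ 2 ≤ (2 * (K / (M * s)) * b ^ 2) * (P * ν ^ 2) * (s / b) ^ 2 := by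
              gcongr; rw [h1]; linarith
          _ = 2 * P * ν ^ 2 * (K * s / M) := by field_simp
          _ ≤ 2 * P * ν ^ 2 * 1 := by gcongr
          _ = _ := by ring
      rcases le_total (b * (K * K)) M with hbK | hbK
      · have : N * (s / b) ≤ 4 := by
          calc N * (s / b) ≤ K * (2 * x) * (s / b) := by gcongr
            _ = 2 * K * (x * (s / b)) := by ring
            _ ≤ 2 * K * (2 * (K * b / M)) := by gcongr
            _ = 4 * (b * (K * K) / M) := by ring
            _ ≤ 4 * 1 := by gcongr; rw [div_le_one hM]; exact hbK
            _ = 4 := by ring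
        exact this.trans (le_trans (by linarith) (fin 4 (by linarith)))
      · have hx1 : x ≤ 2 := by
          have : x ≤ x * (s / b) := le_mul_of_one_le_right hx0.le ((one_le_div hb0).2 hbs)
          linarith
        have e1 : N ≤ 2 * x + 9 * Y * μ := by
          by_cases hy : Y ≤ 0
          · linarith
          have m1 : N / (1 + Y) ≤ 2 * x := by
            rw [div_le_iff₀ (by positivity)]
            calc N ≤ (1 + Y) * (b / (H₁ * H₂) + x) := U3
              _ ≤ (1 + Y) * (2 * x) := by gcongr; linarith
              _ = _ := by ring
          have m2 : N / (1 + Y) ≤ 9 * μ := by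
            rw [div_le_iff₀ (by positivity)]
            calc N ≤ (1 + Y) * (p * (1 + x)) := U4
              _ ≤ (1 + Y) * ((3 * μ) * (1 + 2)) := by gcongr
              _ = _ := by ring
          have m3 : N = N / (1 + Y) + Y * (N / (1 + Y)) := by field_simp
          rw [m3]
          have := mul_le_mul_of_nonneg_left m2 hY0.le
          linarith
        have e2 : Y * μ * (s / b) ≤ ν * K := by
          have : Y * μ * (s / b) = K ^ 2 * M / (b * H₂ ^ 2) := by
            rw [hY]; field_simp
          rw [this, div_le_iff₀ (by positivity)]
          calc K ^ 2 * M ≤ K ^ 2 * (b * (K * K)) := by gcongr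
            _ = b * K * K ^ 3 := by ring
            _ = _ := by rw [← hν']; ring
        have e3 : N * (s / b) ≤ 4 + 9 * (ν * K) := by
          calc N * (s / b) ≤ (2 * x + 9 * Y * μ) * (s / b) := by gcongr
            _ = 2 * (x * (s / b)) + 9 * (Y * μ * (s / b)) := by ring
            _ ≤ 2 * (2 * (K * b / M)) + 9 * (ν * K) := by gcongr
            _ ≤ _ := by linarith
        exact e3.trans (le_trans (by linarith) (fin 13 (by linarith)))
  · have hx2 : x ≤ 2 * μ * (H₂ / M) ^ 2 * b ^ 2 := by
      rw [hx]; gcongr; linarith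
    have hxs : x * (s / b) ^ 2 * K ^ 2 ≤ 2 * μ * H₂ ^ 2 := by
      calc x * (s / b) ^ 2 * K ^ 2 ≤ (2 * μ * (H₂ / M) ^ 2 * b ^ 2) * (s / b) ^ 2 * K ^ 2 := by
            gcongr
        _ = 2 * μ * ((H₂ / M) ^ 2 * s ^ 2 * K ^ 2) := by field_simp
        _ ≤ _ := by gcongr
    have small : p * μ * H₂ ^ 2 ≤ P * ν ^ 2 * K ^ 2 → N * (s / b) ≤ 100 * P ^ 2 * (ν * K) := by
      intro h
      apply interp
      have hK2' : 0 < K ^ 2 := by positivity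
      refine le_of_mul_le_mul_right ?_ hK2'
      calc x * p * (s / b) ^ 2 * K ^ 2 = p * (x * (s / b) ^ 2 * K ^ 2) := by ring
        _ ≤ p * (2 * μ * H₂ ^ 2) := by gcongr
        _ = 2 * (p * μ * H₂ ^ 2) := by ring
        _ ≤ 2 * (P * ν ^ 2 * K ^ 2) := by gcongr
        _ = _ := by ring
    rcases le_total (p * μ * H₂ ^ 2) (P * ν ^ 2 * K ^ 2) with ha | hb'
    · exact small ha
    rcases U3 with ⟨-, h⟩ | ⟨U3, U4⟩
    · apply small
      calc p * μ * H₂ ^ 2 ≤ P * μ * H₂ ^ 2 := by gcongr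
        _ ≤ 1 := h
        _ ≤ P * (ν * K) ^ 2 :=
          one_le_mul_of_one_le_of_one_le (by linarith) (one_le_pow₀ hνK)
        _ = _ := by ring
    -- `m` is the interpolated count, of size at most the root of `x * p`
    obtain ⟨m, hm0, hm2, hNm⟩ : ∃ m, 0 ≤ m ∧ m ^ 2 ≤ x * p ∧ N ≤ (1 + Y) * (2 * m + p * x) := by
      rcases le_total x p with h | h
      · refine ⟨x, hx0.le, by rw [sq]; gcongr, U3.trans ?_⟩
        have : 0 ≤ p * x := by positivity
        refine mul_le_mul_of_nonneg_left ?_ (by positivity)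
        linarith
      · refine ⟨p, hp0.le, by rw [sq]; gcongr, U4.trans ?_⟩
        refine mul_le_mul_of_nonneg_left ?_ (by positivity)
        linarith
    have hνH : ν * H₂ ^ 2 ≤ K ^ 3 := by
      rcases hcase with ⟨h1, h⟩ | ⟨-, h⟩
      · rw [h1]; linarith
      · exact h.le
    have a1 : m * (s / b) ≤ 2 * P * (ν * K) := by
      refine (le_abs_self _).trans (abs_le_of_sq_le_sq ?_ (by positivity))
      have hK2' : 0 < K ^ 2 := by positivity
      refine le_of_mul_le_mul_right ?_ hK2'
      calc (m * (s / b)) ^ 2 * K ^ 2 = m ^ 2 * ((s / b) ^ 2 * K ^ 2) := by ring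
        _ ≤ (x * p) * ((s / b) ^ 2 * K ^ 2) := by gcongr
        _ = p * (x * (s / b) ^ 2 * K ^ 2) := by ring
        _ ≤ (P * ν) * (2 * (P * ν) * H₂ ^ 2) := by
          refine mul_le_mul hpν (hxs.trans ?_) (by positivity) (by positivity)
          gcongr
        _ = 2 * (P * ν) ^ 2 * H₂ ^ 2 := by ring
        _ ≤ 4 * (P * ν) ^ 2 * (K ^ 2) ^ 2 := by gcongr; norm_num
        _ = _ := by ring
    have a2 : p * x * (s / b) ≤ 2 * P ^ 2 * (ν * K) := by
      have hK2' : 0 < K ^ 2 := by positivity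
      refine le_of_mul_le_mul_right ?_ hK2'
      have r1 : 1 ≤ s / b := (one_le_div hb0).2 hbs
      calc p * x * (s / b) * K ^ 2 ≤ p * x * (s / b * (s / b)) * K ^ 2 := by
            gcongr; exact le_mul_of_one_le_right hr0.le r1
        _ = p * (x * (s / b) ^ 2 * K ^ 2) := by ring
        _ ≤ (P * ν) * (2 * (P * ν) * H₂ ^ 2) := by
          refine mul_le_mul hpν (hxs.trans ?_) (by positivity) (by positivity)
          gcongr
        _ = 2 * P ^ 2 * ν * (ν * H₂ ^ 2) := by ring
        _ ≤ 2 * P ^ 2 * ν * K ^ 3 := by gcongr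
        _ = _ := by ring
    have b2 : Y * (p * x) * (s / b) ≤ 2 * P * (ν * K) := by
      have hsM : b * K ≤ M := le_trans (by gcongr) hs
      calc Y * (p * x) * (s / b)
          ≤ Y * (p * (2 * μ * (H₂ / M) ^ 2 * b ^ 2)) * (s / b) := by gcongr
        _ = 2 * p * K * ((b * K) / M) := by rw [hY]; field_simp
        _ ≤ 2 * (P * ν) * K * 1 := by gcongr; rw [div_le_one hM]; exact hsM
        _ = _ := by ring
    have b1' : K ^ 2 * p ≤ P ^ 2 * (ν ^ 2 * H₂ ^ 2 * μ) := by
      rcases hcase with ⟨h1, -⟩ | ⟨-, hν'⟩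
      · rw [h1] at hb' ⊢
        calc K ^ 2 * p = p * (1 * K ^ 2) := by ring
          _ ≤ p * (P * 1 ^ 2 * K ^ 2) := by gcongr; linarith
          _ ≤ p * (p * μ * H₂ ^ 2) := by gcongr
          _ = p ^ 2 * (H₂ ^ 2 * μ) := by ring
          _ ≤ P ^ 2 * (H₂ ^ 2 * μ) := by gcongr
          _ = _ := by ring
      · have hH2p : 0 < H₂ ^ 2 := by positivity
        refine le_of_mul_le_mul_right ?_ hH2p
        have e : P ^ 2 * (ν ^ 2 * H₂ ^ 2 * μ) * H₂ ^ 2 = P ^ 2 * μ * K ^ 6 := by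
          have : K ^ 6 = (ν * H₂ ^ 2) ^ 2 := by rw [hν']; ring
          rw [this]; ring
        rw [e]
        rcases le_total p (3 * μ) with h3 | h3
        · calc K ^ 2 * p * H₂ ^ 2 ≤ K ^ 2 * (3 * μ) * (K ^ 2) ^ 2 := by gcongr
            _ = 3 * μ * K ^ 6 := by ring
            _ ≤ P ^ 2 * μ * K ^ 6 := by gcongr; linarith
        · have q1 : p * H₂ ^ 4 ≤ 3 * K ^ 6 := by
            have q2 : p ≤ 3 / 2 * (1 / (H₁ * H₂) + (H₁ / H₂) ^ 2) := by
              have : μ ≤ p / 3 := by linarith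
              rw [hp] at this ⊢; linarith
            calc p * H₂ ^ 4 ≤ 3 / 2 * (1 / (H₁ * H₂) + (H₁ / H₂) ^ 2) * H₂ ^ 4 := by gcongr
              _ = 3 / 2 * (H₂ ^ 3 / H₁ + H₁ ^ 2 * H₂ ^ 2) := by field_simp
              _ ≤ 3 / 2 * (H₁ * H₂ ^ 3 + H₁ * H₂ ^ 3) := by
                have g1 : H₂ ^ 3 / H₁ ≤ H₁ * H₂ ^ 3 := by
                  rw [div_le_iff₀ (by linarith)]
                  have : 1 ≤ H₁ * H₁ := one_le_mul_of_one_le_of_one_le hH1 hH1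
                  calc H₂ ^ 3 = 1 * H₂ ^ 3 := by ring
                    _ ≤ (H₁ * H₁) * H₂ ^ 3 := by gcongr
                    _ = _ := by ring
                have g2 : H₁ ^ 2 * H₂ ^ 2 ≤ H₁ * H₂ ^ 3 := by
                  calc H₁ ^ 2 * H₂ ^ 2 = H₁ * H₂ ^ 2 * H₁ := by ring
                    _ ≤ H₁ * H₂ ^ 2 * H₂ := by gcongr
                    _ = _ := by ring
                gcongr
              _ ≤ _ := by linarith
          have q3 : P * K ^ 8 ≤ p * μ * H₂ ^ 6 := by
            calc P * K ^ 8 = P * (ν * H₂ ^ 2) ^ 2 * K ^ 2 := by rw [hν']; ring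
              _ = (P * ν ^ 2 * K ^ 2) * H₂ ^ 4 := by ring
              _ ≤ (p * μ * H₂ ^ 2) * H₂ ^ 4 := by gcongr
              _ = _ := by ring
          have q4 : P * (K ^ 2 * p * H₂ ^ 2) ≤ P * (P ^ 2 * μ * K ^ 6) := by
            have hK6' : 0 < K ^ 6 := by positivity
            refine le_of_mul_le_mul_right ?_ hK6'
            calc P * (K ^ 2 * p * H₂ ^ 2) * K ^ 6 = (P * K ^ 8) * (p * H₂ ^ 2) := by ring
              _ ≤ (p * μ * H₂ ^ 6) * (p * H₂ ^ 2) := by gcongr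
              _ = μ * (p * H₂ ^ 4) ^ 2 := by ring
              _ ≤ μ * (3 * K ^ 6) ^ 2 := by gcongr
              _ = 3 ^ 2 * (μ * K ^ 6 * K ^ 6) := by ring
              _ ≤ P ^ 3 * (μ * K ^ 6 * K ^ 6) := by
                have h9 : (3 : ℝ) ^ 2 ≤ P ^ 3 := le_trans (by norm_num) (pow_le_pow_left₀ (by norm_num) hP3 3)
                gcongr
              _ = _ := by ring
          exact le_of_mul_le_mul_left q4 (by linarith)
    have b1 : Y * m * (s / b) ≤ 2 * P * (ν * K) := by
      refine (le_abs_self _).trans (abs_le_of_sq_le_sq ?_ (by positivity))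
      calc (Y * m * (s / b)) ^ 2 = Y ^ 2 * m ^ 2 * (s / b) ^ 2 := by ring
        _ ≤ Y ^ 2 * (x * p) * (s / b) ^ 2 := by gcongr
        _ ≤ Y ^ 2 * ((2 * μ * (H₂ / M) ^ 2 * b ^ 2) * p) * (s / b) ^ 2 := by gcongr
        _ = 2 * K ^ 2 * (K ^ 2 * p) / (H₂ ^ 2 * μ) := by rw [hY]; field_simp
        _ ≤ 2 * K ^ 2 * (P ^ 2 * (ν ^ 2 * H₂ ^ 2 * μ)) / (H₂ ^ 2 * μ) := by gcongr
        _ = 2 * (P * (ν * K)) ^ 2 := by field_simp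
        _ ≤ 4 * (P * (ν * K)) ^ 2 := by gcongr; norm_num
        _ = _ := by ring
    calc N * (s / b) ≤ (1 + Y) * (2 * m + p * x) * (s / b) := by gcongr
      _ = 2 * (m * (s / b)) + p * x * (s / b) + 2 * (Y * m * (s / b)) + Y * (p * x) * (s / b) := by
        ring
      _ ≤ 2 * (2 * P * (ν * K)) + 2 * P ^ 2 * (ν * K) + 2 * (2 * P * (ν * K))
          + 2 * P * (ν * K) := by gcongr
      _ = (10 * P + 2 * P ^ 2) * (ν * K) := by ring
      _ ≤ _ := fin _ (by linarith)

/-- The elementary ways of counting a class `𝒞` of pairs (quadruple, interval) to which slopes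
`(A, B)` are assigned: by quadruples and intervals, or by quadruples and slopes. -/
theorem cz_fiber_counts {C₀ : ℝ} {n : ℕ} {κq pq : ℝ}
    (𝒞 : Finset (((ℕ × ℕ) × (ℕ × ℕ)) × ℕ)) (A B : ((ℕ × ℕ) × (ℕ × ℕ)) × ℕ → ℕ)
    (Q : Finset ((ℕ × ℕ) × (ℕ × ℕ))) (hC₀ : 0 ≤ C₀) (hpq : 0 ≤ pq)
    (hn : (n : ℝ) ≤ C₀) (hQ : ∀ x ∈ 𝒞, x.1 ∈ Q ∧ x.2 < n) (hκ : (Q.card : ℝ) ≤ κq)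
    (hfr : ∀ q, (((𝒞.filter fun x => x.1 = q).image fun x => (A x, B x)).card : ℝ) ≤ pq) :
    ((𝒞.card : ℝ) ≤ C₀ * κq) ∧
    ((𝒞.card : ℝ) ≤ C₀ * (𝒞.image fun x => (x.1, (A x, B x))).card) ∧
    (((𝒞.image fun x => (x.1, (A x, B x))).card : ℝ) ≤ κq * pq) ∧
    (∀ y : ℝ, 0 ≤ y → (∀ q a b, ((𝒞.filter fun x => x.1 = q ∧ A x = a ∧ B x = b).card : ℝ) ≤ y) →
      (𝒞.card : ℝ) ≤ y * (𝒞.image fun x => (x.1, (A x, B x))).card) := by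
  have hfib : ∀ (D : Finset (((ℕ × ℕ) × (ℕ × ℕ)) × ℕ)), (∀ x ∈ D, x ∈ 𝒞) →
      (∀ x ∈ D, ∀ y ∈ D, x.1 = y.1) → (D.card : ℝ) ≤ C₀ := by
    intro D hD hD1
    refine le_trans ?_ hn
    have : D.card ≤ (Finset.range n).card := Finset.card_le_card_of_injOn (fun x => x.2)
      (fun x hx => by simpa using (hQ x (hD x hx)).2)
      (fun x hx y hy h => Prod.ext (hD1 x hx y hy) h)
    rw [Finset.card_range] at this
    exact_mod_cast this
  refine ⟨?_, ?_, ?_, ?_⟩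
  · have := cz_card_le_mul_fiber 𝒞 (fun x => x.1) Q (fun x hx => (hQ x hx).1) C₀ (fun q _ =>
      hfib _ (fun x hx => (Finset.mem_filter.1 hx).1) (fun x hx y hy =>
        (Finset.mem_filter.1 hx).2.trans (Finset.mem_filter.1 hy).2.symm))
    refine this.trans ?_
    rw [mul_comm]
    gcongr
  · have := cz_card_le_mul_fiber 𝒞 (fun x => (x.1, (A x, B x))) _
      (fun x hx => Finset.mem_image_of_mem _ hx) C₀ (fun q _ =>
      hfib _ (fun x hx => (Finset.mem_filter.1 hx).1) (fun x hx y hy => (Prod.ext_iff.1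
        ((Finset.mem_filter.1 hx).2.trans (Finset.mem_filter.1 hy).2.symm)).1))
    rw [mul_comm]; exact this
  · have := cz_card_le_mul_fiber (𝒞.image fun x => (x.1, (A x, B x))) (fun z => z.1) Q
      (fun z hz => by
        obtain ⟨x, hx, rfl⟩ := Finset.mem_image.1 hz
        exact (hQ x hx).1) pq (fun q _ => by
        refine le_trans ?_ (hfr q)
        have : ((𝒞.image fun x => (x.1, (A x, B x))).filter fun z => z.1 = q).card ≤
            ((𝒞.filter fun x => x.1 = q).image fun x => (A x, B x)).card := by
          refine Finset.card_le_card_of_injOn (fun z => z.2) (fun z hz => ?_)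
            (fun z hz w hw h => ?_)
          · obtain ⟨hz, hz1⟩ := Finset.mem_filter.1 (Finset.mem_coe.1 hz)
            obtain ⟨x, hx, rfl⟩ := Finset.mem_image.1 hz
            exact Finset.mem_coe.2 (Finset.mem_image.2 ⟨x, Finset.mem_filter.2 ⟨hx, hz1⟩, rfl⟩)
          · exact Prod.ext ((Finset.mem_filter.1 (Finset.mem_coe.1 hz)).2.trans
              (Finset.mem_filter.1 (Finset.mem_coe.1 hw)).2.symm) h
        exact_mod_cast this)
    exact this.trans (by gcongr)
  · intro y hy hf
    have := cz_card_le_mul_fiber 𝒞 (fun x => (x.1, (A x, B x))) _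
      (fun x hx => Finset.mem_image_of_mem _ hx) y (fun z _ => by
        refine le_trans (le_of_eq ?_) (hf z.1 z.2.1 z.2.2)
        congr 2
        ext x
        simp [Prod.ext_iff])
    rw [mul_comm]; exact this

/-- `cz_FI_one` with the logarithms absorbed into a power of `M`. -/
theorem cz_FI_one_pow {α : ℝ} (h1 : α ≠ 1) (h2 : α ≠ 2) {η : ℝ} (hη : 0 < η) :
    ∃ C > 0, ∀ (M H₁ H₂ : ℕ) (μ : ℝ), 2 ≤ M → 1 ≤ H₁ → 1 ≤ H₂ → H₁ ≤ M → H₂ ≤ M → 0 ≤ μ →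
      (((czQ H₁ H₂).filter fun q => |czκ α q| ≤ μ * (H₂ : ℝ) ^ 2).card : ℝ) ≤
        C * (M : ℝ) ^ η * (((H₁ : ℝ) * H₂) ^ 2 * (1 / ((H₁ : ℝ) * H₂) + μ + ((H₁ : ℝ) / H₂) ^ 2)) := by
  obtain ⟨C1, hC1, hF1⟩ := cz_FI_one h1 h2
  obtain ⟨L1, hL1⟩ : ∃ L1, L1 = 1 + 1 / (η / 4) := ⟨_, rfl⟩
  have hL1p : 0 < L1 := by rw [hL1]; positivity
  refine ⟨C1 * L1 ^ 2, by positivity, ?_⟩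
  intro M H₁ H₂ μ hM hH1 hH2 hH1M hH2M hμ
  have hMR' : (2 : ℝ) ≤ M := by exact_mod_cast hM
  have hM0 : (0 : ℝ) < M := by linarith
  have hH1R : (1 : ℝ) ≤ H₁ := by exact_mod_cast hH1
  have hH2R : (1 : ℝ) ≤ H₂ := by exact_mod_cast hH2
  refine (hF1 H₁ H₂ μ hH1 hH2 hμ).trans ?_
  have lg : ∀ H : ℝ, 1 ≤ H → H ≤ M → 1 + Real.log (2 * H) ≤ L1 * (M : ℝ) ^ (η / 2) := by
    intro H hH hHM
    refine (cz_log_le (η := η / 4) (by positivity) (by linarith)).trans ?_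
    have : (M : ℝ) ^ (η / 2) = ((M : ℝ) ^ 2) ^ (η / 4) := by
      rw [← Real.rpow_natCast, ← Real.rpow_mul hM0.le]; congr 1; push_cast; ring
    rw [this, hL1]
    gcongr
    rw [sq]; gcongr
  have e : (M : ℝ) ^ η = (M : ℝ) ^ (η / 2) * (M : ℝ) ^ (η / 2) := by
    rw [← Real.rpow_add hM0]; congr 1; ring
  have g1 := lg H₁ hH1R (by exact_mod_cast hH1M)
  have g2 := lg H₂ hH2R (by exact_mod_cast hH2M)
  have g10 : 0 ≤ Real.log (2 * H₂) := Real.log_nonneg (by linarith)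
  rw [e]
  calc _ ≤ C1 * ((L1 * (M : ℝ) ^ (η / 2)) * (L1 * (M : ℝ) ^ (η / 2))) *
        (((H₁ : ℝ) * H₂) ^ 2 * (1 / ((H₁ : ℝ) * H₂) + μ + ((H₁ : ℝ) / H₂) ^ 2)) := by gcongr
    _ = _ := by ring

set_option maxHeartbeats 2000000 in
/-- The contribution of one dyadic class, in which the slopes have denominator `B ≈ b`, the segments
have width `GB ≈ s`, and `|κ| ≤ μH₂²`; the multiplicity `G` is of the order of `s/b`. -/
theorem cz_class {α : ℝ} (h1 : α ≠ 1) (h2 : α ≠ 2) {η C₀ : ℝ} (hη : 0 < η) (hC₀ : 1 ≤ C₀) :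
    ∃ C > 0, ∀ (M H₁ H₂ n : ℕ) (K ν μ b s : ℝ) (𝒞 : Finset (((ℕ × ℕ) × (ℕ × ℕ)) × ℕ))
      (A B : ((ℕ × ℕ) × (ℕ × ℕ)) × ℕ → ℕ),
    2 ≤ M → 1 ≤ H₁ → H₁ ≤ H₂ → H₂ ≤ M → 0 < K → 0 < ν →
    ((ν = 1 ∧ (H₂ : ℝ) ^ 2 ≤ K ^ 3) ∨ (ν ≤ 1 ∧ ν * (H₂ : ℝ) ^ 2 = K ^ 3)) →
    (H₂ : ℝ) ≤ K ^ 2 → 1 ≤ ν * K → M / ((H₁ : ℝ) * H₂) ≤ ν * K →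
    (H₁ : ℝ) * H₂ ^ 3 ≤ K ^ 6 → ((H₁ : ℝ) / H₂) ^ 2 ≤ ν ^ 2 → 1 / ((H₁ : ℝ) * H₂) ≤ ν ^ 2 →
    0 < μ → μ ≤ C₀ * ν → 1 ≤ b → b ≤ s → s * K ≤ M → b ≤ M → (n : ℝ) ≤ C₀ * K →
    C₀ * (μ * ((H₂ : ℝ) / M) ^ 2 + K / (M * s)) ≤ 1 →
    (∀ x ∈ 𝒞, x.1 ∈ czQ H₁ H₂ ∧ x.2 < n ∧ |czκ α x.1| ≤ μ * (H₂ : ℝ) ^ 2 ∧ 1 ≤ A x ∧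
      1 ≤ B x ∧ Nat.Coprime (A x) (B x) ∧ (B x : ℝ) ≤ 2 * b ∧
      |(A x : ℝ) / B x - czω α x.1| ≤ C₀ * (μ * ((H₂ : ℝ) / M) ^ 2 + K / (M * s))) →
    ((μ ≤ ν ^ 2 ∧ (C₀ + 2) * μ * (H₂ : ℝ) ^ 2 ≤ 1) ∨
      ∀ q a b, ((𝒞.filter fun x => x.1 = q ∧ A x = a ∧ B x = b).card : ℝ) ≤
        C₀ * (1 + M * K ^ 2 / (s * (H₂ : ℝ) ^ 2 * μ))) →
    (𝒞.card : ℝ) * (s / b) ≤ C * (M : ℝ) ^ η * (((H₁ : ℝ) * H₂) ^ 2 * (ν * K)) := by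
  obtain ⟨C1, hC1, hF1⟩ := cz_FI_one_pow h1 h2 hη
  obtain ⟨C2, hC2, hF2⟩ := cz_FI_two h2 (η := η / 12) (by positivity)
  set Cb := C₀ * (C1 + 1) * (8 * C₀) * (4 * C₀ * C2 + 1) with hCb
  have hCbp : 0 < Cb := by positivity
  refine ⟨Cb * (100 * (C₀ + 2) ^ 2), by positivity, ?_⟩
  intro M H₁ H₂ n K ν μ b s 𝒞 A B hM hH1 hH hHM hK hν hcase hK2 hνK hMR hK6 hμ₀ hR hμ hμν hb hbs
    hs hbM hn hτ1 h𝒞 hU3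
  have hMR' : (2 : ℝ) ≤ M := by exact_mod_cast hM
  have hH1R : (1 : ℝ) ≤ H₁ := by exact_mod_cast hH1
  have hHR : (H₁ : ℝ) ≤ H₂ := by exact_mod_cast hH
  have hHMR : (H₂ : ℝ) ≤ M := by exact_mod_cast hHM
  have hs0 : 0 < s := by linarith
  have hM0 : (0 : ℝ) < M := by linarith
  have hH20 : (0 : ℝ) < H₂ := by linarith
  have hH10 : (0 : ℝ) < H₁ := by linarith
  obtain ⟨τ, hτ⟩ : ∃ τ, τ = μ * ((H₂ : ℝ) / M) ^ 2 + K / (M * s) := ⟨_, rfl⟩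
  obtain ⟨Y, hY⟩ : ∃ Y, Y = M * K ^ 2 / (s * (H₂ : ℝ) ^ 2 * μ) := ⟨_, rfl⟩
  obtain ⟨p, hp⟩ : ∃ p, p = 1 / ((H₁ : ℝ) * H₂) + μ + ((H₁ : ℝ) / H₂) ^ 2 := ⟨_, rfl⟩
  obtain ⟨R, hRdef⟩ : ∃ R, R = (H₁ : ℝ) * H₂ := ⟨_, rfl⟩
  rw [← hτ] at hτ1 h𝒞
  rw [← hY] at hU3
  have hτ0 : 0 < τ := by rw [hτ]; positivity
  have hY0 : 0 < Y := by rw [hY]; positivity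
  have hp0 : 0 < p := by rw [hp]; positivity
  have hR0 : 0 < R := by rw [hRdef]; positivity
  have hR1 : 1 ≤ R := by rw [hRdef]; exact one_le_mul_of_one_le_of_one_le hH1R (hH1R.trans hHR)
  set Lf := (M : ℝ) ^ η with hLf
  have hLf0 : 0 < Lf := by positivity
  obtain ⟨Q, hQdef⟩ : ∃ Q, Q = (czQ H₁ H₂).filter fun q => |czκ α q| ≤ μ * (H₂ : ℝ) ^ 2 :=
    ⟨_, rfl⟩
  -- The number of quadruples, of pairs (quadruple, slope), and of slopes for a fixed quadruple.
  have hQcard : (Q.card : ℝ) ≤ C1 * Lf * (R ^ 2 * p) := by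
    rw [hQdef]
    rw [hp, hRdef]
    exact hF1 M H₁ H₂ μ hM hH1 (hH1.trans hH) (hH.trans hHM) hHM hμ.le
  have hI := hF2 H₁ H₂ (2 * b) (C₀ * τ) (𝒞.image fun x => (x.1, (A x, B x))) hH1 (hH1.trans hH)
    (by linarith) (by positivity) hτ1 (by
      intro z hz
      obtain ⟨x, hx, rfl⟩ := Finset.mem_image.1 hz
      obtain ⟨c1, -, -, c2, c3, -, c4, c5⟩ := h𝒞 x hx
      exact ⟨c1, c2, c3, c4, c5⟩)
  rw [← hRdef] at hI
  have hI' : ((𝒞.image fun x => (x.1, (A x, B x))).card : ℝ) ≤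
      4 * C₀ * C2 * Lf * (R ^ 2 * (b / R + τ * b ^ 2)) := by
    refine hI.trans ?_
    have e1 : (R * (2 * b)) ^ (3 * (η / 12)) ≤ Lf := by
      have : Lf = ((M : ℝ) ^ 4) ^ (3 * (η / 12)) := by
        rw [hLf, ← Real.rpow_natCast, ← Real.rpow_mul hM0.le]; congr 1; push_cast; ring
      rw [this]
      gcongr
      have hRM : R ≤ (M : ℝ) * M := by
        rw [hRdef]; exact mul_le_mul (hHR.trans hHMR) hHMR hH20.le hM0.le
      calc R * (2 * b) ≤ ((M : ℝ) * M) * (M * M) := by gcongr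
        _ = _ := by ring
    have e2 : R * (2 * b) + C₀ * τ * (R * (2 * b)) ^ 2 ≤
        4 * C₀ * (R ^ 2 * (b / R + τ * b ^ 2)) := by
      have e3 : 4 * C₀ * (R ^ 2 * (b / R + τ * b ^ 2)) =
          4 * (C₀ * (R * b)) + C₀ * τ * (R * (2 * b)) ^ 2 := by field_simp; ring
      have e4 : 0 ≤ R * b := by positivity
      have := mul_le_mul_of_nonneg_right hC₀ e4
      rw [e3]; linarith
    calc C2 * (R * (2 * b)) ^ (3 * (η / 12)) * (R * (2 * b) + C₀ * τ * (R * (2 * b)) ^ 2)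
        ≤ C2 * Lf * (4 * C₀ * (R ^ 2 * (b / R + τ * b ^ 2))) := by gcongr
      _ = _ := by ring
  obtain ⟨F1, F2, F3, F4⟩ := cz_fiber_counts (C₀ := C₀ * K) (n := n)
    (κq := C1 * Lf * (R ^ 2 * p)) (pq := 8 * C₀ * (1 + τ * b ^ 2)) 𝒞 A B Q (by positivity)
    (by positivity) hn (fun x hx => by
      obtain ⟨c1, c2, c3, -⟩ := h𝒞 x hx
      exact ⟨by rw [hQdef]; exact Finset.mem_filter.2 ⟨c1, c3⟩, c2⟩) hQcard (fun q => by
      refine (cz_count_frac (czω α q) (C₀ * τ) (Y := 2 * b) (by linarith) (by positivity) _ ?_).trans ?_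
      · intro z hz
        obtain ⟨x, hx, rfl⟩ := Finset.mem_image.1 hz
        obtain ⟨hx', rfl⟩ := Finset.mem_filter.1 hx
        obtain ⟨c1, -, -, c2, c3, c6, c4, c5⟩ := h𝒞 x hx'
        exact ⟨c6, c3, c4, c5⟩
      · have : 0 ≤ τ * b ^ 2 := by positivity
        have h2 : 2 * (1 + C₀ * τ * (2 * b) ^ 2) = 2 + 8 * C₀ * (τ * b ^ 2) := by ring
        rw [h2, mul_add]; linarith)
  set Im : ℝ := ((𝒞.image fun x => (x.1, (A x, B x))).card : ℝ)
  have hx0 : 0 < b / R + τ * b ^ 2 := by positivity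
  have hCk : C1 ≤ C1 + 1 := by linarith
  have hC8 : 1 ≤ 8 * C₀ := by linarith
  have hC4 : 1 ≤ 4 * C₀ * C2 + 1 := by
    have : 0 ≤ 4 * C₀ * C2 := by positivity
    linarith
  have hC5 : 1 ≤ C1 + 1 := by
    linarith
  have u1 : C₀ * (C1 * (8 * C₀)) ≤ Cb := by
    rw [hCb]
    calc C₀ * (C1 * (8 * C₀)) ≤ C₀ * ((C1 + 1) * (8 * C₀)) := by gcongr
      _ = C₀ * (C1 + 1) * (8 * C₀) := by ring
      _ ≤ _ := le_mul_of_one_le_right (by positivity) hC4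
  have u0 : C₀ * (C1) ≤ Cb := by
    calc C₀ * (C1) ≤ C₀ * (C1) * (8 * C₀) :=
          le_mul_of_one_le_right (by positivity) hC8
      _ = C₀ * (C1 * (8 * C₀)) := by ring
      _ ≤ _ := u1
  have u2 : C₀ * (4 * C₀ * C2) ≤ Cb := by
    rw [hCb]
    calc C₀ * (4 * C₀ * C2) ≤ C₀ * (4 * C₀ * C2 + 1) := by gcongr; linarith
      _ ≤ C₀ * (4 * C₀ * C2 + 1) * ((C1 + 1) * (8 * C₀)) :=
        le_mul_of_one_le_right (by positivity) (one_le_mul_of_one_le_of_one_le hC5 hC8)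
      _ = _ := by ring
  set c : ℝ := (𝒞.card : ℝ) with hc
  have hc0 : 0 ≤ c := by rw [hc]; positivity
  have hD : 0 < Cb * Lf * R ^ 2 := by positivity
  have main := cz_class_ineq (N := c / (Cb * Lf * R ^ 2)) (x := τ * b ^ 2) (Y := Y) hC₀ hM0 hH1R
    hHR hK hν hcase hK2 hνK hMR hK6 hμ₀ hR hμ hμν hb hbs hs (by positivity) hp (by rw [hτ]) hY
    (by
      rw [div_le_iff₀ hD]
      calc c ≤ _ := F1
        _ = (C₀ * (C1)) * (K * p * (Lf * R ^ 2)) := by ring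
        _ ≤ Cb * (K * p * (Lf * R ^ 2)) := by gcongr
        _ = _ := by ring)
    (by
      rw [div_le_iff₀ hD, ← hRdef]
      calc c ≤ _ := F2
        _ ≤ C₀ * K * (4 * C₀ * C2 * Lf * (R ^ 2 * (b / R + τ * b ^ 2))) := by gcongr
        _ = (C₀ * (4 * C₀ * C2)) * (K * (b / R + τ * b ^ 2) * (Lf * R ^ 2)) := by ring
        _ ≤ Cb * (K * (b / R + τ * b ^ 2) * (Lf * R ^ 2)) := by gcongr
        _ = _ := by ring)
    (by
      rcases hU3 with h | h
      · exact Or.inl h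
      refine Or.inr ?_
      have F5 := F4 _ (by positivity) h
      rw [div_le_iff₀ hD, div_le_iff₀ hD, ← hRdef]
      constructor
      · calc c ≤ _ := F5
          _ ≤ C₀ * (1 + Y) * (4 * C₀ * C2 * Lf * (R ^ 2 * (b / R + τ * b ^ 2))) := by gcongr
          _ = (C₀ * (4 * C₀ * C2)) * ((1 + Y) * (b / R + τ * b ^ 2) * (Lf * R ^ 2)) := by ring
          _ ≤ Cb * ((1 + Y) * (b / R + τ * b ^ 2) * (Lf * R ^ 2)) := by gcongr
          _ = _ := by ring
      · calc c ≤ _ := F5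
          _ ≤ C₀ * (1 + Y) * (C1 * Lf * (R ^ 2 * p) * (8 * C₀ * (1 + τ * b ^ 2))) := by
            gcongr
          _ = (C₀ * (C1 * (8 * C₀))) * ((1 + Y) * (p * (1 + τ * b ^ 2)) * (Lf * R ^ 2)) := by
            ring
          _ ≤ Cb * ((1 + Y) * (p * (1 + τ * b ^ 2)) * (Lf * R ^ 2)) := by gcongr
          _ = _ := by ring)
  have e : c * (s / b) = (Cb * Lf * R ^ 2) * (c / (Cb * Lf * R ^ 2) * (s / b)) := by
    field_simp
  rw [e, ← hRdef]
  calc _ ≤ (Cb * Lf * R ^ 2) * (100 * (C₀ + 2) ^ 2 * (ν * K)) := by gcongr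
    _ = _ := by ring

/-- The number of dyadic classes is at most a small power of `M`. -/
theorem cz_log_count {η : ℝ} (hη : 0 < η) (J₀ : ℕ) : ∃ C > 0, ∀ M : ℕ, 2 ≤ M →
    (((Nat.log 2 M + 1) * (Nat.log 2 M + 1) * (2 * (Nat.log 2 M + 1) + J₀ + 1) : ℕ) : ℝ) ≤
      C * (M : ℝ) ^ η := by
  refine ⟨(2 * (1 + 1 / (η / 3))) ^ 3 * (3 + J₀), by positivity, ?_⟩
  intro M hM
  have hMR : (2 : ℝ) ≤ M := by exact_mod_cast hM
  obtain ⟨L, hL⟩ : ∃ L : ℝ, L = Nat.log 2 M + 1 := ⟨_, rfl⟩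
  have hL1 : 1 ≤ L := by rw [hL]; linarith [(Nat.cast_nonneg (Nat.log 2 M) : (0 : ℝ) ≤ _)]
  have h1 : L ≤ 2 * (1 + Real.log M) := by
    have h2 : ((2 ^ Nat.log 2 M : ℕ) : ℝ) ≤ M := by
      exact_mod_cast Nat.pow_log_le_self 2 (by omega)
    have h3 := Real.log_le_log (by positivity) h2
    push_cast at h3
    rw [Real.log_pow] at h3
    have h4 := Real.log_two_gt_d9
    have h5 : (Nat.log 2 M : ℝ) * (1 / 2) ≤ (Nat.log 2 M : ℝ) * Real.log 2 := by
      gcongr; linarith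
    rw [hL]; linarith
  have h2 : L ≤ 2 * (1 + 1 / (η / 3)) * (M : ℝ) ^ (η / 3) := by
    have := cz_log_le (η := η / 3) (by positivity) (x := (M : ℝ)) (by linarith)
    calc L ≤ 2 * (1 + Real.log M) := h1
      _ ≤ 2 * ((1 + 1 / (η / 3)) * (M : ℝ) ^ (η / 3)) := by gcongr
      _ = _ := by ring
  have h3 : ((M : ℝ) ^ (η / 3)) ^ 3 = (M : ℝ) ^ η := by
    rw [← Real.rpow_natCast, ← Real.rpow_mul (by linarith)]; congr 1; push_cast; ring
  have hJ : (0 : ℝ) ≤ J₀ := Nat.cast_nonneg _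
  push_cast
  rw [← hL]
  calc L * L * (2 * L + J₀ + 1) ≤ L * L * (2 * L + J₀ * L + L) := by
        gcongr
        exact le_mul_of_one_le_right hJ hL1
    _ = L ^ 3 * (3 + J₀) := by ring
    _ ≤ (2 * (1 + 1 / (η / 3)) * (M : ℝ) ^ (η / 3)) ^ 3 * (3 + J₀) := by gcongr
    _ = _ := by rw [mul_pow, h3]; ring

set_option maxHeartbeats 2000000 in
/-- Summation over the classes. A pair `x` is put in the class `(⌊log₂ B⌋, ⌊log₂ GB⌋, j)`, where
`j ≤ J` is the largest index with `|κ| ≤ C₀νH₂²/2^j`. In the classes `j < J` the size of `|κ|` is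
known up to a factor two; in the last one it may vanish, but there `μ` is so small that the first
alternative of `cz_class` holds. -/
theorem cz_sum {α : ℝ} (h1 : α ≠ 1) (h2 : α ≠ 2) {η C₀ : ℝ} (hη : 0 < η) (hC₀ : 1 ≤ C₀) :
    ∃ C > 0, ∀ (M H₁ H₂ n : ℕ) (K ν : ℝ) (𝒮 : Finset (((ℕ × ℕ) × (ℕ × ℕ)) × ℕ))
      (A B G : ((ℕ × ℕ) × (ℕ × ℕ)) × ℕ → ℕ),
    2 ≤ M → 1 ≤ H₁ → H₁ ≤ H₂ → H₂ ≤ M → 0 < K → 0 < ν →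
    ((ν = 1 ∧ (H₂ : ℝ) ^ 2 ≤ K ^ 3) ∨ (ν ≤ 1 ∧ ν * (H₂ : ℝ) ^ 2 = K ^ 3)) →
    (H₂ : ℝ) ≤ K ^ 2 → 1 ≤ ν * K → M / ((H₁ : ℝ) * H₂) ≤ ν * K →
    (H₁ : ℝ) * H₂ ^ 3 ≤ K ^ 6 → ((H₁ : ℝ) / H₂) ^ 2 ≤ ν ^ 2 → 1 / ((H₁ : ℝ) * H₂) ≤ ν ^ 2 →
    (n : ℝ) ≤ C₀ * K →
    2 * C₀ * (C₀ * ((H₂ : ℝ) / M) ^ 2 + K / M) ≤ 1 →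
    (∀ x ∈ 𝒮, x.1 ∈ czQ H₁ H₂ ∧ x.2 < n ∧ |czκ α x.1| ≤ C₀ * ν * (H₂ : ℝ) ^ 2 ∧ 1 ≤ A x ∧
      1 ≤ B x ∧ 1 ≤ G x ∧ Nat.Coprime (A x) (B x) ∧ ((G x * B x : ℕ) : ℝ) * K ≤ M ∧
      |(A x : ℝ) / B x - czω α x.1| ≤
        C₀ * (|czκ α x.1| / (M : ℝ) ^ 2 + K / (M * ((G x * B x : ℕ) : ℝ)))) →
    (∀ q a b, ∀ s : ℝ, 0 < s → 0 < |czκ α q| →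
      ((𝒮.filter fun x => x.1 = q ∧ A x = a ∧ B x = b ∧ s ≤ ((G x * B x : ℕ) : ℝ)).card : ℝ) ≤
        C₀ * (1 + M * K ^ 2 / (s * |czκ α q|))) →
    ∑ x ∈ 𝒮, (G x : ℝ) ≤ C * (M : ℝ) ^ η * (((H₁ : ℝ) * H₂) ^ 2 * (ν * K)) := by
  set D := 2 * C₀ with hD
  have hD1 : 1 ≤ D := by linarith
  obtain ⟨C1, hC1, hcl⟩ := cz_class h1 h2 (η := η / 2) (C₀ := D) (by positivity) hD1
  obtain ⟨J₀, hJ₀⟩ := pow_unbounded_of_one_lt ((D + 2) * C₀) (one_lt_two : (1 : ℝ) < 2)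
  obtain ⟨C2, hC2, hlog⟩ := cz_log_count (η := η / 2) (by positivity) J₀
  refine ⟨C2 * (2 * C1), by positivity, ?_⟩
  intro M H₁ H₂ n K ν 𝒮 A B G hM hH1 hH hHM hK hν hcase hK2 hνK hMR hK6 hμ₀ hR hn hτ1 h𝒮 hfib
  have hMR' : (2 : ℝ) ≤ M := by exact_mod_cast hM
  have hM0 : (0 : ℝ) < M := by linarith
  have hH1R : (1 : ℝ) ≤ H₁ := by exact_mod_cast hH1
  have hHR : (H₁ : ℝ) ≤ H₂ := by exact_mod_cast hH
  have hHMR : (H₂ : ℝ) ≤ M := by exact_mod_cast hHM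
  have hH20 : (0 : ℝ) < H₂ := by linarith
  have hν1 : ν ≤ 1 := by rcases hcase with h | h <;> linarith [h.1]
  have hK1 : 1 ≤ K := hνK.trans (mul_le_of_le_one_left hK.le hν1)
  have hνM : 1 ≤ ν * M := by
    have h3 : (1 / M : ℝ) ^ 2 ≤ ν ^ 2 := by
      refine le_trans ?_ hR
      rw [div_pow, one_pow, sq]
      have : (0 : ℝ) < H₁ := by linarith
      gcongr
      exact hH.trans hHM
    have h4 := (pow_le_pow_iff_left₀ (by positivity) hν.le two_ne_zero).1 h3
    rwa [div_le_iff₀ hM0] at h4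
  obtain ⟨L, hL⟩ : ∃ L, L = Nat.log 2 M + 1 := ⟨_, rfl⟩
  obtain ⟨J, hJ⟩ : ∃ J, J = 2 * L + J₀ := ⟨_, rfl⟩
  have hML : (M : ℝ) ≤ 2 ^ L := by
    have := Nat.lt_pow_succ_log_self (b := 2) (by norm_num) M
    rw [hL]; exact_mod_cast this.le
  have hJM : (D + 2) * C₀ * (M : ℝ) ^ 2 ≤ 2 ^ J := by
    calc (D + 2) * C₀ * (M : ℝ) ^ 2 ≤ 2 ^ J₀ * (2 ^ L) ^ 2 := by gcongr
      _ = _ := by rw [hJ, pow_add, ← pow_mul, mul_comm L 2]; ring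
  classical
  set jκ : ((ℕ × ℕ) × (ℕ × ℕ)) → ℕ := fun q =>
    Nat.findGreatest (fun j => |czκ α q| ≤ C₀ * ν / 2 ^ j * (H₂ : ℝ) ^ 2) J with hjκ
  set idx : ((ℕ × ℕ) × (ℕ × ℕ)) × ℕ → (ℕ × ℕ) × ℕ := fun x =>
    ((Nat.log 2 (B x), Nat.log 2 (G x * B x)), jκ x.1) with hidx
  set T := (Finset.range L ×ˢ Finset.range L) ×ˢ Finset.range (J + 1) with hT
  have hGM : ∀ x ∈ 𝒮, G x * B x ≤ M := by
    intro x hx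
    have h3 := (h𝒮 x hx).2.2.2.2.2.2.2.1
    have h4 : ((G x * B x : ℕ) : ℝ) ≤ M :=
      (le_mul_of_one_le_right (Nat.cast_nonneg _) hK1).trans h3
    exact_mod_cast h4
  have hmaps : ∀ x ∈ 𝒮, idx x ∈ T := by
    intro x hx
    have h3 := hGM x hx
    have h4 : B x ≤ G x * B x := Nat.le_mul_of_pos_left _ (h𝒮 x hx).2.2.2.2.2.1
    rw [hT, hidx, Finset.mem_product, Finset.mem_product, Finset.mem_range, Finset.mem_range,
      Finset.mem_range, hL]
    refine ⟨⟨Nat.lt_succ_of_le (Nat.log_mono_right (b := 2) (h4.trans h3)),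
      Nat.lt_succ_of_le (Nat.log_mono_right (b := 2) h3)⟩, Nat.lt_succ_of_le (Nat.findGreatest_le _)⟩
  rw [← Finset.sum_fiberwise_of_maps_to hmaps]
  have hTc : (T.card : ℝ) ≤ C2 * (M : ℝ) ^ (η / 2) := by
    refine le_trans (le_of_eq ?_) (hlog M hM)
    rw [hT, Finset.card_product, Finset.card_product, Finset.card_range, Finset.card_range, hJ, hL]
  have hbound : ∀ t ∈ T, ∑ x ∈ 𝒮 with idx x = t, (G x : ℝ) ≤
      2 * (C1 * (M : ℝ) ^ (η / 2) * (((H₁ : ℝ) * H₂) ^ 2 * (ν * K))) := by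
    rintro ⟨⟨u, v⟩, j⟩ ht
    obtain ⟨𝒞, h𝒞⟩ : ∃ 𝒞, 𝒞 = 𝒮.filter fun x => idx x = ((u, v), j) := ⟨_, rfl⟩
    rw [← h𝒞]
    rcases 𝒞.eq_empty_or_nonempty with he | ⟨x₀, hx₀⟩
    · rw [he, Finset.sum_empty]; positivity
    have hmem : ∀ x ∈ 𝒞, x ∈ 𝒮 ∧ (2 : ℝ) ^ u ≤ B x ∧ (B x : ℝ) ≤ 2 * 2 ^ u ∧
        (2 : ℝ) ^ v ≤ ((G x * B x : ℕ) : ℝ) ∧ ((G x * B x : ℕ) : ℝ) ≤ 2 * 2 ^ v ∧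
        jκ x.1 = j := by
      intro x hx
      rw [h𝒞, Finset.mem_filter] at hx
      obtain ⟨hx, hi⟩ := hx
      rw [hidx, Prod.mk.injEq, Prod.mk.injEq] at hi
      obtain ⟨⟨rfl, rfl⟩, hj⟩ := hi
      obtain ⟨-, -, -, -, B1, G1, -⟩ := h𝒮 x hx
      have B0 : B x ≠ 0 := by omega
      have GB0 : G x * B x ≠ 0 := Nat.mul_ne_zero (by omega) B0
      refine ⟨hx, ?_, ?_, ?_, ?_, hj⟩
      · exact_mod_cast Nat.pow_log_le_self 2 B0
      · have := (Nat.lt_pow_succ_log_self (b := 2) (by norm_num) (B x)).le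
        rw [pow_succ'] at this; exact_mod_cast this
      · exact_mod_cast Nat.pow_log_le_self 2 GB0
      · have := (Nat.lt_pow_succ_log_self (b := 2) (by norm_num) (G x * B x)).le
        rw [pow_succ'] at this; exact_mod_cast this
    obtain ⟨b, hb⟩ : ∃ b : ℝ, b = 2 ^ u := ⟨_, rfl⟩
    obtain ⟨s, hs⟩ : ∃ s : ℝ, s = 2 ^ v := ⟨_, rfl⟩
    obtain ⟨μ, hμ⟩ : ∃ μ : ℝ, μ = C₀ * ν / 2 ^ j := ⟨_, rfl⟩
    rw [← hb, ← hs] at hmem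
    have hb1 : 1 ≤ b := by rw [hb]; exact one_le_pow₀ (by norm_num)
    have hs1 : 1 ≤ s := by rw [hs]; exact one_le_pow₀ (by norm_num)
    have hμ0 : 0 < μ := by rw [hμ]; positivity
    have hμle : μ ≤ C₀ * ν := by
      rw [hμ]; exact div_le_self (by positivity) (one_le_pow₀ (by norm_num))
    have hj' : ∀ x ∈ 𝒞, |czκ α x.1| ≤ μ * (H₂ : ℝ) ^ 2 := by
      intro x hx
      obtain ⟨hx, -, -, -, -, hj⟩ := hmem x hx
      have := Nat.findGreatest_spec (P := fun j => |czκ α x.1| ≤ C₀ * ν / 2 ^ j * (H₂ : ℝ) ^ 2)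
        (m := 0) (n := J) (Nat.zero_le _) (by
          simpa using (h𝒮 x hx).2.2.1)
      rw [hμ, ← hj]; exact this
    have hbs : b ≤ s := by
      have hx := hx₀
      rw [h𝒞, Finset.mem_filter] at hx
      obtain ⟨hx, hi⟩ := hx
      rw [hidx, Prod.mk.injEq, Prod.mk.injEq] at hi
      rw [hb, hs, ← hi.1.1, ← hi.1.2]
      have h4 : B x₀ ≤ G x₀ * B x₀ := Nat.le_mul_of_pos_left _ (h𝒮 x₀ hx).2.2.2.2.2.1
      exact pow_le_pow_right₀ (by norm_num) (Nat.log_mono_right h4)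
    have hsK : s * K ≤ M := by
      obtain ⟨hx, -, -, h3, -, -⟩ := hmem x₀ hx₀
      exact (mul_le_mul_of_nonneg_right h3 hK.le).trans (h𝒮 x₀ hx).2.2.2.2.2.2.2.1
    have hs0 : 0 < s := by linarith
    have hb0 : 0 < b := by linarith
    have hcls := hcl M H₁ H₂ n K ν μ b s 𝒞 A B hM hH1 hH hHM hK hν hcase hK2 hνK hMR hK6 hμ₀ hR
      hμ0 (hμle.trans (by rw [hD]; gcongr; linarith)) hb1 hbs hsK
      ((hbs.trans (le_mul_of_one_le_right hs0.le hK1)).trans hsK)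
      (hn.trans (by rw [hD]; gcongr; linarith))
      (by
        refine le_trans ?_ hτ1
        rw [hD]
        gcongr
        · exact hμle.trans (mul_le_of_le_one_right (by linarith) hν1)
        · exact le_mul_of_one_le_right hM0.le hs1)
      (by
        intro x hx
        obtain ⟨hxS, -, B2, s1, -, -⟩ := hmem x hx
        obtain ⟨c1, c2, -, c3, c4, -, c5, -, c6⟩ := h𝒮 x hxS
        have hκx := hj' x hx
        refine ⟨c1, c2, hκx, c3, c4, c5, B2, c6.trans ?_⟩
        have hCD : C₀ ≤ D := by linarith
        have e1 : |czκ α x.1| / (M : ℝ) ^ 2 ≤ μ * ((H₂ : ℝ) / M) ^ 2 := by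
          rw [div_pow, ← mul_div_assoc]; gcongr
        gcongr)
      (by
        -- In the last class `|κ|` is only bounded above.
        by_cases hjJ : j = J
        · left
          have hμM : (D + 2) * μ * (M : ℝ) ^ 2 ≤ ν := by
            rw [hμ, hjJ]
            have : (D + 2) * (C₀ * ν / 2 ^ J) * (M : ℝ) ^ 2 =
              ν * ((D + 2) * C₀ * (M : ℝ) ^ 2 / 2 ^ J) := by ring
            rw [this]
            exact mul_le_of_le_one_right hν.le ((div_le_one (by positivity)).2 hJM)
          constructor
          · have h5 : μ * M ≤ (D + 2) * μ * (M : ℝ) ^ 2 := by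
              calc μ * M ≤ μ * M * ((D + 2) * M) := by
                    refine le_mul_of_one_le_right (by positivity) ?_
                    exact one_le_mul_of_one_le_of_one_le (by linarith) (by linarith)
                _ = _ := by ring
            calc μ = μ * 1 := by ring
              _ ≤ μ * (ν * M) := by gcongr
              _ = ν * (μ * M) := by ring
              _ ≤ ν * ν := by gcongr; exact h5.trans hμM
              _ = _ := (sq ν).symm
          · calc (D + 2) * μ * (H₂ : ℝ) ^ 2 ≤ (D + 2) * μ * (M : ℝ) ^ 2 := by gcongr
              _ ≤ 1 := hμM.trans hν1
        · right
          intro q a b'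
          rcases (𝒞.filter fun x => x.1 = q ∧ A x = a ∧ B x = b').eq_empty_or_nonempty with
            he | ⟨x, hx⟩
          · rw [he, Finset.card_empty, Nat.cast_zero]; positivity
          obtain ⟨hx, hxq, -, -⟩ := Finset.mem_filter.1 hx
          obtain ⟨-, -, -, -, -, hj⟩ := hmem x hx
          have hjle : j < J := by
            have : jκ x.1 ≤ J := Nat.findGreatest_le _
            omega
          have hlow : μ * (H₂ : ℝ) ^ 2 ≤ 2 * |czκ α q| := by
            have := Nat.findGreatest_is_greatest
              (P := fun j => |czκ α x.1| ≤ C₀ * ν / 2 ^ j * (H₂ : ℝ) ^ 2) (n := J) (k := j + 1)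
              (by have : jκ x.1 < j + 1 := by omega
                  exact this) (by omega)
            rw [not_le, hxq] at this
            have e : C₀ * ν / 2 ^ (j + 1) = μ / 2 := by rw [hμ, pow_succ]; field_simp
            rw [e] at this
            linarith
          have hκ0 : 0 < |czκ α q| := by
            have : 0 < μ * (H₂ : ℝ) ^ 2 := by positivity
            linarith
          have h6 := hfib q a b' s hs0 hκ0
          have h7 : (𝒞.filter fun x => x.1 = q ∧ A x = a ∧ B x = b').card ≤ (𝒮.filter fun x =>
              x.1 = q ∧ A x = a ∧ B x = b' ∧ s ≤ ((G x * B x : ℕ) : ℝ)).card := by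
            apply Finset.card_le_card
            intro y hy
            obtain ⟨hy, y1, y2, y3⟩ := Finset.mem_filter.1 hy
            obtain ⟨hyS, -, -, y4, -, -⟩ := hmem y hy
            exact Finset.mem_filter.2 ⟨hyS, y1, y2, y3, y4⟩
          have h7' : ((𝒞.filter fun x => x.1 = q ∧ A x = a ∧ B x = b').card : ℝ) ≤ (𝒮.filter fun x =>
              x.1 = q ∧ A x = a ∧ B x = b' ∧ s ≤ ((G x * B x : ℕ) : ℝ)).card := by
            exact_mod_cast h7
          refine h7'.trans (h6.trans ?_)
          have e : M * K ^ 2 / (s * |czκ α q|) ≤ 2 * (M * K ^ 2 / (s * (H₂ : ℝ) ^ 2 * μ)) := by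
            rw [← mul_div_assoc, div_le_div_iff₀ (by positivity) (by positivity)]
            calc M * K ^ 2 * (s * (H₂ : ℝ) ^ 2 * μ) = M * K ^ 2 * s * (μ * (H₂ : ℝ) ^ 2) := by ring
              _ ≤ M * K ^ 2 * s * (2 * |czκ α q|) := by gcongr
              _ = _ := by ring
          calc C₀ * (1 + M * K ^ 2 / (s * |czκ α q|))
              ≤ C₀ * (2 + 2 * (M * K ^ 2 / (s * (H₂ : ℝ) ^ 2 * μ))) := by gcongr; norm_num
            _ = _ := by rw [hD]; ring)
    have hsum : ∑ x ∈ 𝒞, (G x : ℝ) ≤ ∑ _x ∈ 𝒞, 2 * (s / b) := by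
      refine Finset.sum_le_sum fun x hx => ?_
      obtain ⟨-, B1, -, -, s2, -⟩ := hmem x hx
      rw [← mul_div_assoc, le_div_iff₀ hb0]
      calc (G x : ℝ) * b ≤ G x * B x := by gcongr
        _ ≤ _ := by push_cast at s2; exact s2
    rw [Finset.sum_const, nsmul_eq_mul] at hsum
    calc _ ≤ _ := hsum
      _ = 2 * (𝒞.card * (s / b)) := by ring
      _ ≤ _ := by gcongr
  refine (Finset.sum_le_sum hbound).trans ?_
  rw [Finset.sum_const, nsmul_eq_mul]
  have e : (M : ℝ) ^ η = (M : ℝ) ^ (η / 2) * (M : ℝ) ^ (η / 2) := by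
    rw [← Real.rpow_add hM0]; congr 1; ring
  calc (T.card : ℝ) * (2 * (C1 * (M : ℝ) ^ (η / 2) * (((H₁ : ℝ) * H₂) ^ 2 * (ν * K))))
      ≤ (C2 * (M : ℝ) ^ (η / 2)) *
        (2 * (C1 * (M : ℝ) ^ (η / 2) * (((H₁ : ℝ) * H₂) ^ 2 * (ν * K)))) := by gcongr
    _ = _ := by rw [e]; ring

/-! ### Pairs close to the curves -/

/-- The numerical conditions under which `cz_geom` applies to the curve of a quadruple, with
intervals of length `c₀M/K`. The choice of `c₀` makes the determinant less than `1`. -/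
theorem cz_quad_num {C c W c₀ Z M K ν H x ω : ℝ} (hC : 0 < C) (hc : 0 < c) (hW : 1 ≤ W)
    (hc₀ : c₀ = 1 / (8 * (C ^ 2 + C + 1))) (hZ : 2 * W * (C ^ 2 + 2 * C + 1) ≤ Z)
    (hM : 0 < M) (hK : 0 < K) (hH : 0 < H) (hZH : Z * H ≤ M) (hZK : Z * K ≤ M) (hν : 0 < ν)
    (hν1 : ν ≤ 1) (hνK : ν * H ^ 2 ≤ K ^ 3) (hx : 0 ≤ x) (hx1 : x ≤ C * (ν * H ^ 2))
    (hω : W⁻¹ ≤ ω) :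
    2 * (C * (K / M ^ 2 * M)) < 1 ∧
    C * (x / M ^ 3) * (c₀ * M / K) ^ 3 + 4 * (C * (K / M ^ 2 * M)) * (c₀ * M / K) < 1 ∧
    C * (x / M ^ 2) + 2 * (C * (K / M ^ 2 * M)) < ω ∧
    (∀ s t : ℝ, 0 < s → 0 < x →
      c * (x / M ^ 3) * (c₀ * M / K) * s * (t - 2) ≤ 4 * (C * (K / M ^ 2 * M)) →
      t ≤ 2 + 4 * C / (c * c₀) * (M * K ^ 2 / (s * x))) := by
  have hc₀p : 0 < c₀ := by rw [hc₀]; positivity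
  have hc₀1 : c₀ ≤ 1 := by
    rw [hc₀, div_le_one (by positivity)]; nlinarith [sq_nonneg C]
  have hc₀2 : c₀ * (8 * (C ^ 2 + C + 1)) = 1 := by rw [hc₀]; field_simp
  have he : K / M ^ 2 * M = K / M := by field_simp
  rw [he]
  have hZp : 1 ≤ Z := by
    have : 1 * 1 ≤ W * (C ^ 2 + 2 * C + 1) := mul_le_mul hW (by nlinarith) zero_le_one (by linarith)
    linarith
  have hKM : K / M ≤ Z⁻¹ := by
    rw [div_le_iff₀ hM, inv_mul_eq_div, le_div_iff₀ (by linarith)]; linarith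
  have hHM : H / M ≤ Z⁻¹ := by
    rw [div_le_iff₀ hM, inv_mul_eq_div, le_div_iff₀ (by linarith)]; linarith
  have hHM1 : H / M ≤ 1 := hHM.trans (inv_le_one_of_one_le₀ hZp)
  have hHM2 : (H / M) ^ 2 ≤ Z⁻¹ := by
    calc (H / M) ^ 2 = H / M * (H / M) := sq _
      _ ≤ 1 * Z⁻¹ := by gcongr
      _ = Z⁻¹ := one_mul _
  have hxM : x / M ^ 2 ≤ C * Z⁻¹ := by
    calc x / M ^ 2 ≤ C * (1 * H ^ 2) / M ^ 2 := by
          gcongr; exact hx1.trans (by gcongr)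
      _ = C * (H / M) ^ 2 := by field_simp
      _ ≤ _ := by gcongr
  have hZW : (C ^ 2 + 2 * C + 1) * Z⁻¹ ≤ W⁻¹ / 2 := by
    rw [← div_eq_mul_inv, div_le_iff₀ (by linarith)]
    calc C ^ 2 + 2 * C + 1 = W⁻¹ / 2 * (2 * W * (C ^ 2 + 2 * C + 1)) := by field_simp
      _ ≤ _ := by gcongr
  have hWi : 0 < W⁻¹ := by positivity
  have hWi1 : W⁻¹ ≤ 1 := inv_le_one_of_one_le₀ hW
  have hZi : 0 < Z⁻¹ := by positivity
  have hCK : C * (K / M) ≤ C * Z⁻¹ := by gcongr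
  have hCx : C * (x / M ^ 2) ≤ C * (C * Z⁻¹) := by gcongr
  have hCCZ : 0 ≤ C * (C * Z⁻¹) := by positivity
  refine ⟨by linarith, ?_, by linarith, ?_⟩
  · have h1 : C * (x / M ^ 3) * (c₀ * M / K) ^ 3 ≤ C ^ 2 * c₀ := by
      calc C * (x / M ^ 3) * (c₀ * M / K) ^ 3 = C * c₀ ^ 3 * (x / K ^ 3) := by field_simp
        _ ≤ C * c₀ * C := by
          have a1 : c₀ ^ 3 ≤ c₀ := by
            calc c₀ ^ 3 = c₀ * c₀ ^ 2 := by ring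
              _ ≤ c₀ * 1 := by gcongr; exact pow_le_one₀ hc₀p.le hc₀1
              _ = c₀ := mul_one _
          have a2 : x / K ^ 3 ≤ C := by
            rw [div_le_iff₀ (by positivity)]
            exact hx1.trans (by gcongr)
          gcongr
        _ = _ := by ring
    have h2 : 4 * (C * (K / M)) * (c₀ * M / K) = 4 * C * c₀ := by field_simp
    rw [h2]
    nlinarith
  · intro s t hs hxp h
    have h1 : c * (x / M ^ 3) * (c₀ * M / K) * s = c * c₀ * x * s / (M ^ 2 * K) := by field_simp
    have hp : 0 < c * c₀ * x * s / (M ^ 2 * K) := by positivity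
    rw [h1, mul_comm, ← le_div_iff₀ hp] at h
    have h2 : 4 * (C * (K / M)) / (c * c₀ * x * s / (M ^ 2 * K)) =
      4 * C / (c * c₀) * (M * K ^ 2 / (s * x)) := by field_simp
    linarith

set_option maxHeartbeats 1000000 in
/-- The geometry of one quadruple: `cz_geom` applied to the curve of `cz_curve`, with `ℓ = c₀M/K`. -/
theorem cz_quad {α : ℝ} (h0 : α ≠ 0) (h1 : α ≠ 1) (h2 : α ≠ 2) (h3 : α ≠ 3) :
    ∃ C₀ c₀ Z : ℝ, 1 ≤ C₀ ∧ 0 < c₀ ∧ 1 ≤ Z ∧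
    ∀ (M H₁ H₂ : ℕ) (K ν : ℝ) (q : (ℕ × ℕ) × (ℕ × ℕ)) (P : Finset (ℕ × ℕ)),
      1 ≤ H₁ → H₁ ≤ H₂ → Z * H₂ ≤ M → 0 < K → Z * K ≤ M →
      ((H₁ : ℝ) * H₂) ^ 2 / (M : ℝ) ^ 2 ≤ K → K / (M : ℝ) ^ 2 ≤ ν → ν ≤ 1 →
      ν * (H₂ : ℝ) ^ 2 ≤ K ^ 3 → q ∈ czQ H₁ H₂ → P.Nonempty →
      (∀ p ∈ P, ((M : ℝ) ≤ p.1 ∧ (p.1 : ℝ) ≤ 2 * M ∧ (M : ℝ) ≤ p.2 ∧ (p.2 : ℝ) ≤ 2 * M) ∧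
        |czT α p.1 q.1.1 q.2.1 - czT α p.2 q.1.2 q.2.2|
          ≤ K / (M : ℝ) ^ 2 * ((M : ℝ) ^ (α - 2) * H₁ * H₂) ∧
        |((q.1.1 : ℝ) ^ 2 + (q.2.1 : ℝ) ^ 2) / ((p.1 : ℝ) + ((q.1.1 : ℝ) + q.2.1) / 2) ^ 2
          - ((q.1.2 : ℝ) ^ 2 + (q.2.2 : ℝ) ^ 2) / ((p.2 : ℝ) + ((q.1.2 : ℝ) + q.2.2) / 2) ^ 2|
          ≤ ν * ((H₂ : ℝ) / M) ^ 2) →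
      |czκ α q| ≤ C₀ * ν * (H₂ : ℝ) ^ 2 ∧ ∃ A B G : ℕ → ℕ,
        (∀ i, 2 ≤ (P.filter fun p => ⌊((p.2 : ℝ) - M) / (c₀ * M / K)⌋₊ = i).card →
          (P.filter fun p => ⌊((p.2 : ℝ) - M) / (c₀ * M / K)⌋₊ = i).card ≤ 2 * G i ∧
          1 ≤ A i ∧ 1 ≤ B i ∧ 1 ≤ G i ∧ Nat.Coprime (A i) (B i) ∧ ((G i * B i : ℕ) : ℝ) * K ≤ M ∧
          |(A i : ℝ) / B i - czω α q| ≤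
            C₀ * (|czκ α q| / (M : ℝ) ^ 2 + K / (M * ((G i * B i : ℕ) : ℝ)))) ∧
        ∀ (a b : ℕ) (s : ℝ) (T : Finset ℕ), 0 < s → 0 < |czκ α q| →
          (∀ i ∈ T, 2 ≤ (P.filter fun p => ⌊((p.2 : ℝ) - M) / (c₀ * M / K)⌋₊ = i).card ∧
            A i = a ∧ B i = b ∧ s ≤ ((G i * B i : ℕ) : ℝ)) →
          (T.card : ℝ) ≤ C₀ * (1 + M * K ^ 2 / (s * |czκ α q|)) := by
  obtain ⟨W, C, c, ρ, hW, hC, hc, hρ, hcur⟩ := cz_curve h0 h1 h2 h3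
  obtain ⟨c₀, hc₀⟩ : ∃ c₀, c₀ = 1 / (8 * (C ^ 2 + C + 1)) := ⟨_, rfl⟩
  have hc₀p : 0 < c₀ := by rw [hc₀]; positivity
  have hc₀1 : c₀ ≤ 1 := by
    rw [hc₀, div_le_one (by positivity)]; nlinarith [sq_nonneg C]
  obtain ⟨Z, hZ⟩ : ∃ Z, Z = 2 * W * (C ^ 2 + 2 * C + 1) + 1 / ρ := ⟨_, rfl⟩
  have hρi : 0 < 1 / ρ := by positivity
  have hZ2 : 2 * W * (C ^ 2 + 2 * C + 1) ≤ Z := by linarith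
  have hZ1 : 1 ≤ Z := by
    have : 1 * 1 ≤ W * (C ^ 2 + 2 * C + 1) := mul_le_mul hW (by nlinarith) zero_le_one (by linarith)
    linarith
  have hZρ : 1 / ρ ≤ Z := by
    have : 0 ≤ 2 * W * (C ^ 2 + 2 * C + 1) := by positivity
    linarith
  have hCc : 0 < 4 * C / (c * c₀) := by positivity
  obtain ⟨C₀, hC₀⟩ : ∃ C₀, C₀ = 2 + 2 * C + 4 * C / (c * c₀) := ⟨_, rfl⟩
  have hC₀1 : 1 ≤ C₀ := by linarith
  refine ⟨C₀, c₀, Z, hC₀1, hc₀p, hZ1, ?_⟩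
  intro M H₁ H₂ K ν q P hH₁ hH hZH hK hZK hR hKν hν1 hνK hq hne hP
  have hH₁p : (0 : ℝ) < H₁ := by exact_mod_cast hH₁
  have hHr : (H₁ : ℝ) ≤ H₂ := by exact_mod_cast hH
  have hH₂p : (0 : ℝ) < H₂ := hH₁p.trans_le hHr
  have hMp : (0 : ℝ) < M := lt_of_lt_of_le (by positivity) hZK
  have hν : 0 < ν := lt_of_lt_of_le (by positivity) hKν
  obtain ⟨⟨a1, a2⟩, ⟨a3, a4⟩, ⟨b1, b2⟩, b3, b4⟩ := cz_mem_Q hq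
  have hρH : (H₂ : ℝ) ≤ ρ * M := by
    have : 1 / ρ * H₂ ≤ M := (mul_le_mul_of_nonneg_right hZρ hH₂p.le).trans hZH
    calc (H₂ : ℝ) = ρ * (1 / ρ * H₂) := by field_simp
      _ ≤ _ := by gcongr
  have hRD : ((H₁ : ℝ) * H₂) ^ 2 / (M : ℝ) ^ 4 ≤ K / (M : ℝ) ^ 2 := by
    calc ((H₁ : ℝ) * H₂) ^ 2 / (M : ℝ) ^ 4 = ((H₁ : ℝ) * H₂) ^ 2 / (M : ℝ) ^ 2 / (M : ℝ) ^ 2 := by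
          field_simp
      _ ≤ _ := by gcongr
  obtain ⟨hω1, hω2, φ, φ', φ'', hd, hcl⟩ := hcur M H₁ H₂ (K / (M : ℝ) ^ 2) q.1.1 q.2.1 q.1.2 q.2.2
    (czω α q) (czκ α q) hMp hH₁p hHr hρH hRD a1 a2 a3 a4 b1 b2 b3 b4 rfl rfl
  have hκ : |czκ α q| ≤ C * (ν * (H₂ : ℝ) ^ 2) := by
    obtain ⟨p, hp⟩ := hne
    obtain ⟨⟨p1, p2, p3, p4⟩, p5, p6⟩ := hP p hp
    exact (hcl p.1 p.2 p1 p2 p3 p4 p5).2 ν hKν p6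
  obtain ⟨n1, n2, n3, n4⟩ := cz_quad_num hC hc hW hc₀ hZ2 hMp hK hH₂p hZH hZK hν hν1 hνK
    (abs_nonneg _) hκ hω1
  refine ⟨hκ.trans ?_, ?_⟩
  · rw [mul_assoc]; gcongr; linarith
  obtain ⟨A, B, G, hABG, hfib⟩ := cz_geom (M := M) (ℓ := c₀ * M / K) (e := C * (K / (M : ℝ) ^ 2 * M))
    (l := c * (|czκ α q| / (M : ℝ) ^ 3)) (Λ := C * (|czκ α q| / (M : ℝ) ^ 3)) (ω := czω α q)
    (Γ := C * (|czκ α q| / (M : ℝ) ^ 2)) (φ := φ) (φ' := φ') (φ'' := φ'') P (by positivity)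
    (by positivity) n1 (by positivity) (by positivity) (fun x hx hx' => (hd x hx hx').1)
    (fun x hx hx' => (hd x hx hx').2.1) (fun x hx hx' => (hd x hx hx').2.2.1)
    (fun x hx hx' => (hd x hx hx').2.2.2) n2 n3 (fun p hp => by
      obtain ⟨⟨p1, p2, p3, p4⟩, p5, p6⟩ := hP p hp
      exact ⟨p3, p4, (hcl p.1 p.2 p1 p2 p3 p4 p5).1⟩)
  refine ⟨A, B, G, fun i hi => ?_, fun a b s T hs hx hT => ?_⟩
  · obtain ⟨g1, g2, g3, g4, g5, g6, g7⟩ := hABG i hi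
    refine ⟨g1, g2, g3, g4, g5, ?_, g7.trans ?_⟩
    · have : c₀ * M / K * K ≤ M := by
        rw [div_mul_cancel₀ _ hK.ne']
        exact mul_le_of_le_one_left hMp.le hc₀1
      exact (mul_le_mul_of_nonneg_right g6 hK.le).trans this
    · have hGB : (0 : ℝ) < ((G i * B i : ℕ) : ℝ) := by exact_mod_cast Nat.mul_pos g4 g3
      have e1 : 2 * (C * (K / (M : ℝ) ^ 2 * M)) / ((G i * B i : ℕ) : ℝ)
          = 2 * C * (K / (M * ((G i * B i : ℕ) : ℝ))) := by field_simp
      rw [e1, mul_add]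
      gcongr <;> linarith
  · have := n4 s T.card hs hx (hfib a b s T hs hT)
    refine this.trans ?_
    rw [mul_add]
    gcongr <;> linarith

set_option maxHeartbeats 1000000 in
/-- The number of sextuples satisfying both restrictions. Intervals with at most one lattice point
are counted by `cz_FI_one`, all others by `cz_sum`. -/
theorem cz_pairs {α : ℝ} (h0 : α ≠ 0) (h1 : α ≠ 1) (h2 : α ≠ 2) (h3 : α ≠ 3) {η : ℝ}
    (hη : 0 < η) :
    ∃ C Z : ℝ, 0 < C ∧ 1 ≤ Z ∧
    ∀ (M H₁ H₂ : ℕ) (K ν : ℝ) (𝒱 : Finset (((ℕ × ℕ) × (ℕ × ℕ)) × (ℕ × ℕ))),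
      2 ≤ M → 1 ≤ H₁ → H₁ ≤ H₂ → Z * H₂ ≤ M → 0 < K → Z * K ≤ M →
      ((H₁ : ℝ) * H₂) ^ 2 / (M : ℝ) ^ 2 ≤ K → K / (M : ℝ) ^ 2 ≤ ν →
      ((ν = 1 ∧ (H₂ : ℝ) ^ 2 ≤ K ^ 3) ∨ (ν ≤ 1 ∧ ν * (H₂ : ℝ) ^ 2 = K ^ 3)) →
      (H₂ : ℝ) ≤ K ^ 2 → 1 ≤ ν * K → M / ((H₁ : ℝ) * H₂) ≤ ν * K →
      (H₁ : ℝ) * H₂ ^ 3 ≤ K ^ 6 → ((H₁ : ℝ) / H₂) ^ 2 ≤ ν ^ 2 → 1 / ((H₁ : ℝ) * H₂) ≤ ν ^ 2 →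
      (∀ x ∈ 𝒱, x.1 ∈ czQ H₁ H₂ ∧
        ((M : ℝ) ≤ x.2.1 ∧ (x.2.1 : ℝ) ≤ 2 * M ∧ (M : ℝ) ≤ x.2.2 ∧ (x.2.2 : ℝ) ≤ 2 * M) ∧
        |czT α x.2.1 x.1.1.1 x.1.2.1 - czT α x.2.2 x.1.1.2 x.1.2.2|
          ≤ K / (M : ℝ) ^ 2 * ((M : ℝ) ^ (α - 2) * H₁ * H₂) ∧
        |((x.1.1.1 : ℝ) ^ 2 + (x.1.2.1 : ℝ) ^ 2) / ((x.2.1 : ℝ) + ((x.1.1.1 : ℝ) + x.1.2.1) / 2) ^ 2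
          - ((x.1.1.2 : ℝ) ^ 2 + (x.1.2.2 : ℝ) ^ 2) /
            ((x.2.2 : ℝ) + ((x.1.1.2 : ℝ) + x.1.2.2) / 2) ^ 2|
          ≤ ν * ((H₂ : ℝ) / M) ^ 2) →
      (𝒱.card : ℝ) ≤ C * (M : ℝ) ^ η * (((H₁ : ℝ) * H₂) ^ 2 * (ν * K)) := by
  classical
  obtain ⟨C₀, c₀, Z, hC₀, hc₀, hZ, hquad⟩ := cz_quad h0 h1 h2 h3
  obtain ⟨C₁, hC₁⟩ : ∃ C₁, C₁ = C₀ + 1 / c₀ + 1 := ⟨_, rfl⟩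
  have hc₀i : 0 < 1 / c₀ := by positivity
  have hC₁1 : 1 ≤ C₁ := by linarith
  have hC₀1 : C₀ ≤ C₁ := by linarith
  obtain ⟨Ca, hCa, hsum⟩ := cz_sum h1 h2 hη hC₁1
  obtain ⟨Cb, hCb, hFI⟩ := cz_FI_one_pow h1 h2 hη
  obtain ⟨Z', hZ'⟩ : ∃ Z', Z' = Z + 2 * C₁ * (C₁ + 1) := ⟨_, rfl⟩
  have hC₁Z : 0 < 2 * C₁ * (C₁ + 1) := by positivity
  have hZZ : Z ≤ Z' := by linarith
  have hZ1 : 1 ≤ Z' := by linarith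
  refine ⟨C₁ * (Cb * (C₁ + 2)) + 2 * Ca, Z', by positivity, hZ1, ?_⟩
  intro M H₁ H₂ K ν 𝒱 hM hH₁ hH hZH hK hZK hR hKν hνor hHK hνK1 hMR hHK6 hμν hRν h𝒱
  have hH₁p : (0 : ℝ) < H₁ := by exact_mod_cast hH₁
  have hHr : (H₁ : ℝ) ≤ H₂ := by exact_mod_cast hH
  have hH₂p : (0 : ℝ) < H₂ := hH₁p.trans_le hHr
  have hMp : (0 : ℝ) < M := by exact_mod_cast (by omega : 0 < M)
  have hν : 0 < ν := lt_of_lt_of_le (by positivity) hKν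
  have hν1 : ν ≤ 1 := by rcases hνor with h | h <;> linarith [h.1]
  have hνH : ν * (H₂ : ℝ) ^ 2 ≤ K ^ 3 := by
    rcases hνor with ⟨h, h'⟩ | ⟨_, h'⟩
    · rw [h, one_mul]; exact h'
    · exact h'.le
  have hK1 : 1 ≤ K := hνK1.trans (mul_le_of_le_one_left hK.le hν1)
  have hHM' : (H₂ : ℝ) ≤ M := (le_mul_of_one_le_left hH₂p.le hZ1).trans hZH
  have hHM : H₂ ≤ M := by exact_mod_cast hHM'
  obtain ⟨ℓ, hℓ⟩ : ∃ ℓ, ℓ = c₀ * M / K := ⟨_, rfl⟩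
  have hℓp : 0 < ℓ := by rw [hℓ]; positivity
  obtain ⟨P, hPdef⟩ : ∃ P : (ℕ × ℕ) × (ℕ × ℕ) → Finset (ℕ × ℕ),
      P = fun q => (𝒱.filter fun x => x.1 = q).image Prod.snd := ⟨_, rfl⟩
  have hPmem : ∀ q p, p ∈ P q ↔ (q, p) ∈ 𝒱 := by
    intro q p
    rw [hPdef]
    simp only [Finset.mem_image, Finset.mem_filter]
    constructor
    · rintro ⟨⟨a, b⟩, ⟨h, h'⟩, h''⟩
      simp only at h' h''
      rwa [← h', ← h'']
    · intro h
      exact ⟨(q, p), ⟨h, rfl⟩, rfl⟩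
  have hPcard : ∀ q, (P q).card = (𝒱.filter fun x => x.1 = q).card := by
    intro q
    rw [hPdef]
    apply Finset.card_image_of_injOn
    rintro ⟨a, b⟩ hx ⟨a', b'⟩ hy h
    simp only [Finset.coe_filter, Set.mem_ofPred_eq] at hx hy h
    rw [hx.2, hy.2, h]
  have hq' : ∀ q, ∃ A B G : ℕ → ℕ, (P q).Nonempty → q ∈ czQ H₁ H₂ ∧
      |czκ α q| ≤ C₀ * ν * (H₂ : ℝ) ^ 2 ∧
        (∀ i, 2 ≤ ((P q).filter fun p => ⌊((p.2 : ℝ) - M) / ℓ⌋₊ = i).card →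
          ((P q).filter fun p => ⌊((p.2 : ℝ) - M) / ℓ⌋₊ = i).card ≤ 2 * G i ∧
          1 ≤ A i ∧ 1 ≤ B i ∧ 1 ≤ G i ∧ Nat.Coprime (A i) (B i) ∧ ((G i * B i : ℕ) : ℝ) * K ≤ M ∧
          |(A i : ℝ) / B i - czω α q| ≤
            C₀ * (|czκ α q| / (M : ℝ) ^ 2 + K / (M * ((G i * B i : ℕ) : ℝ)))) ∧
        ∀ (a b : ℕ) (s : ℝ) (T : Finset ℕ), 0 < s → 0 < |czκ α q| →
          (∀ i ∈ T, 2 ≤ ((P q).filter fun p => ⌊((p.2 : ℝ) - M) / ℓ⌋₊ = i).card ∧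
            A i = a ∧ B i = b ∧ s ≤ ((G i * B i : ℕ) : ℝ)) →
          (T.card : ℝ) ≤ C₀ * (1 + M * K ^ 2 / (s * |czκ α q|)) := by
    intro q
    by_cases hne : (P q).Nonempty
    · have hqQ : q ∈ czQ H₁ H₂ := by
        obtain ⟨p, hp⟩ := hne
        exact (h𝒱 _ ((hPmem q p).1 hp)).1
      obtain ⟨hκ, A, B, G, hA, hT⟩ := hquad M H₁ H₂ K ν q (P q) hH₁ hH
        ((mul_le_mul_of_nonneg_right hZZ hH₂p.le).trans hZH) hK
        ((mul_le_mul_of_nonneg_right hZZ hK.le).trans hZK) hR hKν hν1 hνH hqQ hne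
        (fun p hp => (h𝒱 _ ((hPmem q p).1 hp)).2)
      rw [← hℓ] at hA hT
      exact ⟨A, B, G, fun _ => ⟨hqQ, hκ, hA, hT⟩⟩
    · exact ⟨0, 0, 0, fun h => absurd h hne⟩
  choose A B G hABG using hq'
  obtain ⟨F, hF⟩ : ∃ F : (ℕ × ℕ) × (ℕ × ℕ) → ℕ → ℕ,
      F = fun q i => ((P q).filter fun p => ⌊((p.2 : ℝ) - M) / ℓ⌋₊ = i).card := ⟨_, rfl⟩
  obtain ⟨𝒬, h𝒬⟩ : ∃ 𝒬, 𝒬 = 𝒱.image Prod.fst := ⟨_, rfl⟩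
  have h𝒬ne : ∀ q ∈ 𝒬, (P q).Nonempty := by
    intro q hq
    rw [h𝒬, Finset.mem_image] at hq
    obtain ⟨⟨a, b⟩, hx, rfl⟩ := hq
    exact ⟨b, (hPmem _ _).2 hx⟩
  obtain ⟨n, hn⟩ : ∃ n, n = ⌊(M : ℝ) / ℓ⌋₊ + 1 := ⟨_, rfl⟩
  have hnK : (n : ℝ) ≤ C₁ * K := by
    have e1 : (M : ℝ) / ℓ = 1 / c₀ * K := by rw [hℓ]; field_simp
    have e2 : ((⌊(M : ℝ) / ℓ⌋₊ : ℕ) : ℝ) ≤ (M : ℝ) / ℓ := Nat.floor_le (by positivity)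
    rw [hn, hC₁]
    push_cast
    have e3 : 0 ≤ C₀ * K := by positivity
    linarith
  have hcard : ∀ q ∈ 𝒬, (P q).card = ∑ i ∈ Finset.range n, F q i := by
    intro q hq
    rw [hF]
    apply Finset.card_eq_sum_card_fiberwise
    intro p hp
    have := (h𝒱 _ ((hPmem q p).1 hp)).2.1.2.2.2
    simp only at this
    simp only [Finset.coe_range, Set.mem_Iio]
    rw [hn]
    apply Nat.lt_succ_of_le
    apply Nat.floor_le_floor
    gcongr
    linarith
  have h𝒱card : 𝒱.card = ∑ q ∈ 𝒬, ∑ i ∈ Finset.range n, F q i := by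
    rw [Finset.card_eq_sum_card_fiberwise (f := Prod.fst) (t := 𝒬)]
    · apply Finset.sum_congr rfl
      intro q hq
      rw [← hcard q hq, hPcard]
    · intro x hx
      rw [h𝒬]
      exact Finset.mem_coe.2 (Finset.mem_image_of_mem _ hx)
  obtain ⟨𝒮, h𝒮⟩ : ∃ 𝒮, 𝒮 = (𝒬 ×ˢ Finset.range n).filter fun x => 2 ≤ F x.1 x.2 := ⟨_, rfl⟩
  -- An interval with at most one lattice point counts once, any other at most `2G` times.
  have hsplit : 𝒱.card ≤ n * 𝒬.card + 2 * ∑ x ∈ 𝒮, G x.1 x.2 := by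
    rw [h𝒱card, ← Finset.sum_product', h𝒮, Finset.mul_sum, Finset.sum_filter]
    calc ∑ x ∈ 𝒬 ×ˢ Finset.range n, F x.1 x.2
        ≤ ∑ x ∈ 𝒬 ×ˢ Finset.range n, (1 + if 2 ≤ F x.1 x.2 then 2 * G x.1 x.2 else 0) := by
          apply Finset.sum_le_sum
          intro x hx
          rw [Finset.mem_product] at hx
          split_ifs with hif
          · have hif' := hif
            rw [hF] at hif'
            have := ((hABG x.1 (h𝒬ne _ hx.1)).2.2.1 x.2 hif').1
            rw [hF]
            simp only at this ⊢
            omega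
          · omega
      _ = _ := by
          rw [Finset.sum_add_distrib, Finset.sum_const, Finset.card_product, Finset.card_range]
          simp [mul_comm]
  have hsum' := hsum M H₁ H₂ n K ν 𝒮 (fun x => A x.1 x.2) (fun x => B x.1 x.2)
    (fun x => G x.1 x.2) hM hH₁ hH hHM hK hν hνor hHK hνK1 hMR hHK6 hμν hRν hnK (by
      have z1 : (H₂ : ℝ) / M ≤ Z'⁻¹ := by
        rw [div_le_iff₀ hMp, inv_mul_eq_div, le_div_iff₀ (by linarith)]; linarith
      have z2 : K / M ≤ Z'⁻¹ := by
        rw [div_le_iff₀ hMp, inv_mul_eq_div, le_div_iff₀ (by linarith)]; linarith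
      have z3 : (H₂ : ℝ) / M ≤ 1 := by rw [div_le_one hMp]; exact hHM'
      have z4 : ((H₂ : ℝ) / M) ^ 2 ≤ Z'⁻¹ := by
        calc ((H₂ : ℝ) / M) ^ 2 = (H₂ : ℝ) / M * ((H₂ : ℝ) / M) := sq _
          _ ≤ 1 * Z'⁻¹ := by gcongr
          _ = Z'⁻¹ := one_mul _
      calc 2 * C₁ * (C₁ * ((H₂ : ℝ) / M) ^ 2 + K / M) ≤ 2 * C₁ * (C₁ * Z'⁻¹ + Z'⁻¹) := by gcongr
        _ = (2 * C₁ * (C₁ + 1)) / Z' := by field_simp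
        _ ≤ 1 := by rw [div_le_one (by linarith)]; linarith) (by
      intro x hx
      rw [h𝒮, Finset.mem_filter, Finset.mem_product, Finset.mem_range] at hx
      obtain ⟨⟨x1, x2⟩, x3⟩ := hx
      rw [hF] at x3
      obtain ⟨y1, y2, y3, -⟩ := hABG x.1 (h𝒬ne _ x1)
      obtain ⟨-, g2, g3, g4, g5, g6, g7⟩ := y3 x.2 x3
      refine ⟨y1, x2, y2.trans (by gcongr), g2, g3, g4, g5, g6, g7.trans ?_⟩
      have : (0 : ℝ) ≤ M * ((G x.1 x.2 * B x.1 x.2 : ℕ) : ℝ) := by positivity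
      gcongr) (by
      intro q a b s hs hκ
      by_cases hq : q ∈ 𝒬
      · have := (hABG q (h𝒬ne _ hq)).2.2.2 a b s ((𝒮.filter fun x => x.1 = q ∧ A x.1 x.2 = a ∧
          B x.1 x.2 = b ∧ s ≤ ((G x.1 x.2 * B x.1 x.2 : ℕ) : ℝ)).image Prod.snd) hs hκ (by
            intro i hi
            rw [Finset.mem_image] at hi
            obtain ⟨x, hx, rfl⟩ := hi
            rw [Finset.mem_filter, h𝒮, Finset.mem_filter] at hx
            obtain ⟨⟨-, x1⟩, rfl, x2, x3, x4⟩ := hx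
            rw [hF] at x1
            exact ⟨x1, x2, x3, x4⟩)
        rw [Finset.card_image_of_injOn] at this
        · refine this.trans ?_
          gcongr
        · rintro ⟨x, i⟩ hx ⟨y, j⟩ hy hxy
          simp only [Finset.coe_filter, Set.mem_ofPred_eq] at hx hy hxy
          rw [hx.2.1, hy.2.1, hxy]
      · rw [Finset.card_eq_zero.2]
        · push_cast; positivity
        · rw [Finset.filter_eq_empty_iff]
          rintro x hx ⟨rfl, -⟩
          rw [h𝒮, Finset.mem_filter, Finset.mem_product] at hx
          exact hq hx.1.1)
  have h𝒬card : (𝒬.card : ℝ) ≤ Cb * (M : ℝ) ^ η * (((H₁ : ℝ) * H₂) ^ 2 *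
      ((C₁ + 2) * ν)) := by
    have e1 : 𝒬 ⊆ (czQ H₁ H₂).filter fun q => |czκ α q| ≤ (C₁ * ν) * (H₂ : ℝ) ^ 2 := by
      intro q hq
      obtain ⟨y1, y2, -⟩ := hABG q (h𝒬ne _ hq)
      rw [Finset.mem_filter]
      exact ⟨y1, y2.trans (by gcongr)⟩
    have e2 := hFI M H₁ H₂ (C₁ * ν) hM hH₁ (hH₁.trans hH) (hH.trans hHM) hHM (by positivity)
    refine (Nat.cast_le.2 (Finset.card_le_card e1)).trans (e2.trans ?_)
    have e3 : ν ^ 2 ≤ ν := by rw [sq]; exact mul_le_of_le_one_left hν.le hν1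
    gcongr
    linarith
  have hfin : (𝒱.card : ℝ) ≤ (n : ℝ) * 𝒬.card + 2 * ∑ x ∈ 𝒮, (G x.1 x.2 : ℝ) := by
    exact_mod_cast hsplit
  calc (𝒱.card : ℝ) ≤ (n : ℝ) * 𝒬.card + 2 * ∑ x ∈ 𝒮, (G x.1 x.2 : ℝ) := hfin
    _ ≤ (C₁ * K) * (Cb * (M : ℝ) ^ η * (((H₁ : ℝ) * H₂) ^ 2 * ((C₁ + 2) * ν))) +
        2 * (Ca * (M : ℝ) ^ η * (((H₁ : ℝ) * H₂) ^ 2 * (ν * K))) := by gcongr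
    _ = _ := by ring

/-! ### The bound for the number of sextuples -/

theorem cz_tCZ (α : ℝ) (m h k : ℕ) : tCZ α m h k = czT α m h k := by
  unfold tCZ czT
  push_cast
  ring_nf

theorem cz_S_range {M H₁ H₂ m h k : ℝ} (hM : 0 < M) (hH₁ : 0 < H₁) (hH : H₁ ≤ H₂) (hm : M ≤ m)
    (hh : H₁ ≤ h) (hh' : h ≤ 2 * H₁) (hk : H₂ ≤ k) (hk' : k ≤ 2 * H₂) :
    0 ≤ (h ^ 2 + k ^ 2) / (m + (h + k) / 2) ^ 2 ∧
      (h ^ 2 + k ^ 2) / (m + (h + k) / 2) ^ 2 ≤ 8 * (H₂ / M) ^ 2 := by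
  have hh0 : 0 < h := hH₁.trans_le hh
  have hk0 : 0 < k := (hH₁.trans_le hH).trans_le hk
  have h1 : h ≤ 2 * H₂ := by linarith
  refine ⟨by positivity, ?_⟩
  calc (h ^ 2 + k ^ 2) / (m + (h + k) / 2) ^ 2 ≤ ((2 * H₂) ^ 2 + (2 * H₂) ^ 2) / M ^ 2 := by
        gcongr; linarith
    _ = 8 * (H₂ / M) ^ 2 := by field_simp; ring

set_option maxHeartbeats 1000000 in
/-- The bound in terms of the auxiliary parameters `K` and `ν`. -/
theorem cz_main {α : ℝ} (h0 : α ≠ 0) (h1 : α ≠ 1) (h2 : α ≠ 2) (h3 : α ≠ 3) {η : ℝ}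
    (hη : 0 < η) :
    ∃ C Z : ℝ, 0 < C ∧ 1 ≤ Z ∧
    ∀ (M H₁ H₂ : ℕ) (K ν Δ : ℝ),
      2 ≤ M → 1 ≤ H₁ → H₁ ≤ H₂ → Z * H₂ ≤ M → 0 < K → Z * K ≤ M →
      ((H₁ : ℝ) * H₂) ^ 2 / (M : ℝ) ^ 2 ≤ K → K / (M : ℝ) ^ 2 ≤ ν →
      ((ν = 1 ∧ (H₂ : ℝ) ^ 2 ≤ K ^ 3) ∨ (ν ≤ 1 ∧ ν * (H₂ : ℝ) ^ 2 = K ^ 3)) →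
      (H₂ : ℝ) ≤ K ^ 2 → 1 ≤ ν * K → M / ((H₁ : ℝ) * H₂) ≤ ν * K →
      (H₁ : ℝ) * H₂ ^ 3 ≤ K ^ 6 → ((H₁ : ℝ) / H₂) ^ 2 ≤ ν ^ 2 → 1 / ((H₁ : ℝ) * H₂) ≤ ν ^ 2 →
      0 < Δ →
      (sextCount α M H₁ H₂ Δ : ℝ) ≤
        C * (M : ℝ) ^ η * (((H₁ : ℝ) * H₂) ^ 2 * (K + Δ * (M : ℝ) ^ 2)) := by
  classical
  obtain ⟨C, Z, hC, hZ, hp⟩ := cz_pairs h0 h1 h2 h3 hη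
  refine ⟨57 * C, Z, by positivity, hZ, ?_⟩
  intro M H₁ H₂ K ν Δ hM hH₁ hH hZH hK hZK hR hKν hνor hHK hνK1 hMR hHK6 hμν hRν hΔ
  have hH₁p : (0 : ℝ) < H₁ := by exact_mod_cast hH₁
  have hHr : (H₁ : ℝ) ≤ H₂ := by exact_mod_cast hH
  have hH₂p : (0 : ℝ) < H₂ := hH₁p.trans_le hHr
  have hMp : (0 : ℝ) < M := by exact_mod_cast (by omega : 0 < M)
  have hν : 0 < ν := lt_of_lt_of_le (by positivity) hKν
  have hν1 : ν ≤ 1 := by rcases hνor with h | h <;> linarith [h.1]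
  obtain ⟨T, hT⟩ : ∃ T, T = (M : ℝ) ^ (α - 2) * H₁ * H₂ := ⟨_, rfl⟩
  have hTp : 0 < T := by rw [hT]; positivity
  obtain ⟨X, hX⟩ : ∃ X : Finset (ℕ × ℕ × ℕ), X = Finset.Ico M (2 * M) ×ˢ
    Finset.Ico H₁ (2 * H₁) ×ˢ Finset.Ico H₂ (2 * H₂) := ⟨_, rfl⟩
  obtain ⟨g, hg⟩ : ∃ g : ℕ × ℕ × ℕ → ℝ, g = fun x => czT α x.1 x.2.1 x.2.2 := ⟨_, rfl⟩
  obtain ⟨S, hS⟩ : ∃ S : ℕ × ℕ × ℕ → ℝ, S = fun x => ((x.2.1 : ℝ) ^ 2 + (x.2.2 : ℝ) ^ 2) /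
    ((x.1 : ℝ) + ((x.2.1 : ℝ) + x.2.2) / 2) ^ 2 := ⟨_, rfl⟩
  have hXr : ∀ x ∈ X, ((M : ℝ) ≤ x.1 ∧ (x.1 : ℝ) ≤ 2 * M) ∧ ((H₁ : ℝ) ≤ x.2.1 ∧
      (x.2.1 : ℝ) ≤ 2 * H₁) ∧ (H₂ : ℝ) ≤ x.2.2 ∧ (x.2.2 : ℝ) ≤ 2 * H₂ := by
    intro x hx
    simp only [hX, Finset.mem_product, Finset.mem_Ico] at hx
    obtain ⟨⟨a1, a2⟩, ⟨b1, b2⟩, c1, c2⟩ := hx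
    refine ⟨⟨?_, ?_⟩, ⟨?_, ?_⟩, ?_, ?_⟩ <;> norm_cast <;> omega
  -- The tolerance is lowered from `ΔT` to `(K/M²)T`, and `S` is localised at scale `ν(H₂/M)²`.
  have hbins := cz_bins X g S (w := K / (M : ℝ) ^ 2 * T) (W := Δ * T)
    (σ := ν * ((H₂ : ℝ) / M) ^ 2) (D := 8 * ((H₂ : ℝ) / M) ^ 2) (by positivity) (by positivity)
    (by positivity) (by positivity) (by
      intro x hx y hy
      obtain ⟨⟨a1, a2⟩, ⟨b1, b2⟩, c1, c2⟩ := hXr x hx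
      obtain ⟨⟨a1', a2'⟩, ⟨b1', b2'⟩, c1', c2'⟩ := hXr y hy
      have e1 := cz_S_range hMp hH₁p hHr a1 b1 b2 c1 c2
      have e2 := cz_S_range hMp hH₁p hHr a1' b1' b2' c1' c2'
      rw [hS, abs_le]
      constructor <;> linarith [e1.1, e1.2, e2.1, e2.2])
  have hcount : sextCount α M H₁ H₂ Δ ≤
      ((X ×ˢ X).filter fun p => |g p.1 - g p.2| ≤ Δ * T).card := by
    unfold sextCount
    apply Finset.card_le_card_of_injOn
      (fun q : (ℕ × ℕ) × (ℕ × ℕ) × (ℕ × ℕ) => ((q.1.1, q.2.1.1, q.2.2.1), (q.1.2, q.2.1.2, q.2.2.2)))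
    · intro q hq
      simp only [Finset.coe_filter, Set.mem_ofPred_eq, Finset.mem_product, Finset.mem_Ico, hX, hg,
        cz_tCZ, hT] at hq ⊢
      tauto
    · rintro ⟨⟨_, _⟩, ⟨_, _⟩, _, _⟩ - ⟨⟨_, _⟩, ⟨_, _⟩, _, _⟩ - h
      simp only [Prod.mk.injEq] at h ⊢
      tauto
  obtain ⟨Y, hY⟩ : ∃ Y, Y = (X ×ˢ X).filter fun p => |g p.1 - g p.2| ≤ K / (M : ℝ) ^ 2 * T ∧
    |S p.1 - S p.2| ≤ ν * ((H₂ : ℝ) / M) ^ 2 := ⟨_, rfl⟩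
  have hYcard : (Y.card : ℝ) ≤ C * (M : ℝ) ^ η * (((H₁ : ℝ) * H₂) ^ 2 * (ν * K)) := by
    have hinj : Function.Injective (fun p : (ℕ × ℕ × ℕ) × (ℕ × ℕ × ℕ) =>
        (((p.1.2.1, p.2.2.1), (p.1.2.2, p.2.2.2)), (p.1.1, p.2.1))) := by
      rintro ⟨⟨_, _, _⟩, _, _, _⟩ ⟨⟨_, _, _⟩, _, _, _⟩ h
      simp only [Prod.mk.injEq] at h ⊢
      tauto
    rw [← Finset.card_image_of_injective Y hinj]
    refine hp M H₁ H₂ K ν _ hM hH₁ hH hZH hK hZK hR hKν hνor hHK hνK1 hMR hHK6 hμν hRν ?_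
    intro x hx
    rw [Finset.mem_image] at hx
    obtain ⟨p, hp, rfl⟩ := hx
    rw [hY, Finset.mem_filter, Finset.mem_product] at hp
    obtain ⟨⟨p1, p2⟩, p3, p4⟩ := hp
    have r1 := hXr _ p1
    have r2 := hXr _ p2
    rw [hg, hT] at p3
    rw [hS] at p4
    refine ⟨?_, ⟨r1.1.1, r1.1.2, r2.1.1, r2.1.2⟩, p3, p4⟩
    simp only [hX, Finset.mem_product] at p1 p2
    simp only [czQ, Finset.mem_product]
    exact ⟨⟨p1.2.1, p2.2.1⟩, p1.2.2, p2.2.2⟩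
  rw [← hY] at hbins
  have e1 : Δ * T / (K / (M : ℝ) ^ 2 * T) = Δ * (M : ℝ) ^ 2 / K := by field_simp
  have e2 : 8 * ((H₂ : ℝ) / M) ^ 2 / (ν * ((H₂ : ℝ) / M) ^ 2) = 8 / ν := by field_simp
  rw [e1, e2] at hbins
  have e3 : 2 * (8 / ν) + 3 ≤ 19 / ν := by
    have : 3 ≤ 3 / ν := by rw [le_div_iff₀ hν]; linarith
    calc 2 * (8 / ν) + 3 ≤ 2 * (8 / ν) + 3 / ν := by linarith
      _ = 19 / ν := by ring
  calc (sextCount α M H₁ H₂ Δ : ℝ)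
      ≤ (2 * (Δ * (M : ℝ) ^ 2 / K) + 3) * (2 * (8 / ν) + 3) * Y.card :=
        (Nat.cast_le.2 hcount).trans hbins
    _ ≤ (3 * (Δ * (M : ℝ) ^ 2 / K) + 3) * (19 / ν) *
        (C * (M : ℝ) ^ η * (((H₁ : ℝ) * H₂) ^ 2 * (ν * K))) := by
        gcongr; norm_num
    _ = _ := by field_simp; ring

/-- The choice `ν = min(1, K³/H₂²)` satisfies all the size conditions of `cz_main`. If
`ν < 1`, then `νK = K⁴/H₂²`, so that `νK ≥ M/(H₁H₂)` amounts to `K⁴ ≥ MH₂/H₁`, which explains the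
term `b`; the term `c` gives `K⁶ ≥ H₁H₂³ ≥ (H₁H₂)²`, hence `ν ≥ H₁/H₂`. -/
theorem cz_params {M H₁ H₂ K b c : ℝ} (hH₁ : 1 ≤ H₁) (hH : H₁ ≤ H₂) (hHM : H₂ ≤ M)
    (hb : 0 ≤ b) (hc : 0 ≤ c) (hb4 : b ^ 4 = M * H₂ / H₁) (hc6 : c ^ 6 = H₁ * H₂ ^ 3)
    (hK : K = M / (H₁ * H₂) + b + c + (H₁ * H₂) ^ 2 / M ^ 2) (hKM : K ≤ M) :
    1 ≤ K ∧ (H₁ * H₂) ^ 2 / M ^ 2 ≤ K ∧ ∃ ν : ℝ, K / M ^ 2 ≤ ν ∧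
      ((ν = 1 ∧ H₂ ^ 2 ≤ K ^ 3) ∨ (ν ≤ 1 ∧ ν * H₂ ^ 2 = K ^ 3)) ∧
      H₂ ≤ K ^ 2 ∧ 1 ≤ ν * K ∧ M / (H₁ * H₂) ≤ ν * K ∧ H₁ * H₂ ^ 3 ≤ K ^ 6 ∧
      (H₁ / H₂) ^ 2 ≤ ν ^ 2 ∧ 1 / (H₁ * H₂) ≤ ν ^ 2 := by
  have hH₁p : 0 < H₁ := by linarith
  have hH₂ : 1 ≤ H₂ := by linarith
  have hH₂p : 0 < H₂ := by linarith
  have hMp : 0 < M := by linarith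
  have hM1 : 1 ≤ M := by linarith
  have ha : 0 < M / (H₁ * H₂) := by positivity
  have hd : 0 < (H₁ * H₂) ^ 2 / M ^ 2 := by positivity
  have hK0 : 0 < K := by linarith
  have hbK : M * H₂ / H₁ ≤ K ^ 4 := by
    rw [← hb4]; exact pow_le_pow_left₀ hb (by linarith) 4
  have hcK : H₁ * H₂ ^ 3 ≤ K ^ 6 := by
    rw [← hc6]; exact pow_le_pow_left₀ hc (by linarith) 6
  have hH₂3 : H₂ ^ 3 ≤ H₁ * H₂ ^ 3 := le_mul_of_one_le_left (by positivity) hH₁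
  have hHK : H₂ ≤ K ^ 2 := by
    apply le_of_pow_le_pow_left₀ three_ne_zero (by positivity)
    calc H₂ ^ 3 ≤ K ^ 6 := hH₂3.trans hcK
      _ = _ := by ring
  have hK1 : 1 ≤ K := by
    have : (1 : ℝ) ^ 2 ≤ K ^ 2 := by rw [one_pow]; exact hH₂.trans hHK
    exact le_of_pow_le_pow_left₀ two_ne_zero hK0.le this
  have hRK : H₁ * H₂ ≤ K ^ 3 := by
    apply le_of_pow_le_pow_left₀ two_ne_zero (by positivity)
    calc (H₁ * H₂) ^ 2 = H₁ * (H₁ * H₂ ^ 2) := by ring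
      _ ≤ H₁ * (H₂ * H₂ ^ 2) := by gcongr
      _ = H₁ * H₂ ^ 3 := by ring
      _ ≤ K ^ 6 := hcK
      _ = _ := by ring
  refine ⟨hK1, by linarith, ?_⟩
  by_cases hcase : H₂ ^ 2 ≤ K ^ 3
  · refine ⟨1, ?_, Or.inl ⟨rfl, hcase⟩, hHK, by linarith, by linarith, hcK, ?_, ?_⟩
    · rw [div_le_one (by positivity)]
      exact hKM.trans (le_self_pow₀ hM1 two_ne_zero)
    · have : H₁ / H₂ ≤ 1 := by rw [div_le_one hH₂p]; exact hH
      exact pow_le_pow_left₀ (by positivity) this 2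
    · rw [one_pow, div_le_one (by positivity)]
      calc (1 : ℝ) = 1 * 1 := (one_mul 1).symm
        _ ≤ _ := by gcongr
  · push Not at hcase
    have hν : K ^ 3 / H₂ ^ 2 * H₂ ^ 2 = K ^ 3 := by field_simp
    refine ⟨K ^ 3 / H₂ ^ 2, ?_, Or.inr ⟨?_, hν⟩, hHK, ?_, ?_, hcK, ?_, ?_⟩
    · rw [div_le_div_iff₀ (by positivity) (by positivity)]
      calc K * H₂ ^ 2 ≤ K ^ 3 * M ^ 2 := by
            gcongr; exact le_self_pow₀ hK1 three_ne_zero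
        _ = _ := rfl
    · rw [div_le_one (by positivity)]; exact hcase.le
    · rw [div_mul_eq_mul_div, le_div_iff₀ (by positivity), one_mul]
      calc H₂ ^ 2 ≤ (K ^ 2) ^ 2 := by gcongr
        _ = _ := by ring
    · rw [div_mul_eq_mul_div, div_le_div_iff₀ (by positivity) (by positivity)]
      calc M * H₂ ^ 2 = M * H₂ / H₁ * (H₁ * H₂) := by field_simp
        _ ≤ K ^ 4 * (H₁ * H₂) := by gcongr
        _ = _ := by ring
    · apply pow_le_pow_left₀ (by positivity)
      rw [div_le_div_iff₀ hH₂p (by positivity)]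
      calc H₁ * H₂ ^ 2 = H₁ * H₂ * H₂ := by ring
        _ ≤ K ^ 3 * H₂ := by gcongr
    · rw [div_pow, div_le_div_iff₀ (by positivity) (by positivity)]
      calc 1 * (H₂ ^ 2) ^ 2 = H₂ ^ 3 * (1 * H₂) := by ring
        _ ≤ (H₁ * H₂ ^ 3) * (H₁ * H₂) := by gcongr
        _ ≤ K ^ 6 * (H₁ * H₂) := by gcongr
        _ = _ := by ring

/-- Each of the four terms of `K` is at most `M^{1-δ}`, so that `K` is of smaller order than `M`. -/
theorem cz_K_le {M H₁ H₂ b c ε δ : ℝ} (hδ : δ ≤ ε) (hδ3 : δ ≤ 1 / 3) (hH₁ : 1 ≤ H₁)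
    (hH : H₁ ≤ H₂) (hHM : H₂ ≤ M) (hb : b = (M * H₂ / H₁) ^ ((1 : ℝ) / 4))
    (hc : c = (H₁ * H₂ ^ 3) ^ ((1 : ℝ) / 6)) (hH₂ε : M ^ ε ≤ H₂) (hε : 0 < ε)
    (hR : H₁ * H₂ ≤ M ^ (3 / 2 - ε)) :
    M / (H₁ * H₂) + b + c + (H₁ * H₂) ^ 2 / M ^ 2 ≤ 4 * M ^ (1 - δ) := by
  have hH₁p : 0 < H₁ := by linarith
  have hH₂ : 1 ≤ H₂ := by linarith
  have hH₂p : 0 < H₂ := by linarith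
  have hMp : 0 < M := by linarith
  have hM1 : 1 ≤ M := by linarith
  have k1 : M / (H₁ * H₂) ≤ M ^ (1 - δ) := by
    calc M / (H₁ * H₂) ≤ M / (1 * M ^ ε) := by gcongr
      _ = M ^ (1 - ε) := by rw [Real.rpow_sub hMp, Real.rpow_one, one_mul]
      _ ≤ _ := Real.rpow_le_rpow_of_exponent_le hM1 (by linarith)
  have k2 : b ≤ M ^ (1 - δ) := by
    rw [hb]
    calc (M * H₂ / H₁) ^ ((1 : ℝ) / 4) ≤ (M * M / 1) ^ ((1 : ℝ) / 4) := by gcongr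
      _ = M ^ ((1 : ℝ) / 2) := by
        rw [div_one, ← sq, ← Real.rpow_natCast M 2, ← Real.rpow_mul hMp.le]; norm_num
      _ ≤ _ := Real.rpow_le_rpow_of_exponent_le hM1 (by linarith)
  have k3 : c ≤ M ^ (1 - δ) := by
    rw [hc]
    calc (H₁ * H₂ ^ 3) ^ ((1 : ℝ) / 6) ≤ (M * M ^ 3) ^ ((1 : ℝ) / 6) := by
          gcongr; exact hH.trans hHM
      _ = M ^ ((2 : ℝ) / 3) := by
        rw [← pow_succ', ← Real.rpow_natCast M (3 + 1), ← Real.rpow_mul hMp.le]; norm_num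
      _ ≤ _ := Real.rpow_le_rpow_of_exponent_le hM1 (by linarith)
  have k4 : (H₁ * H₂) ^ 2 / M ^ 2 ≤ M ^ (1 - δ) := by
    calc (H₁ * H₂) ^ 2 / M ^ 2 ≤ (M ^ (3 / 2 - ε)) ^ 2 / M ^ 2 := by gcongr
      _ = M ^ (1 - 2 * ε) := by
        rw [← Real.rpow_natCast (M ^ (3 / 2 - ε)) 2, ← Real.rpow_mul hMp.le,
          ← Real.rpow_natCast M 2, ← Real.rpow_sub hMp]
        congr 1; push_cast; ring
      _ ≤ _ := Real.rpow_le_rpow_of_exponent_le hM1 (by linarith)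
  linarith

/-- `(H₁H₂)² K` is the sum of four terms of the final bound. -/
theorem cz_terms {M H₁ H₂ : ℝ} (hM : 0 < M) (hH₁ : 0 < H₁) (hH₂ : 0 < H₂) :
    (H₁ * H₂) ^ 2 * (M / (H₁ * H₂) + (M * H₂ / H₁) ^ ((1 : ℝ) / 4) +
      (H₁ * H₂ ^ 3) ^ ((1 : ℝ) / 6) + (H₁ * H₂) ^ 2 / M ^ 2) =
    M * H₁ * H₂ + (M * H₁ ^ 7 * H₂ ^ 9) ^ ((1 : ℝ) / 4) + (M ^ 2)⁻¹ * H₁ ^ 4 * H₂ ^ 4 +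
      (H₁ ^ 13 * H₂ ^ 15) ^ ((1 : ℝ) / 6) := by
  have e1 : (M * H₁ ^ 7 * H₂ ^ 9) ^ ((1 : ℝ) / 4) =
      (H₁ * H₂) ^ 2 * (M * H₂ / H₁) ^ ((1 : ℝ) / 4) := by
    have : M * H₁ ^ 7 * H₂ ^ 9 = (H₁ * H₂) ^ 8 * (M * H₂ / H₁) := by field_simp
    rw [this, Real.mul_rpow (by positivity) (by positivity), ← Real.rpow_natCast (H₁ * H₂) 8,
      ← Real.rpow_mul (by positivity), ← Real.rpow_natCast (H₁ * H₂) 2]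
    norm_num
  have e2 : (H₁ ^ 13 * H₂ ^ 15) ^ ((1 : ℝ) / 6) =
      (H₁ * H₂) ^ 2 * (H₁ * H₂ ^ 3) ^ ((1 : ℝ) / 6) := by
    have : H₁ ^ 13 * H₂ ^ 15 = (H₁ * H₂) ^ 12 * (H₁ * H₂ ^ 3) := by ring
    rw [this, Real.mul_rpow (by positivity) (by positivity), ← Real.rpow_natCast (H₁ * H₂) 12,
      ← Real.rpow_mul (by positivity), ← Real.rpow_natCast (H₁ * H₂) 2]
    norm_num
  rw [e1, e2]
  field_simp
  ring

theorem cz_trivial (α : ℝ) (M H₁ H₂ : ℕ) (Δ : ℝ) :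
    (sextCount α M H₁ H₂ Δ : ℝ) ≤ ((M : ℝ) * H₁ * H₂) ^ 2 := by
  have : sextCount α M H₁ H₂ Δ ≤ (M * H₁ * H₂) ^ 2 := by
    unfold sextCount
    refine (Finset.card_filter_le _ _).trans (le_of_eq ?_)
    simp only [Finset.card_product, Nat.card_Ico, two_mul, Nat.add_sub_cancel]
    ring
  exact_mod_cast this

/-- **Cao–Zhai, second spacing bound for third differences of monomials.**
Fix `ε > 0` and `α ∉ {0,1,2,3}`. For integers `M, H₁, H₂ ≥ 10` with
`H₁M^ε < H₂ ≤ M^{1−ε}`, `H₁H₂ ≤ M^{3/2−ε}` and `Δ > 0`,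
`𝓕(M, H₁, H₂, Δ) ≪ M^{2ε}(MH₁H₂ + Δ(MH₁H₂)² + (MH₁⁷H₂⁹)^{1/4} + M^{−2}H₁⁴H₂⁴
  + (ΔM⁴H₁^{15}H₂^{17})^{1/8} + (ΔM⁴H₁³H₂)^{1/2} + (H₁^{13}H₂^{15})^{1/6}
  + (ΔM²H₁⁸H₂^{10})^{1/4} + (M^{−1}H₁⁵H₂⁶)^{1/2})`. -/
theorem cao_zhai_second
    (ε α : ℝ) (hε : 0 < ε) (h0 : α ≠ 0) (h1 : α ≠ 1) (h2 : α ≠ 2) (h3 : α ≠ 3) :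
    ∃ C : ℝ, 0 < C ∧
      ∀ (M H₁ H₂ : ℕ) (Δ : ℝ), 10 ≤ M → 10 ≤ H₁ → 10 ≤ H₂ →
        (H₁ : ℝ) * (M : ℝ) ^ ε < (H₂ : ℝ) → (H₂ : ℝ) ≤ (M : ℝ) ^ (1 - ε) →
        (H₁ : ℝ) * (H₂ : ℝ) ≤ (M : ℝ) ^ (3 / 2 - ε) → 0 < Δ →
        (sextCount α M H₁ H₂ Δ : ℝ) ≤
          C * (M : ℝ) ^ (2 * ε) *
            ((M : ℝ) * H₁ * H₂ + Δ * ((M : ℝ) * H₁ * H₂) ^ 2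
              + ((M : ℝ) * (H₁ : ℝ) ^ 7 * (H₂ : ℝ) ^ 9) ^ ((1 : ℝ) / 4)
              + ((M : ℝ) ^ 2)⁻¹ * (H₁ : ℝ) ^ 4 * (H₂ : ℝ) ^ 4
              + (Δ * (M : ℝ) ^ 4 * (H₁ : ℝ) ^ 15 * (H₂ : ℝ) ^ 17) ^ ((1 : ℝ) / 8)
              + (Δ * (M : ℝ) ^ 4 * (H₁ : ℝ) ^ 3 * (H₂ : ℝ)) ^ ((1 : ℝ) / 2)
              + ((H₁ : ℝ) ^ 13 * (H₂ : ℝ) ^ 15) ^ ((1 : ℝ) / 6)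
              + (Δ * (M : ℝ) ^ 2 * (H₁ : ℝ) ^ 8 * (H₂ : ℝ) ^ 10) ^ ((1 : ℝ) / 4)
              + ((M : ℝ)⁻¹ * (H₁ : ℝ) ^ 5 * (H₂ : ℝ) ^ 6) ^ ((1 : ℝ) / 2)) := by
  obtain ⟨C, Z, hC, hZ, hmain⟩ := cz_main h0 h1 h2 h3 (η := 2 * ε) (by positivity)
  obtain ⟨δ, hδ⟩ : ∃ δ, δ = min ε (1 / 3) := ⟨_, rfl⟩
  have hδε : δ ≤ ε := hδ ▸ min_le_left _ _
  have hδ3 : δ ≤ 1 / 3 := hδ ▸ min_le_right _ _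
  have hδp : 0 < δ := hδ ▸ lt_min hε (by norm_num)
  obtain ⟨M₀, hM₀⟩ : ∃ M₀, M₀ = (4 * Z) ^ (1 / δ) := ⟨_, rfl⟩
  have hM₀p : 0 < M₀ := by rw [hM₀]; positivity
  refine ⟨C + M₀ ^ 3, by positivity, ?_⟩
  intro M H₁ H₂ Δ hM hH₁ hH₂ hlow hup hR hΔ
  have hMp : (0 : ℝ) < M := by exact_mod_cast (by omega : 0 < M)
  have hM1 : (1 : ℝ) ≤ M := by exact_mod_cast (by omega : 1 ≤ M)
  have hH₁1 : (1 : ℝ) ≤ H₁ := by exact_mod_cast (by omega : 1 ≤ H₁)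
  have hH₁p : (0 : ℝ) < H₁ := by linarith
  have hMε : 1 ≤ (M : ℝ) ^ ε := Real.one_le_rpow hM1 hε.le
  have hH : (H₁ : ℝ) ≤ H₂ := (le_mul_of_one_le_right hH₁p.le hMε).trans hlow.le
  have hH₂p : (0 : ℝ) < H₂ := by linarith
  have hH₂ε : (M : ℝ) ^ ε ≤ H₂ := (le_mul_of_one_le_left (by linarith) hH₁1).trans hlow.le
  have hHδ : (H₂ : ℝ) ≤ (M : ℝ) ^ (1 - δ) :=
    hup.trans (Real.rpow_le_rpow_of_exponent_le hM1 (by linarith))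
  have hMδ : (M : ℝ) ^ (1 - δ) ≤ M := by
    calc (M : ℝ) ^ (1 - δ) ≤ (M : ℝ) ^ (1 : ℝ) :=
          Real.rpow_le_rpow_of_exponent_le hM1 (by linarith)
      _ = M := Real.rpow_one _
  have hHM : (H₂ : ℝ) ≤ M := hHδ.trans hMδ
  -- every term on the right is nonnegative, and only five of them are needed
  have t1 : (0 : ℝ) ≤ (Δ * (M : ℝ) ^ 4 * (H₁ : ℝ) ^ 15 * (H₂ : ℝ) ^ 17) ^ ((1 : ℝ) / 8) := by
    positivity
  have t2 : (0 : ℝ) ≤ (Δ * (M : ℝ) ^ 4 * (H₁ : ℝ) ^ 3 * (H₂ : ℝ)) ^ ((1 : ℝ) / 2) := by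
    positivity
  have t3 : (0 : ℝ) ≤ (Δ * (M : ℝ) ^ 2 * (H₁ : ℝ) ^ 8 * (H₂ : ℝ) ^ 10) ^ ((1 : ℝ) / 4) := by
    positivity
  have t4 : (0 : ℝ) ≤ ((M : ℝ)⁻¹ * (H₁ : ℝ) ^ 5 * (H₂ : ℝ) ^ 6) ^ ((1 : ℝ) / 2) := by
    positivity
  have t5 : (0 : ℝ) ≤ ((M : ℝ) * (H₁ : ℝ) ^ 7 * (H₂ : ℝ) ^ 9) ^ ((1 : ℝ) / 4) := by positivity
  have t6 : (0 : ℝ) ≤ ((M : ℝ) ^ 2)⁻¹ * (H₁ : ℝ) ^ 4 * (H₂ : ℝ) ^ 4 := by positivity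
  have t7 : (0 : ℝ) ≤ ((H₁ : ℝ) ^ 13 * (H₂ : ℝ) ^ 15) ^ ((1 : ℝ) / 6) := by positivity
  have t8 : (0 : ℝ) ≤ Δ * ((M : ℝ) * H₁ * H₂) ^ 2 := by positivity
  have t9 : (0 : ℝ) ≤ (M : ℝ) * H₁ * H₂ := by positivity
  have hM2ε : 1 ≤ (M : ℝ) ^ (2 * ε) := Real.one_le_rpow hM1 (by positivity)
  -- If `M^δ ≥ 4Z`, then `ZK ≤ M` and `ZH₂ ≤ M`; otherwise `M` is bounded.
  by_cases hlarge : 4 * Z ≤ (M : ℝ) ^ δ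
  · obtain ⟨b, hb⟩ : ∃ b, b = ((M : ℝ) * H₂ / H₁) ^ ((1 : ℝ) / 4) := ⟨_, rfl⟩
    obtain ⟨c, hc⟩ : ∃ c, c = ((H₁ : ℝ) * (H₂ : ℝ) ^ 3) ^ ((1 : ℝ) / 6) := ⟨_, rfl⟩
    obtain ⟨K, hK⟩ : ∃ K, K = M / ((H₁ : ℝ) * H₂) + b + c + ((H₁ : ℝ) * H₂) ^ 2 / (M : ℝ) ^ 2 :=
      ⟨_, rfl⟩
    have hKδ : K ≤ 4 * (M : ℝ) ^ (1 - δ) :=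
      hK ▸ cz_K_le hδε hδ3 hH₁1 hH hHM hb hc hH₂ε hε hR
    have hprod : (M : ℝ) ^ δ * (M : ℝ) ^ (1 - δ) = M := by
      rw [← Real.rpow_add hMp, add_sub_cancel, Real.rpow_one]
    have hZM : 4 * Z * (M : ℝ) ^ (1 - δ) ≤ M :=
      (mul_le_mul_of_nonneg_right hlarge (by positivity)).trans hprod.le
    have hZK : Z * K ≤ M := by
      calc Z * K ≤ Z * (4 * (M : ℝ) ^ (1 - δ)) := by gcongr
        _ = 4 * Z * (M : ℝ) ^ (1 - δ) := by ring
        _ ≤ M := hZM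
    have hZH : Z * H₂ ≤ M := by
      calc Z * H₂ ≤ 4 * Z * (M : ℝ) ^ (1 - δ) := by
            gcongr; linarith
        _ ≤ M := hZM
    have hb0 : 0 ≤ b := by rw [hb]; positivity
    have hc0 : 0 ≤ c := by rw [hc]; positivity
    have hb4 : b ^ 4 = M * H₂ / H₁ := by
      rw [hb, ← Real.rpow_natCast _ 4, ← Real.rpow_mul (by positivity)]; norm_num
    have hc6 : c ^ 6 = H₁ * (H₂ : ℝ) ^ 3 := by
      rw [hc, ← Real.rpow_natCast _ 6, ← Real.rpow_mul (by positivity)]; norm_num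
    have hK0 : 0 ≤ K := by rw [hK]; positivity
    have hKM : K ≤ M := (le_mul_of_one_le_left hK0 hZ).trans hZK
    obtain ⟨hK1, hRK, ν, n1, n2, n3, n4, n5, n6, n7, n8⟩ :=
      cz_params hH₁1 hH hHM hb0 hc0 hb4 hc6 hK hKM
    have := hmain M H₁ H₂ K ν Δ (by omega) (by omega) (by exact_mod_cast hH) hZH (by linarith) hZK
      hRK n1 n2 n3 n4 n5 n6 n7 n8 hΔ
    refine this.trans ?_
    have e1 : ((H₁ : ℝ) * H₂) ^ 2 * (K + Δ * (M : ℝ) ^ 2) =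
        (M : ℝ) * H₁ * H₂ + ((M : ℝ) * (H₁ : ℝ) ^ 7 * (H₂ : ℝ) ^ 9) ^ ((1 : ℝ) / 4) +
          ((M : ℝ) ^ 2)⁻¹ * (H₁ : ℝ) ^ 4 * (H₂ : ℝ) ^ 4 +
          ((H₁ : ℝ) ^ 13 * (H₂ : ℝ) ^ 15) ^ ((1 : ℝ) / 6) + Δ * ((M : ℝ) * H₁ * H₂) ^ 2 := by
      rw [← cz_terms hMp hH₁p hH₂p, ← hb, ← hc, ← hK]
      ring
    rw [e1]
    refine mul_le_mul (mul_le_mul_of_nonneg_right ?_ (by positivity)) ?_ (by positivity)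
      (by positivity)
    · exact le_add_of_nonneg_right (by positivity)
    · linarith
  · push Not at hlarge
    have hMM₀ : (M : ℝ) ≤ M₀ := by
      have := Real.rpow_le_rpow (z := 1 / δ) (by positivity) hlarge.le (by positivity)
      rw [← Real.rpow_mul hMp.le, mul_one_div_cancel hδp.ne', Real.rpow_one] at this
      rw [hM₀]; exact this
    calc (sextCount α M H₁ H₂ Δ : ℝ) ≤ ((M : ℝ) * H₁ * H₂) ^ 2 := cz_trivial α M H₁ H₂ Δ
      _ = ((M : ℝ) * H₁ * H₂) * 1 * (M * H₁ * H₂) := by ring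
      _ ≤ (M₀ * M₀ * M₀) * (M : ℝ) ^ (2 * ε) * (M * H₁ * H₂) := by
          gcongr
          · exact (hH.trans hHM).trans hMM₀
          · exact hHM.trans hMM₀
      _ ≤ (C + M₀ ^ 3) * (M : ℝ) ^ (2 * ε) * _ := by
          refine mul_le_mul (mul_le_mul_of_nonneg_right ?_ (by positivity)) ?_ t9 (by positivity)
          · have : M₀ * M₀ * M₀ = M₀ ^ 3 := by ring
            linarith
          · linarith
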